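/- arXiv:2504.15775 — 3 statements merged into one kernel-verified Lean document; each statement's English description precedes it below -/
import Mathlib

section
/- Let R be a ring in which every minimal right ideal is an almost injective right R-module. Then every mininjective right R-module is injective if and only if R is a right Artinian serial ring with J(R)² = 0, where J(R) is the Jacobson radical of R. -/
universe u v w v'

open MulOpposite

section RightDefs
variable (R : Type u) [Ring R]

/-- A right `R`-module (i.e. an `Rᵐᵒᵖ`-module) `M` is mininjective if every homomorphism
from a minimal right ideal `I` of `R` into `M` extends to a homomorphism `R → M`. -/
def IsMininjective (M : Type v) [AddCommGroup M] [Module Rᵐᵒᵖ M] : Prop :=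
  ∀ I : Submodule Rᵐᵒᵖ R, IsAtom I → ∀ f : ↥I →ₗ[Rᵐᵒᵖ] M,
    ∃ g : R →ₗ[Rᵐᵒᵖ] M, ∀ x : ↥I, g ↑x = f x

/-- A right `R`-module `M` is min-projective if every short exact sequence
`0 → N → X → M → 0` with `N` mininjective splits (equivalently `Ext¹(M, N) = 0`
for every mininjective `N`). -/
def IsMinProjective (M : Type v) [AddCommGroup M] [Module Rᵐᵒᵖ M] : Prop :=
  ∀ (X : Type (max u v)) [AddCommGroup X] [Module Rᵐᵒᵖ X] (p : X →ₗ[Rᵐᵒᵖ] M),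
    Function.Surjective p → IsMininjective R ↥(LinearMap.ker p) →
      ∃ s : M →ₗ[Rᵐᵒᵖ] X, p ∘ₗ s = LinearMap.id

/-- `R` is right strongly min-coherent if every minimal right ideal of `R` is min-projective. -/
def RightStronglyMinCoherent : Prop :=
  ∀ I : Submodule Rᵐᵒᵖ R, IsAtom I → IsMinProjective R ↥I

/-- `R` is a right quasi V-ring if every simple right `R`-module which is not isomorphic to
any right ideal of `R` is injective. -/
def RightQuasiVRing : Prop :=
  ∀ (S : Type v) [AddCommGroup S] [Module Rᵐᵒᵖ S], IsSimpleModule Rᵐᵒᵖ S →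
    (¬ ∃ I : Submodule Rᵐᵒᵖ R, Nonempty (S ≃ₗ[Rᵐᵒᵖ] ↥I)) → Module.Injective Rᵐᵒᵖ S

/-- `R` is a right GV-ring if every simple right `R`-module is injective or projective. -/
def RightGVRing : Prop :=
  ∀ (S : Type v) [AddCommGroup S] [Module Rᵐᵒᵖ S], IsSimpleModule Rᵐᵒᵖ S →
    Module.Injective Rᵐᵒᵖ S ∨ Module.Projective Rᵐᵒᵖ S

/-- `R` is right Kasch if every simple right `R`-module is isomorphic to a right ideal of `R`. -/
def RightKasch : Prop :=
  ∀ (S : Type v) [AddCommGroup S] [Module Rᵐᵒᵖ S], IsSimpleModule Rᵐᵒᵖ S →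
    ∃ I : Submodule Rᵐᵒᵖ R, Nonempty (S ≃ₗ[Rᵐᵒᵖ] ↥I)

/-- A right `R`-module `M` is almost injective if for every monomorphism `i : A → B` and
every `f : A → M`, either `f` extends to `B`, or there are a nonzero direct summand `D` of
`B` (with projection `π : B → D`) and `h : M → D` with `h ∘ f = π ∘ i`. -/
def IsAlmostInjective (M : Type v) [AddCommGroup M] [Module Rᵐᵒᵖ M] : Prop :=
  ∀ (A B : Type w) [AddCommGroup A] [AddCommGroup B] [Module Rᵐᵒᵖ A] [Module Rᵐᵒᵖ B]
    (i : A →ₗ[Rᵐᵒᵖ] B), Function.Injective i → ∀ f : A →ₗ[Rᵐᵒᵖ] M,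
    (∃ g : B →ₗ[Rᵐᵒᵖ] M, g ∘ₗ i = f) ∨
    (∃ D : Submodule Rᵐᵒᵖ B, D ≠ ⊥ ∧ ∃ π : B →ₗ[Rᵐᵒᵖ] ↥D,
      π ∘ₗ D.subtype = LinearMap.id ∧ ∃ h : M →ₗ[Rᵐᵒᵖ] ↥D, h ∘ₗ f = π ∘ₗ i)

/-- `R` is a right almost V-ring if every simple right `R`-module is almost injective. -/
def RightAlmostVRing : Prop :=
  ∀ (S : Type v) [AddCommGroup S] [Module Rᵐᵒᵖ S], IsSimpleModule Rᵐᵒᵖ S →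
    IsAlmostInjective.{u, v, w} R S

/-- `R` is right serial if `R`, as a right `R`-module, is an internal direct sum of finitely
many uniserial submodules. -/
def RightSerial : Prop :=
  ∃ (n : ℕ) (c : Fin n → Submodule Rᵐᵒᵖ R), DirectSum.IsInternal c ∧
    ∀ i, ∀ N P : Submodule Rᵐᵒᵖ ↥(c i), N ≤ P ∨ P ≤ N

/-- `R` is left serial if `R`, as a left `R`-module, is an internal direct sum of finitely
many uniserial submodules. -/
def LeftSerial : Prop :=
  ∃ (n : ℕ) (c : Fin n → Submodule R R), DirectSum.IsInternal c ∧
    ∀ i, ∀ N P : Submodule R ↥(c i), N ≤ P ∨ P ≤ N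

/-- The square of the Jacobson radical of `R` is zero. -/
def JacobsonSquareZero : Prop :=
  ∀ x ∈ (⊥ : TwoSidedIdeal R).jacobson, ∀ y ∈ (⊥ : TwoSidedIdeal R).jacobson, x * y = 0

end RightDefs

/-!
Suppose that mininjective right modules are injective. Modules admitting no nonzero map from a
minimal right ideal are mininjective, so a simple right module is injective or isomorphic to a
minimal right ideal, and every simple right module is almost injective. Direct sums of injective
modules are mininjective, hence injective, so `R` is right Noetherian by Bass's argument; a module
without simple submodules has only injective submodules, hence is semisimple, hence zero, so `R` is
right Artinian.

Write `1` as a sum of orthogonal local idempotents `e`. Almost injectivity of a simple quotient of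
`eJ`, applied to the inclusion `eJ → eR`, makes `eJ` zero or simple; this gives right seriality and
`J² = 0`. For left seriality, take nonzero `u ∈ aJe` and `v ∈ bJe` with `a`, `b`, `e` local
idempotents. Then `aJ = uR` and `bJ = vR` are isomorphic simple modules by a map `φ` taking `u` to
`v`. Almost injectivity of `bJ` extends `φ` to a homomorphism `aR → bR`, which is left
multiplication by an element carrying `u` to `v`.

Conversely, if `R` is right Artinian and right serial with `J² = 0`, a proper submodule of a
uniserial summand `c` of `R` lies in the semisimple radical of `c`, so it is zero or simple. A
homomorphism to a mininjective module from a right ideal not containing `c` therefore extends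
along `c`, and Baer's criterion applies.
-/

section Radical

variable {S : Type*} [Ring S] {M N : Type*} [AddCommGroup M] [Module S M]
  [AddCommGroup N] [Module S N]

theorem le_jacobson_of_ne_top [IsCoatomic (Submodule S M)] (hM : IsCoatom (Module.jacobson S M))
    {P : Submodule S M} (hP : P ≠ ⊤) : P ≤ Module.jacobson S M := by
  obtain ⟨Q, hQ, hPQ⟩ := (eq_top_or_exists_le_coatom P).resolve_left hP
  have hJQ : Module.jacobson S M ≤ Q := sInf_le hQ
  rwa [(hM.le_iff.mp hJQ).resolve_left hQ.1] at hPQ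

theorem eq_top_of_isCoatom_jacobson_of_proj [IsCoatomic (Submodule S M)]
    (hM : IsCoatom (Module.jacobson S M)) {D : Submodule S M} (hD : D ≠ ⊥) {π : M →ₗ[S] D}
    (hπ : π ∘ₗ D.subtype = LinearMap.id) : D = ⊤ := by
  by_contra hD'
  have hcompl : IsCompl D (LinearMap.ker π) := LinearMap.isCompl_of_proj (LinearMap.congr_fun hπ)
  have hker : LinearMap.ker π ≠ ⊤ := fun h ↦ hD (eq_bot_of_isCompl_top (h ▸ hcompl))
  exact hM.1 (top_le_iff.mp (hcompl.sup_eq_top ▸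
    sup_le (le_jacobson_of_ne_top hM hD') (le_jacobson_of_ne_top hM hker)))

theorem mk_mem_jacobson_prod {a : M} (ha : a ∈ Module.jacobson S M) {b : N}
    (hb : b ∈ Module.jacobson S N) : (a, b) ∈ Module.jacobson S (M × N) := by
  have ha' := Module.map_jacobson_le (LinearMap.inl S M N) (Submodule.mem_map_of_mem ha)
  have hb' := Module.map_jacobson_le (LinearMap.inr S M N) (Submodule.mem_map_of_mem hb)
  simpa using add_mem ha' hb'

variable (S M) in
/-- A module whose Jacobson radical is both simple and maximal. By
`IsUniserialLengthTwo.eq_bot_or_eq_jacobson_or_eq_top` these are the uniserial modules of length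
two. -/
structure IsUniserialLengthTwo : Prop where
  isAtom_jacobson : IsAtom (Module.jacobson S M)
  isCoatom_jacobson : IsCoatom (Module.jacobson S M)

namespace IsUniserialLengthTwo

theorem eq_bot_or_eq_jacobson_or_eq_top (hM : IsUniserialLengthTwo S M) (P : Submodule S M) :
    P = ⊥ ∨ P = Module.jacobson S M ∨ P = ⊤ := by
  by_cases hJP : Module.jacobson S M ≤ P
  · exact .inr (hM.isCoatom_jacobson.le_iff.mp hJP).symm
  left
  have hdisj := hM.isAtom_jacobson.not_le_iff_disjoint.mp hJP
  rcases hM.isCoatom_jacobson.le_iff.mp (le_sup_left : _ ≤ Module.jacobson S M ⊔ P) with h | h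
  · have hcompl : IsCompl (Module.jacobson S M) P := ⟨hdisj, codisjoint_iff.mpr h⟩
    have hP : Module.jacobson S M ≤ P := sInf_le (hcompl.isAtom_iff_isCoatom.mp hM.isAtom_jacobson)
    exact absurd hP hJP
  · exact hdisj.symm.eq_bot_of_le (sup_eq_left.mp h)

theorem jacobson_le_of_ne_bot (hM : IsUniserialLengthTwo S M) {P : Submodule S M} (hP : P ≠ ⊥) :
    Module.jacobson S M ≤ P := by
  rcases hM.eq_bot_or_eq_jacobson_or_eq_top P with rfl | rfl | rfl
  exacts [absurd rfl hP, le_rfl, le_top]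

theorem le_jacobson_of_ne_top (hM : IsUniserialLengthTwo S M) {P : Submodule S M} (hP : P ≠ ⊤) :
    P ≤ Module.jacobson S M := by
  rcases hM.eq_bot_or_eq_jacobson_or_eq_top P with rfl | rfl | rfl
  exacts [bot_le, le_rfl, absurd rfl hP]

theorem isSimpleModule_jacobson (hM : IsUniserialLengthTwo S M) :
    IsSimpleModule S (Module.jacobson S M) :=
  isSimpleModule_iff_isAtom.mpr hM.isAtom_jacobson

theorem exists_ne_zero (hM : IsUniserialLengthTwo S M) : ∃ b ∈ Module.jacobson S M, b ≠ 0 :=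
  (Submodule.ne_bot_iff _).mp hM.isAtom_jacobson.1

theorem range_le_jacobson (hM : IsUniserialLengthTwo S M) (hN : IsUniserialLengthTwo S N)
    {f : M →ₗ[S] N} (hf : Module.jacobson S M ≤ LinearMap.ker f) :
    LinearMap.range f ≤ Module.jacobson S N := by
  refine hN.le_jacobson_of_ne_top fun hsurj ↦ hN.isAtom_jacobson.1 ?_
  have := isSimpleModule_iff_isCoatom.mpr hM.isCoatom_jacobson
  have := IsSemisimpleModule.of_surjective ((Module.jacobson S M).liftQ f hf)
    (LinearMap.range_eq_top.mp (by rw [Submodule.range_liftQ, hsurj]))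
  exact IsSemisimpleModule.jacobson_eq_bot S N

theorem range_le_jacobson_of_prod {P : Type*} [AddCommGroup P] [Module S P]
    (hP : IsUniserialLengthTwo S P) (hM : IsUniserialLengthTwo S M)
    (hN : IsUniserialLengthTwo S N) {f : M × N →ₗ[S] P}
    (hf : (Module.jacobson S M).prod (Module.jacobson S N) ≤ LinearMap.ker f) :
    LinearMap.range f ≤ Module.jacobson S P := by
  rw [← LinearMap.coprod_comp_inl_inr f, LinearMap.range_coprod]
  exact sup_le (hM.range_le_jacobson hP fun a ha ↦ hf ⟨ha, zero_mem _⟩)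
    (hN.range_le_jacobson hP fun b hb ↦ hf ⟨zero_mem _, hb⟩)

theorem eq_bot_of_jacobson_prod_le_ker (h₁ : IsUniserialLengthTwo S M)
    (h₂ : IsUniserialLengthTwo S N) {D : Submodule S (M × N)} {π : M × N →ₗ[S] D}
    (hπ : π ∘ₗ D.subtype = LinearMap.id)
    (hker : (Module.jacobson S M).prod (Module.jacobson S N) ≤ LinearMap.ker π) : D = ⊥ := by
  rw [Submodule.eq_bot_iff]
  intro d hd
  have hπd : π d = ⟨d, hd⟩ := LinearMap.congr_fun hπ ⟨d, hd⟩
  have hfst : d.1 ∈ Module.jacobson S M :=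
    h₁.range_le_jacobson_of_prod h₁ h₂ (f := LinearMap.fst S M N ∘ₗ D.subtype ∘ₗ π)
      (hker.trans fun x hx ↦ by simp_all) ⟨d, by simp [hπd]⟩
  have hsnd : d.2 ∈ Module.jacobson S N :=
    h₂.range_le_jacobson_of_prod h₁ h₂ (f := LinearMap.snd S M N ∘ₗ D.subtype ∘ₗ π)
      (hker.trans fun x hx ↦ by simp_all) ⟨d, by simp [hπd]⟩
  have hzero : π d = 0 := hker ⟨hfst, hsnd⟩
  simpa [hzero] using hπd.symm

end IsUniserialLengthTwo

end Radical

section AlmostInjective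

variable {R : Type u} [Ring R]

theorem IsAlmostInjective.congr {M N : Type*} [AddCommGroup M] [Module Rᵐᵒᵖ M]
    [AddCommGroup N] [Module Rᵐᵒᵖ N] (hM : IsAlmostInjective.{u, _, w} R M)
    (φ : M ≃ₗ[Rᵐᵒᵖ] N) : IsAlmostInjective.{u, _, w} R N := by
  intro A B _ _ _ _ i hi f
  rcases hM A B i hi (φ.symm ∘ₗ f) with ⟨g, hg⟩ | ⟨D, hD, π, hπ, h, hh⟩
  · exact .inl ⟨φ ∘ₗ g, by ext a; simp [LinearMap.comp_assoc, hg]⟩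
  · exact .inr ⟨D, hD, π, hπ, h ∘ₗ φ.symm, by rw [LinearMap.comp_assoc, hh]⟩

theorem isAlmostInjective_of_injective {M : Type u} [AddCommGroup M] [Module Rᵐᵒᵖ M]
    (hM : Module.Injective Rᵐᵒᵖ M) : IsAlmostInjective.{u, u, u} R M := by
  intro A B _ _ _ _ i hi f
  obtain ⟨g, hg⟩ := hM.out i hi f
  exact .inl ⟨g, LinearMap.ext hg⟩

variable {M M₁ M₂ : Type w} [AddCommGroup M] [Module Rᵐᵒᵖ M] [AddCommGroup M₁] [Module Rᵐᵒᵖ M₁]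
  [AddCommGroup M₂] [Module Rᵐᵒᵖ M₂]

theorem jacobson_eq_bot_or_isUniserialLengthTwo [IsNoetherian Rᵐᵒᵖ M]
    (hR : RightAlmostVRing.{u, w, w} R) (hM : IsCoatom (Module.jacobson Rᵐᵒᵖ M)) :
    Module.jacobson Rᵐᵒᵖ M = ⊥ ∨ IsUniserialLengthTwo Rᵐᵒᵖ M := by
  refine or_iff_not_imp_left.mpr fun hne ↦ ⟨?_, hM⟩
  set K := Module.jacobson Rᵐᵒᵖ M
  have : Nontrivial K := Submodule.nontrivial_iff_ne_bot.mpr hne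
  obtain ⟨N, hN⟩ := IsCoatomic.exists_coatom (Submodule Rᵐᵒᵖ K)
  have hsimple : IsSimpleModule Rᵐᵒᵖ (K ⧸ N) := isSimpleModule_iff_isCoatom.mpr hN
  suffices hbot : N = ⊥ by
    have := isSimpleModule_iff_isCoatom.mpr (hbot ▸ hN)
    exact isSimpleModule_iff_isAtom.mp (.congr (Submodule.quotEquivOfEqBot ⊥ rfl).symm)
  rcases hR (K ⧸ N) hsimple K M K.subtype K.injective_subtype N.mkQ with
    ⟨g, hg⟩ | ⟨D, hD, π, hπ, h, hh⟩
  · have hzero : N.mkQ = 0 := by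
      ext x
      simpa [← hg] using IsSemisimpleModule.jacobson_le_ker _ _ _ _ g x.2
    exact absurd (by simpa using congrArg LinearMap.ker hzero) hN.1
  · have htop := eq_top_of_isCoatom_jacobson_of_proj hM hD hπ
    have hπinj : Function.Injective π := by
      rw [← LinearMap.ker_eq_bot]
      exact eq_bot_of_top_isCompl (htop ▸ LinearMap.isCompl_of_proj (LinearMap.congr_fun hπ))
    have hinj : Function.Injective N.mkQ := .of_comp (f := h) <| by
      rw [← LinearMap.coe_comp, hh]
      exact hπinj.comp K.injective_subtype
    simpa using LinearMap.ker_eq_bot.mpr hinj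

namespace IsUniserialLengthTwo

theorem exists_idempotent_of_equiv_jacobson (h₁ : IsUniserialLengthTwo Rᵐᵒᵖ M₁)
    (h₂ : IsUniserialLengthTwo Rᵐᵒᵖ M₂)
    (hai : IsAlmostInjective.{u, w, w} R (Module.jacobson Rᵐᵒᵖ M₂))
    (φ : Module.jacobson Rᵐᵒᵖ M₁ ≃ₗ[Rᵐᵒᵖ] Module.jacobson Rᵐᵒᵖ M₂) :
    ∃ π : M₁ × M₂ →ₗ[Rᵐᵒᵖ] M₁ × M₂, IsIdempotentElem π ∧
      ∀ (a : Module.jacobson Rᵐᵒᵖ M₁) (b : Module.jacobson Rᵐᵒᵖ M₂),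
        π (a, b) = 0 ↔ φ a = b := by
  have := h₂.isSimpleModule_jacobson
  let i := (Module.jacobson Rᵐᵒᵖ M₁).subtype.prodMap (Module.jacobson Rᵐᵒᵖ M₂).subtype
  have hi : Function.Injective i := by
    exact Subtype.val_injective.prodMap Subtype.val_injective
  let f := LinearMap.snd _ _ _ - φ.toLinearMap ∘ₗ LinearMap.fst Rᵐᵒᵖ
    (Module.jacobson Rᵐᵒᵖ M₁) (Module.jacobson Rᵐᵒᵖ M₂)
  rcases hai _ _ i hi f with ⟨g, hg⟩ | ⟨D, hD, π, hπ, h, hh⟩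
  · obtain ⟨b, hb, hb0⟩ := h₂.exists_ne_zero
    have hgb : g (0, b) = 0 :=
      IsSemisimpleModule.jacobson_le_ker _ _ _ _ g (mk_mem_jacobson_prod (zero_mem _) hb)
    have hfb : g (0, b) = ⟨b, hb⟩ := by simpa [i, f] using LinearMap.congr_fun hg (0, ⟨b, hb⟩)
    simp_all
  have hhinj : Function.Injective h := by
    refine h.injective_or_eq_zero.resolve_right fun h0 ↦ hD ?_
    refine h₁.eq_bot_of_jacobson_prod_le_ker h₂ hπ ?_
    rintro ⟨a, b⟩ ⟨ha, hb⟩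
    simpa [i, h0] using (LinearMap.congr_fun hh (⟨a, ha⟩, ⟨b, hb⟩)).symm
  have hππ (x) : π (π x) = π x := LinearMap.congr_fun hπ (π x)
  refine ⟨D.subtype ∘ₗ π, LinearMap.ext fun x ↦ by simp [hππ], fun a b ↦ ?_⟩
  have hab : h (b - φ a) = π (a, b) := LinearMap.congr_fun hh (a, b)
  rw [LinearMap.comp_apply, ← hab, Submodule.subtype_apply, ZeroMemClass.coe_eq_zero,
    map_eq_zero_iff h hhinj, sub_eq_zero, eq_comm]

theorem exists_extension (h₁ : IsUniserialLengthTwo Rᵐᵒᵖ M₁)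
    (h₂ : IsUniserialLengthTwo Rᵐᵒᵖ M₂)
    (hai : IsAlmostInjective.{u, w, w} R (Module.jacobson Rᵐᵒᵖ M₂))
    (φ : Module.jacobson Rᵐᵒᵖ M₁ ≃ₗ[Rᵐᵒᵖ] Module.jacobson Rᵐᵒᵖ M₂) :
    ∃ g : M₁ →ₗ[Rᵐᵒᵖ] M₂, ∀ x : Module.jacobson Rᵐᵒᵖ M₁, g x = φ x := by
  obtain ⟨π, hπ, hπφ⟩ := h₁.exists_idempotent_of_equiv_jacobson h₂ hai φ
  have hππ (x) : π (π x) = π x := LinearMap.congr_fun hπ.eq x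
  let p₁ := LinearMap.fst Rᵐᵒᵖ M₁ M₂ ∘ₗ (LinearMap.ker π).subtype
  have hinj : Function.Injective p₁ := by
    have hcomap : (LinearMap.ker π).comap (LinearMap.inr Rᵐᵒᵖ M₁ M₂) = ⊥ := by
      by_contra hne
      obtain ⟨b, hb, hb0⟩ := h₂.exists_ne_zero
      have hφ0 := (hπφ 0 ⟨b, hb⟩).mp (h₂.jacobson_le_of_ne_bot hne hb)
      exact hb0 (by simpa using congrArg Subtype.val hφ0.symm)
    refine (injective_iff_map_eq_zero _).mpr ?_
    rintro ⟨⟨_, m⟩, hm⟩ (rfl : _ = 0)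
    have : m ∈ (LinearMap.ker π).comap (LinearMap.inr Rᵐᵒᵖ M₁ M₂) := hm
    simp_all
  have hsurj : Function.Surjective p₁ := by
    rw [← LinearMap.range_eq_top]
    by_contra hne
    have hmem (x : M₁ × M₂) : (x - π x).1 ∈ Module.jacobson Rᵐᵒᵖ M₁ :=
      h₁.le_jacobson_of_ne_top hne ⟨⟨x - π x, by simp [hππ]⟩, rfl⟩
    obtain ⟨a, ha, ha0⟩ := h₁.exists_ne_zero
    have := h₁.isSimpleModule_jacobson
    let r := (LinearMap.fst _ _ _ ∘ₗ (LinearMap.id - π)).codRestrict _ hmem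
    have hzero : r (a, φ ⟨a, ha⟩) = 0 :=
      IsSemisimpleModule.jacobson_le_ker _ _ _ _ r (mk_mem_jacobson_prod ha (φ ⟨a, ha⟩).2)
    have hπa : π (a, φ ⟨a, ha⟩) = 0 := (hπφ ⟨a, ha⟩ _).mpr rfl
    have hr : (r (a, φ ⟨a, ha⟩) : M₁) = a - (π (a, φ ⟨a, ha⟩)).1 := rfl
    exact ha0 (by simpa [hzero, hπa] using hr.symm)
  let e := LinearEquiv.ofBijective p₁ ⟨hinj, hsurj⟩
  refine ⟨LinearMap.snd _ _ _ ∘ₗ (LinearMap.ker π).subtype ∘ₗ e.symm.toLinearMap, fun x ↦ ?_⟩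
  have hx : e.symm x = ⟨(x, φ x), (hπφ x _).mpr rfl⟩ := e.symm_apply_eq.mpr rfl
  simp [hx]

end IsUniserialLengthTwo

end AlmostInjective

section FiniteLength

variable {S : Type*} [Ring S] {M : Type*} [AddCommGroup M] [Module S M]

theorem isArtinian_of_forall_exists_isAtom_quotient [IsNoetherian S M]
    (h : ∀ N : Submodule S M, N ≠ ⊤ → ∃ X : Submodule S (M ⧸ N), IsAtom X) : IsArtinian S M := by
  obtain ⟨N, hN, hmax⟩ := set_has_maximal_iff_noetherian.mpr ‹IsNoetherian S M›
    {N | IsFiniteLength S N} ⟨⊥, .of_subsingleton⟩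
  have htop : N = ⊤ := by
    by_contra hne
    obtain ⟨X, hX⟩ := h N hne
    have hcov : N ⋖ X.comap N.mkQ := by
      simpa using Submodule.comap_covBy_of_surjective N.mkQ_surjective hX.bot_covBy
    have := (covBy_iff_quot_is_simple hcov.le).mp hcov
    exact hmax _ (.of_simple_quotient
      ((Submodule.comapSubtypeEquivOfLe hcov.le).symm.isFiniteLength hN)) hcov.lt
  subst htop
  exact (isFiniteLength_iff_isNoetherian_isArtinian.mp
    (Submodule.topEquiv.isFiniteLength hN)).2

end FiniteLength

section BassPapp

theorem exists_dfinsupp_lift {S M ι : Type*} [Ring S] [AddCommGroup M] [Module S M]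
    {E : ι → Type*} [∀ i, AddCommGroup (E i)] [∀ i, Module S (E i)] (f : M →ₗ[S] ∀ i, E i)
    (hf : ∀ m, {i | f m i ≠ 0}.Finite) :
    ∃ g : M →ₗ[S] Π₀ i, E i, ∀ m, ⇑(g m) = f m := by
  classical
  have hrange (m : M) : f m ∈ LinearMap.range (DFinsupp.coeFnLinearMap S (β := E)) := by
    refine ⟨DFinsupp.mk (hf m).toFinset fun i ↦ f m i, funext fun i ↦ ?_⟩
    simp +contextual [DFinsupp.mk_apply, eq_comm]
  let e := LinearEquiv.ofInjective (DFinsupp.coeFnLinearMap S)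
    (DFunLike.coe_injective (F := Π₀ i, E i))
  exact ⟨e.symm ∘ₗ f.codRestrict _ hrange, fun m ↦ congrArg Subtype.val (e.apply_symm_apply _)⟩

theorem exists_injective_module_embedding (S M : Type u) [Ring S] [AddCommGroup M] [Module S M] :
    ∃ (E : Type u) (_ : AddCommGroup E) (_ : Module S E) (φ : M →ₗ[S] E),
      Module.Injective S E ∧ Function.Injective φ :=
  let E := CategoryTheory.Injective.under (ModuleCat.of S M)
  ⟨E, inferInstance, inferInstance, (CategoryTheory.Injective.ι (ModuleCat.of S M)).hom,
    Module.injective_module_of_injective_object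
      (inj := CategoryTheory.Injective.injective_under (ModuleCat.of S M)) ..,
    (ModuleCat.mono_iff_injective _).mp inferInstance⟩

theorem isNoetherianRing_of_injective_dfinsupp (S : Type u) [Ring S]
    (h : ∀ (E : ℕ → Type u) [∀ n, AddCommGroup (E n)] [∀ n, Module S (E n)],
      (∀ n, Module.Injective S (E n)) → Module.Injective S (Π₀ n, E n)) :
    IsNoetherianRing S := by
  classical
  refine monotone_stabilizes_iff_noetherian.mp fun I ↦ ?_
  choose E _ _ φ hE hφ using fun n ↦ exists_injective_module_embedding S (S ⧸ I n)
  let F : S →ₗ[S] ∀ n, E n := LinearMap.pi fun n ↦ φ n ∘ₗ (I n).mkQ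
  have hF (n x) : F x n = 0 ↔ x ∈ I n := by simp [F, map_eq_zero_iff _ (hφ n)]
  have hfin (x : ↥(⨆ n, I n)) : {n | F x n ≠ 0}.Finite := by
    obtain ⟨N, hN⟩ := (Submodule.mem_iSup_of_directed _ I.monotone.directed_le).mp x.2
    refine (Set.finite_lt_nat N).subset fun n hn ↦ ?_
    by_contra! hNn
    exact hn ((hF n x).mpr (I.monotone (not_lt.mp hNn) hN))
  obtain ⟨F', hF'⟩ := exists_dfinsupp_lift (F ∘ₗ (⨆ n, I n).subtype) hfin
  obtain ⟨G, hG⟩ := (h E hE).out _ (⨆ n, I n).injective_subtype F'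
  obtain ⟨N, hN⟩ := (G 1).support.exists_notMem
  have hle : ⨆ n, I n ≤ I N := fun x hx ↦ by
    have hGx : G x = x • G 1 := by rw [← map_smul, smul_eq_mul, mul_one]
    have hFx : F x N = G x N :=
      congrFun ((hF' ⟨x, hx⟩).symm.trans (congrArg _ (hG ⟨x, hx⟩).symm)) N
    rw [← hF, hFx, hGx, DFinsupp.smul_apply, DFinsupp.notMem_support_iff.mp hN, smul_zero]
  exact ⟨N, fun m hm ↦ (I.monotone hm).antisymm ((le_iSup I m).trans hle)⟩

end BassPapp

section Mininjective

variable {R : Type u} [Ring R]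

theorem isMininjective_of_forall_eq_zero {M : Type*} [AddCommGroup M] [Module Rᵐᵒᵖ M]
    (hM : ∀ I : Submodule Rᵐᵒᵖ R, IsAtom I → ∀ f : I →ₗ[Rᵐᵒᵖ] M, f = 0) : IsMininjective R M :=
  fun I hI f ↦ ⟨0, fun x ↦ by simp [hM I hI f]⟩

theorem isMininjective_of_injective {M : Type u} [AddCommGroup M] [Module Rᵐᵒᵖ M]
    (hM : Module.Injective Rᵐᵒᵖ M) : IsMininjective R M :=
  fun I _ f ↦ hM.out I.subtype I.injective_subtype f

theorem IsMininjective.dfinsupp {ι : Type*} {E : ι → Type*} [∀ i, AddCommGroup (E i)]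
    [∀ i, Module Rᵐᵒᵖ (E i)] (hE : ∀ i, IsMininjective R (E i)) :
    IsMininjective R (Π₀ i, E i) := by
  classical
  intro I hI f
  have := isSimpleModule_iff_isAtom.mpr hI
  have := IsSimpleModule.nontrivial Rᵐᵒᵖ I
  obtain ⟨x, hx⟩ := exists_ne (0 : I)
  have hsupp (y : I) (i : ι) (hi : i ∉ (f x).support) : f y i = 0 := by
    obtain ⟨r, rfl⟩ := IsSimpleModule.toSpanSingleton_surjective Rᵐᵒᵖ hx y
    simp [DFinsupp.notMem_support_iff.mp hi]
  choose g hg using fun i ↦ hE i I hI (DFinsupp.lapply i ∘ₗ f)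
  refine ⟨∑ i ∈ (f x).support, DFinsupp.lsingle i ∘ₗ g i, fun y ↦ DFinsupp.ext fun i ↦ ?_⟩
  by_cases hi : f x i = 0 <;>
    simp [hg, DFinsupp.single_apply, hi, hsupp y i]

variable (hinj : ∀ (M : Type u) [AddCommGroup M] [Module Rᵐᵒᵖ M],
  IsMininjective R M → Module.Injective Rᵐᵒᵖ M)

include hinj

theorem rightAlmostVRing_of_mininjective_injective
    (hmin : ∀ I : Submodule Rᵐᵒᵖ R, IsAtom I → IsAlmostInjective.{u, u, u} R I) :
    RightAlmostVRing.{u, u, u} R := by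
  intro T _ _ hT
  by_cases h : ∃ I : Submodule Rᵐᵒᵖ R, IsAtom I ∧ ∃ f : I →ₗ[Rᵐᵒᵖ] T, f ≠ 0
  · obtain ⟨I, hI, f, hf⟩ := h
    have := isSimpleModule_iff_isAtom.mpr hI
    exact (hmin I hI).congr (.ofBijective f (LinearMap.bijective_of_ne_zero hf))
  · push Not at h
    exact isAlmostInjective_of_injective (hinj T (isMininjective_of_forall_eq_zero h))

theorem exists_isAtom_of_mininjective_injective (M : Type u) [AddCommGroup M] [Module Rᵐᵒᵖ M]
    [Nontrivial M] : ∃ N : Submodule Rᵐᵒᵖ M, IsAtom N := by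
  by_contra! hno
  have hsub (N : Submodule Rᵐᵒᵖ M) : Module.Injective Rᵐᵒᵖ N := by
    refine hinj N (isMininjective_of_forall_eq_zero fun I hI f ↦ ?_)
    have := isSimpleModule_iff_isAtom.mpr hI
    refine f.injective_or_eq_zero.resolve_left fun hf ↦ ?_
    let e := LinearEquiv.ofInjective (N.subtype ∘ₗ f) (N.injective_subtype.comp hf)
    exact hno _ (isSimpleModule_iff_isAtom.mp (.congr e.symm))
  have : IsSemisimpleModule Rᵐᵒᵖ M := by
    refine (isSemisimpleModule_iff _ _).mpr ⟨fun N ↦ ?_⟩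
    obtain ⟨g, hg⟩ := (hsub N).out N.subtype N.injective_subtype LinearMap.id
    exact ⟨_, LinearMap.isCompl_of_proj hg⟩
  obtain ⟨N, hN⟩ := IsSemisimpleModule.exists_simple_submodule Rᵐᵒᵖ M
  exact hno N (isSimpleModule_iff_isAtom.mp hN)

theorem isArtinianRing_op_of_mininjective_injective : IsArtinianRing Rᵐᵒᵖ := by
  have : IsNoetherian Rᵐᵒᵖ Rᵐᵒᵖ := isNoetherianRing_of_injective_dfinsupp Rᵐᵒᵖ fun E _ _ hE ↦
    hinj _ (IsMininjective.dfinsupp fun n ↦ isMininjective_of_injective (hE n))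
  refine isArtinian_of_forall_exists_isAtom_quotient fun N hN ↦ ?_
  have := Submodule.Quotient.nontrivial_iff.mpr hN
  exact exists_isAtom_of_mininjective_injective hinj (Rᵐᵒᵖ ⧸ N)

end Mininjective

section JacobsonOpposite

variable {S : Type*} [Ring S]

theorem mem_ring_jacobson_iff_forall_isUnit {x : S} :
    x ∈ Ring.jacobson S ↔ ∀ y, IsUnit (1 - y * x) := by
  have hleft {w : S} (hw : w ∈ Ring.jacobson S) : ∃ z, z * (1 - w) = 1 := by
    rw [← Ideal.jacobson_bot, Ideal.mem_jacobson_iff] at hw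
    obtain ⟨z, hz⟩ := hw (-1)
    exact ⟨z, by rw [← sub_eq_zero, ← (Submodule.mem_bot S).mp hz]; noncomm_ring⟩
  refine ⟨fun hx y ↦ ?_, fun h ↦ ?_⟩
  · have hyx := (Ring.jacobson S).mul_mem_left y hx
    obtain ⟨z, hz⟩ := hleft hyx
    obtain ⟨w, hw⟩ := hleft ((Ring.jacobson S).mul_mem_left (-z) hyx)
    have hwz : w * z = 1 := by
      rw [← hw, sub_eq_add_neg, neg_mul, neg_neg, ← hz]
      noncomm_ring
    rw [left_inv_eq_right_inv hwz hz] at hwz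
    exact ⟨⟨1 - y * x, z, hwz, hz⟩, rfl⟩
  · rw [← Ideal.jacobson_bot, Ideal.mem_jacobson_iff]
    intro y
    obtain ⟨z, hz⟩ := (h (-y)).exists_left_inv
    exact ⟨z, (Submodule.mem_bot S).mpr (by rw [← sub_eq_zero.mpr hz]; noncomm_ring)⟩

theorem isUnit_one_sub_mul_comm {x y : S} : IsUnit (1 - x * y) ↔ IsUnit (1 - y * x) := by
  simpa [spectrum.mem_iff, not_iff_not] using
    spectrum.unit_mem_mul_comm (R := ℤ) (a := x) (b := y) (r := 1)

theorem op_mem_ring_jacobson_iff {x : S} : op x ∈ Ring.jacobson Sᵐᵒᵖ ↔ x ∈ Ring.jacobson S := by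
  simp_rw [mem_ring_jacobson_iff_forall_isUnit, op_surjective.forall, ← op_mul, ← op_one, ← op_sub,
    isUnit_op, isUnit_one_sub_mul_comm]

theorem mem_jacobson_bot_iff {x : S} :
    x ∈ (⊥ : TwoSidedIdeal S).jacobson ↔ x ∈ Ring.jacobson S := by
  rw [← Ideal.jacobson_bot, TwoSidedIdeal.mem_jacobson_iff, Ideal.mem_jacobson_iff]
  simp only [TwoSidedIdeal.mem_bot, Submodule.mem_bot]

variable (S) in
/-- The identification of `S`, as a right module over itself, with the left regular module of the
opposite ring. -/
def rightRegularEquiv : S ≃ₗ[Sᵐᵒᵖ] Sᵐᵒᵖ :=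
  { opAddEquiv with map_smul' := fun _ _ ↦ by simp }

theorem mem_right_jacobson_iff {x : S} : x ∈ Module.jacobson Sᵐᵒᵖ S ↔ x ∈ Ring.jacobson S := by
  rw [← Module.comap_jacobson_of_bijective (rightRegularEquiv S).bijective,
    ← op_mem_ring_jacobson_iff]
  rfl

end JacobsonOpposite

section LocalIdempotent

variable {S : Type*} [Ring S] {e : S}

/-- An idempotent `e` is local when every element of the right ideal `eS` outside the Jacobson
radical generates `eS`, and likewise for the left ideal `Se`. Either half implies the other; both
are recorded so that the notion is visibly left-right symmetric. -/
structure IsLocalIdempotent (e : S) : Prop where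
  isIdempotentElem : IsIdempotentElem e
  notMem_jacobson : e ∉ Ring.jacobson S
  exists_mul_right : ∀ x, e * x ∉ Ring.jacobson S → ∃ s, e * x * s = e
  exists_mul_left : ∀ x, x * e ∉ Ring.jacobson S → ∃ s, s * (x * e) = e

theorem IsLocalIdempotent.unop {e : Sᵐᵒᵖ} (he : IsLocalIdempotent e) :
    IsLocalIdempotent e.unop where
  isIdempotentElem := congrArg MulOpposite.unop he.isIdempotentElem.eq
  notMem_jacobson h := he.notMem_jacobson (op_mem_ring_jacobson_iff.mpr h)
  exists_mul_right x hx := by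
    obtain ⟨s, hs⟩ := he.exists_mul_left (op x) fun h ↦ hx (op_mem_ring_jacobson_iff.mp h)
    exact ⟨s.unop, congrArg MulOpposite.unop hs⟩
  exists_mul_left x hx := by
    obtain ⟨s, hs⟩ := he.exists_mul_right (op x) fun h ↦ hx (op_mem_ring_jacobson_iff.mp h)
    exact ⟨s.unop, congrArg MulOpposite.unop hs⟩

theorem exists_mul_right_of_exists_mul_left [IsSemisimpleRing S]
    (h : ∀ x, x * e ≠ 0 → ∃ s, s * (x * e) = e) {x : S} (hx : e * x ≠ 0) :
    ∃ s, e * x * s = e := by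
  let f : Submodule.span S {e} →ₗ[S] S := LinearMap.toSpanSingleton S S x ∘ₗ Submodule.subtype _
  have hf : Function.Injective f := by
    refine (injective_iff_map_eq_zero f).mpr fun ⟨y, hy⟩ hyx ↦ ?_
    obtain ⟨a, rfl⟩ := Submodule.mem_span_singleton.mp hy
    by_contra hne
    obtain ⟨s, hs⟩ := h a fun h0 ↦ hne (Subtype.ext h0)
    have hyx : a * e * x = 0 := hyx
    exact hx (by rw [← hs, mul_assoc, hyx, mul_zero])
  obtain ⟨g, hg⟩ := IsSemisimpleModule.extension_property f hf (Submodule.subtype _)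
  have hge : g (e * x) = e := LinearMap.congr_fun hg ⟨e, Submodule.mem_span_singleton_self e⟩
  refine ⟨g 1, ?_⟩
  rw [← smul_eq_mul, ← map_smul, smul_eq_mul, mul_one, hge]

theorem isLocalIdempotent_of_map {Q : Type*} [Ring Q] {f : S →+* Q} (hf : Function.Surjective f)
    (hJ : ∀ x, f x ∈ Ring.jacobson Q ↔ x ∈ Ring.jacobson S) (he : IsIdempotentElem e)
    (hfe : IsLocalIdempotent (f e)) : IsLocalIdempotent e := by
  have hunit {x y : S} (hxy : f x = f y) : IsUnit (1 - (x - y)) := by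
    have hmem : x - y ∈ Ring.jacobson S := (hJ _).mp (by simp [hxy])
    simpa using mem_ring_jacobson_iff_forall_isUnit.mp hmem 1
  refine ⟨he, fun h ↦ hfe.notMem_jacobson ((hJ e).mpr h), fun x hx ↦ ?_, fun x hx ↦ ?_⟩
  · obtain ⟨s, hs⟩ := hfe.exists_mul_right (f x) (by rwa [← map_mul, hJ])
    obtain ⟨s, rfl⟩ := hf s
    obtain ⟨u, hu⟩ := hunit (x := e) (y := e * x * s) (by simpa using hs.symm)
    refine ⟨s * ↑u⁻¹, ?_⟩
    have heu : e * u = e * x * s := by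
      rw [hu, mul_sub, mul_sub, mul_one, he.eq, ← mul_assoc, ← mul_assoc, he.eq]
      noncomm_ring
    rw [← mul_assoc, ← heu, Units.mul_inv_cancel_right]
  · obtain ⟨s, hs⟩ := hfe.exists_mul_left (f x) (by rwa [← map_mul, hJ])
    obtain ⟨s, rfl⟩ := hf s
    obtain ⟨u, hu⟩ := hunit (x := e) (y := s * (x * e)) (by simpa using hs.symm)
    refine ⟨↑u⁻¹ * s, ?_⟩
    have hue : u * e = s * (x * e) := by
      rw [hu, sub_mul, sub_mul, one_mul, he.eq, mul_assoc, mul_assoc, he.eq]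
      noncomm_ring
    rw [mul_assoc, ← hue, Units.inv_mul_cancel_left]

theorem exists_completeOrthogonalIdempotents_of_isSemisimpleRing [IsSemisimpleRing S] :
    ∃ (n : ℕ) (e : Fin n → S), CompleteOrthogonalIdempotents e ∧ ∀ i, IsLocalIdempotent (e i) := by
  obtain ⟨n, T, φ, hT⟩ := IsSemisimpleModule.exists_linearEquiv_fin_dfinsupp S S
  let e (i : Fin n) : S := φ.symm (.single i (φ 1 i))
  have hmul (x : S) (i : Fin n) : x * e i = φ.symm (.single i (φ x i)) := by
    rw [← smul_eq_mul, ← map_smul, ← DFinsupp.single_smul, ← DFinsupp.smul_apply, ← map_smul,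
      smul_eq_mul, mul_one]
  have hidem (i : Fin n) : IsIdempotentElem (e i) := by simp [IsIdempotentElem, hmul, e]
  have hleft (i : Fin n) (x : S) (hx : x * e i ≠ 0) : ∃ s, s * (x * e i) = e i := by
    have := hT i
    have hφx : φ x i ≠ 0 := fun h ↦ hx (by simp [hmul, h])
    obtain ⟨s, hs⟩ := IsSimpleModule.toSpanSingleton_surjective S hφx (φ 1 i)
    rw [LinearMap.toSpanSingleton_apply] at hs
    refine ⟨s, ?_⟩
    rw [hmul, ← smul_eq_mul, ← map_smul, ← DFinsupp.single_smul, hs]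
  have hJ : Ring.jacobson S = ⊥ := IsSemisimpleModule.jacobson_eq_bot S S
  refine ⟨n, e, ⟨⟨hidem, fun i j hij ↦ ?_⟩, ?_⟩, fun i ↦ ⟨hidem i, ?_, fun x hx ↦ ?_, ?_⟩⟩
  · simp [hmul, e, DFinsupp.single_apply, hij]
  · apply φ.injective
    ext i
    simp [e, DFinsupp.single_apply]
  · intro h0
    rw [hJ, Submodule.mem_bot] at h0
    have := IsSimpleModule.nontrivial S (T i)
    obtain ⟨v, hv⟩ := exists_ne (0 : T i)
    have hv0 := hmul (φ.symm (.single i v)) i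
    rw [h0, mul_zero, LinearEquiv.apply_symm_apply, DFinsupp.single_eq_same, eq_comm,
      LinearEquiv.map_eq_zero_iff, DFinsupp.single_eq_zero] at hv0
    exact hv hv0
  · rw [hJ, Submodule.mem_bot] at hx
    exact exists_mul_right_of_exists_mul_left (hleft i) hx
  · simpa only [hJ, Submodule.mem_bot] using hleft i

theorem exists_completeOrthogonalIdempotents_of_isSemiprimaryRing [IsSemiprimaryRing S] :
    ∃ (n : ℕ) (e : Fin n → S), CompleteOrthogonalIdempotents e ∧ ∀ i, IsLocalIdempotent (e i) := by
  let f := Ideal.Quotient.mk (Ring.jacobson S)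
  have hJ (x : S) : f x ∈ Ring.jacobson (S ⧸ Ring.jacobson S) ↔ x ∈ Ring.jacobson S := by
    rw [Ring.jacobson_quotient_jacobson, Ideal.mem_bot, Ideal.Quotient.eq_zero_iff_mem]
  have hnil (x) (hx : x ∈ RingHom.ker f) : IsNilpotent x := by
    obtain ⟨k, hk⟩ := IsSemiprimaryRing.isNilpotent (R := S)
    rw [Ideal.mk_ker] at hx
    exact ⟨k, by simpa [hk] using Ideal.pow_mem_pow hx k⟩
  obtain ⟨n, ebar, hebar, hlocal⟩ :=
    exists_completeOrthogonalIdempotents_of_isSemisimpleRing (S := S ⧸ Ring.jacobson S)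
  obtain ⟨e, he, hfe⟩ := CompleteOrthogonalIdempotents.lift_of_isNilpotent_ker f hnil hebar
    fun i ↦ Ideal.Quotient.mk_surjective _
  subst hfe
  exact ⟨n, e, he, fun i ↦
    isLocalIdempotent_of_map Ideal.Quotient.mk_surjective hJ (he.idem i) (hlocal i)⟩

theorem exists_completeOrthogonalIdempotents_of_isArtinianRing_op [IsArtinianRing Sᵐᵒᵖ] :
    ∃ (n : ℕ) (e : Fin n → S), CompleteOrthogonalIdempotents e ∧ ∀ i, IsLocalIdempotent (e i) := by
  obtain ⟨n, e, he, hlocal⟩ := exists_completeOrthogonalIdempotents_of_isSemiprimaryRing (S := Sᵐᵒᵖ)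
  refine ⟨n, fun i ↦ (e i).unop, ⟨⟨fun i ↦ (hlocal i).unop.isIdempotentElem, fun i j hij ↦ ?_⟩, ?_⟩,
    fun i ↦ (hlocal i).unop⟩
  · exact congrArg unop (he.ortho hij.symm)
  · rw [← Finset.unop_sum, he.complete, unop_one]

end LocalIdempotent

section Uniserial

variable {S : Type*} [Ring S] {M : Type*} [AddCommGroup M] [Module S M]

theorem le_or_ge_of_forall_mem_span (h : ∀ x y : M, x ∈ Submodule.span S {y} ∨
    y ∈ Submodule.span S {x}) (N P : Submodule S M) : N ≤ P ∨ P ≤ N := by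
  refine or_iff_not_imp_left.mpr fun hNP y hy ↦ ?_
  obtain ⟨x, hxN, hxP⟩ := SetLike.not_le_iff_exists.mp hNP
  rcases h x y with hxy | hyx
  · exact absurd ((Submodule.span_singleton_le_iff_mem y P).mpr hy hxy) hxP
  · exact (Submodule.span_singleton_le_iff_mem x N).mpr hxN hyx

theorem IsUniserialLengthTwo.le_or_ge (hM : IsUniserialLengthTwo S M) (N P : Submodule S M) :
    N ≤ P ∨ P ≤ N := by
  by_cases hN : N = ⊥
  · exact .inl (hN ▸ bot_le)
  by_cases hP : P = ⊤
  · exact .inl (hP ▸ le_top)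
  exact .inr ((hM.le_jacobson_of_ne_top hP).trans (hM.jacobson_le_of_ne_bot hN))

theorem isInternal_range_of_completeOrthogonalIdempotents {ι : Type*} [Fintype ι] [DecidableEq ι]
    {p : ι → Module.End S M} (hp : CompleteOrthogonalIdempotents p) :
    DirectSum.IsInternal fun i ↦ LinearMap.range (p i) := by
  have hmul (i j : ι) (x : M) : p i (p j x) = if i = j then p i x else 0 := by
    rw [← Module.End.mul_apply, hp.mul_eq]
    split_ifs <;> simp
  rw [DirectSum.isInternal_submodule_iff_iSupIndep_and_iSup_eq_top]
  refine ⟨fun i ↦ Submodule.disjoint_def.mpr ?_, eq_top_iff.mpr fun x _ ↦ ?_⟩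
  · rintro _ ⟨x, rfl⟩ hx
    have hker : ⨆ j ≠ i, LinearMap.range (p j) ≤ LinearMap.ker (p i) := by
      refine iSup₂_le fun j hji ↦ ?_
      rintro _ ⟨y, rfl⟩
      simp [hmul, hji.symm]
    simpa [hmul] using hker hx
  · have hx : x = ∑ i, p i x := by
      rw [← LinearMap.sum_apply, hp.complete, Module.End.one_apply]
    rw [hx]
    exact sum_mem fun i _ ↦ (le_iSup (fun i ↦ LinearMap.range (p i)) i) ⟨x, rfl⟩

end Uniserial

section PrincipalIdeal

variable {S : Type*} [Ring S] {e : S}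

theorem mem_span_singleton_iff_mul_eq (he : IsIdempotentElem e) {x : S} :
    x ∈ Submodule.span S {e} ↔ x * e = x := by
  refine Submodule.mem_span_singleton.trans ⟨?_, fun hx ↦ ⟨x, hx⟩⟩
  rintro ⟨a, rfl⟩
  rw [smul_eq_mul, mul_assoc, he.eq]

theorem mem_op_span_singleton_iff_mul_eq (he : IsIdempotentElem e) {x : S} :
    x ∈ Submodule.span Sᵐᵒᵖ {e} ↔ e * x = x := by
  refine Submodule.mem_span_singleton.trans ⟨?_, fun hx ↦ ⟨op x, hx⟩⟩
  rintro ⟨a, rfl⟩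
  rw [smul_eq_mul_unop, ← mul_assoc, he.eq]

variable {ι : Type*} [Fintype ι] [DecidableEq ι] {e : ι → S}

theorem isInternal_op_span_singleton (he : CompleteOrthogonalIdempotents e) :
    DirectSum.IsInternal fun i ↦ Submodule.span Sᵐᵒᵖ {e i} := by
  have hrange (i : ι) : Submodule.span Sᵐᵒᵖ {e i} =
      LinearMap.range (Module.toModuleEnd Sᵐᵒᵖ (S := S) S (e i)) := by
    ext x
    rw [Submodule.mem_span_singleton, LinearMap.mem_range, op_surjective.exists]
    rfl
  simp_rw [hrange]
  exact isInternal_range_of_completeOrthogonalIdempotents (he.map (Module.toModuleEnd Sᵐᵒᵖ S))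

theorem isInternal_span_singleton (he : CompleteOrthogonalIdempotents e) :
    DirectSum.IsInternal fun i ↦ Submodule.span S {e i} := by
  have hop : CompleteOrthogonalIdempotents fun i ↦ op (e i) :=
    ⟨⟨fun i ↦ congrArg op (he.idem i), fun i j hij ↦ congrArg op (he.ortho hij.symm)⟩,
      by rw [← Finset.op_sum, he.complete, op_one]⟩
  have hrange (i : ι) : Submodule.span S {e i} =
      LinearMap.range (Module.toModuleEnd S (S := Sᵐᵒᵖ) S (op (e i))) := by
    ext x
    rw [Submodule.mem_span_singleton, LinearMap.mem_range]
    rfl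
  simp_rw [hrange]
  exact isInternal_range_of_completeOrthogonalIdempotents (hop.map (Module.toModuleEnd S S))

end PrincipalIdeal

section LocalRightIdeal

variable {R : Type u} [Ring R] {e : R}

theorem mem_jacobson_op_span_singleton_iff (he : IsIdempotentElem e)
    {x : Submodule.span Rᵐᵒᵖ {e}} :
    x ∈ Module.jacobson Rᵐᵒᵖ (Submodule.span Rᵐᵒᵖ {e}) ↔ (x : R) ∈ Ring.jacobson R := by
  rw [← mem_right_jacobson_iff]
  refine ⟨fun hx ↦ Module.le_comap_jacobson (Submodule.span Rᵐᵒᵖ {e}).subtype hx, fun hx ↦ ?_⟩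
  have hmem (y : R) : Module.toModuleEnd Rᵐᵒᵖ R e y ∈ Submodule.span Rᵐᵒᵖ {e} :=
    Submodule.mem_span_singleton.mpr ⟨op y, rfl⟩
  have hxe : (Module.toModuleEnd Rᵐᵒᵖ R e).codRestrict _ hmem x = x :=
    Subtype.ext ((mem_op_span_singleton_iff_mul_eq he).mp x.2)
  exact hxe ▸ Module.le_comap_jacobson _ hx

theorem IsLocalIdempotent.isCoatom_jacobson (he : IsLocalIdempotent e) :
    IsCoatom (Module.jacobson Rᵐᵒᵖ (Submodule.span Rᵐᵒᵖ {e})) := by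
  have hmem {x} := mem_jacobson_op_span_singleton_iff he.isIdempotentElem (x := x)
  refine ⟨fun htop ↦ he.notMem_jacobson ?_, fun P hP ↦ ?_⟩
  · have he_mem : (⟨e, Submodule.mem_span_singleton_self e⟩ : Submodule.span Rᵐᵒᵖ {e}) ∈
        (⊤ : Submodule Rᵐᵒᵖ _) := Submodule.mem_top
    exact hmem.mp (htop ▸ he_mem)
  · obtain ⟨x, hxP, hx⟩ := SetLike.exists_of_lt hP
    have hex : e * x = x := (mem_op_span_singleton_iff_mul_eq he.isIdempotentElem).mp x.2
    obtain ⟨s, hs⟩ := he.exists_mul_right x (by rwa [hex, ← hmem])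
    refine eq_top_iff.mpr fun y _ ↦ ?_
    have hxy : op (s * (y : R)) • x = y := Subtype.ext <| by
      rw [Submodule.coe_smul, op_smul_eq_mul, ← mul_assoc, ← hex, hs,
        (mem_op_span_singleton_iff_mul_eq he.isIdempotentElem).mp y.2]
    exact hxy ▸ P.smul_mem _ hxP

theorem IsLocalIdempotent.jacobson_eq_bot_or_isUniserialLengthTwo [IsNoetherian Rᵐᵒᵖ R]
    (he : IsLocalIdempotent e) (hR : RightAlmostVRing.{u, u, u} R) :
    Module.jacobson Rᵐᵒᵖ (Submodule.span Rᵐᵒᵖ {e}) = ⊥ ∨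
      IsUniserialLengthTwo Rᵐᵒᵖ (Submodule.span Rᵐᵒᵖ {e}) :=
  _root_.jacobson_eq_bot_or_isUniserialLengthTwo hR he.isCoatom_jacobson

theorem IsLocalIdempotent.le_or_ge [IsNoetherian Rᵐᵒᵖ R] (he : IsLocalIdempotent e)
    (hR : RightAlmostVRing.{u, u, u} R) (N P : Submodule Rᵐᵒᵖ (Submodule.span Rᵐᵒᵖ {e})) :
    N ≤ P ∨ P ≤ N := by
  rcases he.jacobson_eq_bot_or_isUniserialLengthTwo hR with hbot | htwo
  · have hcoatom := he.isCoatom_jacobson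
    rw [hbot] at hcoatom
    by_cases hN : N = ⊥
    · exact .inl (hN ▸ bot_le)
    · exact .inr (hcoatom.2 N (bot_lt_iff_ne_bot.mpr hN) ▸ le_top)
  · exact htwo.le_or_ge N P

theorem IsLocalIdempotent.mul_mul_eq_zero [IsNoetherian Rᵐᵒᵖ R] (he : IsLocalIdempotent e)
    (hR : RightAlmostVRing.{u, u, u} R) {x y : R} (hx : x ∈ Ring.jacobson R)
    (hy : y ∈ Ring.jacobson R) : e * x * y = 0 := by
  have hsemisimple :
      IsSemisimpleModule Rᵐᵒᵖ (Module.jacobson Rᵐᵒᵖ (Submodule.span Rᵐᵒᵖ {e})) := by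
    rcases he.jacobson_eq_bot_or_isUniserialLengthTwo hR with hbot | htwo
    · have := Submodule.subsingleton_iff_eq_bot.mpr hbot
      exact (isSemisimpleModule_iff _ _).mpr Subsingleton.instComplementedLattice
    · have := htwo.isSimpleModule_jacobson
      infer_instance
  have hex : e * x ∈ Submodule.span Rᵐᵒᵖ {e} := Submodule.mem_span_singleton.mpr ⟨op x, rfl⟩
  have hexJ : (⟨e * x, hex⟩ : Submodule.span Rᵐᵒᵖ {e}) ∈ Module.jacobson Rᵐᵒᵖ _ :=
    (mem_jacobson_op_span_singleton_iff he.isIdempotentElem).mpr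
      ((Ring.jacobson R).mul_mem_left e hx)
  have hann := IsSemisimpleModule.jacobson_le_annihilator Rᵐᵒᵖ
    (Module.jacobson Rᵐᵒᵖ (Submodule.span Rᵐᵒᵖ {e})) (op_mem_ring_jacobson_iff.mpr hy)
  have hzero := Module.mem_annihilator.mp hann ⟨_, hexJ⟩
  exact congrArg Subtype.val (congrArg Subtype.val hzero)

theorem jacobsonSquareZero_of_completeOrthogonalIdempotents [IsNoetherian Rᵐᵒᵖ R]
    (hR : RightAlmostVRing.{u, u, u} R) {ι : Type*} [Fintype ι] {e : ι → R}
    (he : CompleteOrthogonalIdempotents e) (hlocal : ∀ i, IsLocalIdempotent (e i)) :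
    JacobsonSquareZero R := by
  intro x hx y hy
  rw [mem_jacobson_bot_iff] at hx hy
  rw [← one_mul x, ← he.complete, Finset.sum_mul, Finset.sum_mul]
  exact Finset.sum_eq_zero fun i _ ↦ (hlocal i).mul_mul_eq_zero hR hx hy

end LocalRightIdeal

section LeftSerial

theorem ker_eq_jacobson_of_isCoatom {S M N : Type*} [Ring S] [AddCommGroup M] [Module S M]
    [AddCommGroup N] [Module S N] [IsCoatomic (Submodule S M)] [IsSimpleModule S N]
    (hM : IsCoatom (Module.jacobson S M)) {f : M →ₗ[S] N} (hf : f ≠ 0) :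
    LinearMap.ker f = Module.jacobson S M :=
  (le_jacobson_of_ne_top hM (LinearMap.ker_eq_top.not.mpr hf)).antisymm
    (IsSemisimpleModule.jacobson_le_ker _ _ _ _ f)

theorem exists_linearEquiv_of_ker_eq {S M N P : Type*} [Ring S] [AddCommGroup M] [Module S M]
    [AddCommGroup N] [Module S N] [AddCommGroup P] [Module S P] {f : M →ₗ[S] N} {g : M →ₗ[S] P}
    (hf : Function.Surjective f) (hg : Function.Surjective g)
    (hfg : LinearMap.ker f = LinearMap.ker g) : ∃ φ : N ≃ₗ[S] P, ∀ x, φ (f x) = g x := by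
  refine ⟨(f.quotKerEquivOfSurjective hf).symm ≪≫ₗ Submodule.quotEquivOfEq _ _ hfg ≪≫ₗ
    g.quotKerEquivOfSurjective hg, fun x ↦ ?_⟩
  have hx : (f.quotKerEquivOfSurjective hf).symm (f x) = Submodule.Quotient.mk x :=
    (LinearEquiv.symm_apply_eq _).mpr rfl
  simp [hx]

theorem IsUniserialLengthTwo.exists_comp_eq {R : Type u} [Ring R] {P M₁ M₂ : Type w}
    [AddCommGroup P] [Module Rᵐᵒᵖ P] [AddCommGroup M₁] [Module Rᵐᵒᵖ M₁] [AddCommGroup M₂]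
    [Module Rᵐᵒᵖ M₂] [IsCoatomic (Submodule Rᵐᵒᵖ P)] (hP : IsCoatom (Module.jacobson Rᵐᵒᵖ P))
    (h₁ : IsUniserialLengthTwo Rᵐᵒᵖ M₁) (h₂ : IsUniserialLengthTwo Rᵐᵒᵖ M₂)
    (hai : IsAlmostInjective.{u, w, w} R (Module.jacobson Rᵐᵒᵖ M₂))
    {f : P →ₗ[Rᵐᵒᵖ] Module.jacobson Rᵐᵒᵖ M₁} {g : P →ₗ[Rᵐᵒᵖ] Module.jacobson Rᵐᵒᵖ M₂}
    (hf : f ≠ 0) (hg : g ≠ 0) : ∃ h : M₁ →ₗ[Rᵐᵒᵖ] M₂, ∀ x, h (f x) = g x := by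
  have := h₁.isSimpleModule_jacobson
  have := h₂.isSimpleModule_jacobson
  have hker : LinearMap.ker f = LinearMap.ker g :=
    (ker_eq_jacobson_of_isCoatom (N := Module.jacobson Rᵐᵒᵖ M₁) hP hf).trans
      (ker_eq_jacobson_of_isCoatom (N := Module.jacobson Rᵐᵒᵖ M₂) hP hg).symm
  obtain ⟨φ, hφ⟩ := exists_linearEquiv_of_ker_eq (N := Module.jacobson Rᵐᵒᵖ M₁)
    (P := Module.jacobson Rᵐᵒᵖ M₂) (LinearMap.surjective_of_ne_zero hf)
    (LinearMap.surjective_of_ne_zero hg) hker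
  obtain ⟨h, hh⟩ := h₁.exists_extension h₂ hai φ
  exact ⟨h, fun x ↦ by rw [hh, hφ]⟩

variable {R : Type u} [Ring R] {a b u v : R}

theorem exists_linearMap_jacobson_op_span_singleton (ha : IsIdempotentElem a)
    (hu : u ∈ Ring.jacobson R) (hau : a * u = u) :
    ∃ f : R →ₗ[Rᵐᵒᵖ] Module.jacobson Rᵐᵒᵖ (Submodule.span Rᵐᵒᵖ {a}),
      ∀ z, ((f z : Submodule.span Rᵐᵒᵖ {a}) : R) = u * z := by
  have hmem (z : R) : u * z ∈ Submodule.span Rᵐᵒᵖ {a} :=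
    (mem_op_span_singleton_iff_mul_eq ha).mpr (by rw [← mul_assoc, hau])
  refine ⟨((Module.toModuleEnd Rᵐᵒᵖ (S := R) R u).codRestrict _ hmem).codRestrict _ fun z ↦ ?_,
    fun z ↦ rfl⟩
  exact (mem_jacobson_op_span_singleton_iff ha).mpr (Ideal.mul_mem_right z _ hu)

theorem IsLocalIdempotent.isUniserialLengthTwo [IsNoetherian Rᵐᵒᵖ R] (ha : IsLocalIdempotent a)
    (hR : RightAlmostVRing.{u, u, u} R) (hu : u ∈ Ring.jacobson R) (hau : a * u = u)
    (hu0 : u ≠ 0) : IsUniserialLengthTwo Rᵐᵒᵖ (Submodule.span Rᵐᵒᵖ {a}) := by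
  refine (ha.jacobson_eq_bot_or_isUniserialLengthTwo hR).resolve_left fun hbot ↦ hu0 ?_
  have hmem : u ∈ Submodule.span Rᵐᵒᵖ {a} :=
    (mem_op_span_singleton_iff_mul_eq ha.isIdempotentElem).mpr hau
  have huJ : (⟨u, hmem⟩ : Submodule.span Rᵐᵒᵖ {a}) ∈ Module.jacobson Rᵐᵒᵖ _ :=
    (mem_jacobson_op_span_singleton_iff ha.isIdempotentElem).mpr hu
  rw [hbot, Submodule.mem_bot] at huJ
  exact congrArg Subtype.val huJ

theorem IsLocalIdempotent.exists_mul_eq_of_mem_jacobson [IsNoetherian Rᵐᵒᵖ R] {e : R}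
    (ha : IsLocalIdempotent a) (hb : IsLocalIdempotent b) (he : IsLocalIdempotent e)
    (hR : RightAlmostVRing.{u, u, u} R) (hu : u ∈ Ring.jacobson R) (hau : a * u = u)
    (hue : u * e = u) (hu0 : u ≠ 0) (hv : v ∈ Ring.jacobson R) (hbv : b * v = v)
    (hve : v * e = v) : ∃ r, r * u = v := by
  by_cases hv0 : v = 0
  · exact ⟨0, by rw [zero_mul, hv0]⟩
  have hA := ha.isUniserialLengthTwo hR hu hau hu0
  have hB := hb.isUniserialLengthTwo hR hv hbv hv0
  obtain ⟨f, hf⟩ := exists_linearMap_jacobson_op_span_singleton ha.isIdempotentElem hu hau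
  obtain ⟨g, hg⟩ := exists_linearMap_jacobson_op_span_singleton hb.isIdempotentElem hv hbv
  let ε : Submodule.span Rᵐᵒᵖ {e} := ⟨e, Submodule.mem_span_singleton_self e⟩
  have hf0 : f ∘ₗ Submodule.subtype _ ≠ 0 := fun h ↦ hu0 <| by
    rw [← hue, ← hf e, show f e = 0 from LinearMap.congr_fun h ε]; rfl
  have hg0 : g ∘ₗ Submodule.subtype _ ≠ 0 := fun h ↦ hv0 <| by
    rw [← hve, ← hg e, show g e = 0 from LinearMap.congr_fun h ε]; rfl
  obtain ⟨h, hh⟩ := hA.exists_comp_eq he.isCoatom_jacobson hB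
    (hR _ hB.isSimpleModule_jacobson) hf0 hg0
  let α : Submodule.span Rᵐᵒᵖ {a} := ⟨a, Submodule.mem_span_singleton_self a⟩
  have hα : op u • α = f e := Subtype.ext (by rw [hf, hue]; exact hau)
  have hgh : h (f e) = g e := hh ε
  refine ⟨h α, ?_⟩
  calc (h α : R) * u = h (op u • α) := by rw [map_smul, Submodule.coe_smul, op_smul_eq_mul]
    _ = v := by rw [hα, hgh, hg, hve]

theorem mem_span_singleton_or_of_isLocalIdempotent [IsNoetherian Rᵐᵒᵖ R]
    (hR : RightAlmostVRing.{u, u, u} R) {ι : Type*} [Fintype ι] {e : ι → R}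
    (he : CompleteOrthogonalIdempotents e) (hlocal : ∀ i, IsLocalIdempotent (e i))
    (hb : IsLocalIdempotent b) (hub : u * b = u) (hvb : v * b = v) :
    u ∈ Submodule.span R {v} ∨ v ∈ Submodule.span R {u} := by
  by_cases hu : u ∈ Ring.jacobson R
  swap
  · obtain ⟨s, hs⟩ := hb.exists_mul_left u (by rwa [hub])
    exact .inr (Submodule.mem_span_singleton.mpr ⟨v * s, by
      rw [smul_eq_mul, mul_assoc, ← hub, hs, hvb]⟩)
  by_cases hv : v ∈ Ring.jacobson R
  swap
  · obtain ⟨s, hs⟩ := hb.exists_mul_left v (by rwa [hvb])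
    exact .inl (Submodule.mem_span_singleton.mpr ⟨u * s, by
      rw [smul_eq_mul, mul_assoc, ← hvb, hs, hub]⟩)
  by_cases hu0 : u = 0
  · exact .inl (hu0 ▸ zero_mem _)
  right
  obtain ⟨i, hi⟩ : ∃ i, e i * u ≠ 0 := by
    by_contra! h
    exact hu0 (by rw [← one_mul u, ← he.complete, Finset.sum_mul]; simp [h])
  rw [← one_mul v, ← he.complete, Finset.sum_mul]
  refine sum_mem fun j _ ↦ ?_
  obtain ⟨r, hr⟩ := (hlocal i).exists_mul_eq_of_mem_jacobson (hlocal j) hb hR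
    (Ideal.mul_mem_left _ (e i) hu) (by rw [← mul_assoc, (he.idem i).eq])
    (by rw [mul_assoc, hub]) hi (Ideal.mul_mem_left _ (e j) hv)
    (by rw [← mul_assoc, (he.idem j).eq]) (by rw [mul_assoc, hvb])
  exact Submodule.mem_span_singleton.mpr ⟨r * e i, by rw [smul_eq_mul, mul_assoc, hr]⟩

theorem rightSerial_of_completeOrthogonalIdempotents [IsNoetherian Rᵐᵒᵖ R]
    (hR : RightAlmostVRing.{u, u, u} R) {n : ℕ} {e : Fin n → R}
    (he : CompleteOrthogonalIdempotents e) (hlocal : ∀ i, IsLocalIdempotent (e i)) :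
    RightSerial R :=
  ⟨n, _, isInternal_op_span_singleton he, fun i ↦ (hlocal i).le_or_ge hR⟩

theorem leftSerial_of_completeOrthogonalIdempotents [IsNoetherian Rᵐᵒᵖ R]
    (hR : RightAlmostVRing.{u, u, u} R) {n : ℕ} {e : Fin n → R}
    (he : CompleteOrthogonalIdempotents e) (hlocal : ∀ i, IsLocalIdempotent (e i)) :
    LeftSerial R := by
  refine ⟨n, _, isInternal_span_singleton he, fun k ↦ le_or_ge_of_forall_mem_span fun x y ↦ ?_⟩
  have hmul (z : Submodule.span R {e k}) : (z : R) * e k = z :=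
    (mem_span_singleton_iff_mul_eq (he.idem k)).mp z.2
  refine (mem_span_singleton_or_of_isLocalIdempotent hR he hlocal (hlocal k)
    (hmul x) (hmul y)).imp ?_ ?_ <;>
    simp [Submodule.mem_span_singleton, Subtype.ext_iff]

end LeftSerial

section SquareZeroRadical

variable {S : Type*} [Ring S] {M : Type*} [AddCommGroup M] [Module S M]

theorem isSemisimpleModule_of_jacobson_le_annihilator [IsSemisimpleRing (S ⧸ Ring.jacobson S)]
    (h : Ring.jacobson S ≤ Module.annihilator S M) : IsSemisimpleModule S M := by
  rw [← SetLike.coe_subset_coe, ← Module.isTorsionBySet_iff_subset_annihilator] at h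
  let _ := h.module
  exact h.isSemisimpleModule_iff.mp inferInstance

theorem jacobson_le_jacobson_smul_top [IsSemisimpleRing (S ⧸ Ring.jacobson S)] :
    Module.jacobson S M ≤ Ring.jacobson S • ⊤ := by
  have : IsSemisimpleModule S (M ⧸ (Ring.jacobson S • ⊤ : Submodule S M)) := by
    refine isSemisimpleModule_of_jacobson_le_annihilator fun r hr ↦ Module.mem_annihilator.mpr ?_
    rintro ⟨m⟩
    exact (Submodule.Quotient.mk_eq_zero _).mpr (Submodule.smul_mem_smul hr Submodule.mem_top)
  exact Module.jacobson_le_of_eq_bot (IsSemisimpleModule.jacobson_eq_bot S _)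

theorem isSemisimpleModule_jacobson_of_mul_eq_zero [IsSemisimpleRing (S ⧸ Ring.jacobson S)]
    (hS : ∀ x ∈ Ring.jacobson S, ∀ y ∈ Ring.jacobson S, x * y = 0) :
    IsSemisimpleModule S (Module.jacobson S M) := by
  have hmul : Ring.jacobson S * Ring.jacobson S = ⊥ := by
    rw [eq_bot_iff, Submodule.mul_le]
    exact fun x hx y hy ↦ (Submodule.mem_bot S).mpr (hS x hx y hy)
  refine isSemisimpleModule_of_jacobson_le_annihilator ?_
  rw [Submodule.le_annihilator_iff, eq_bot_iff]
  calc Ring.jacobson S • Module.jacobson S M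
    _ ≤ Ring.jacobson S • Ring.jacobson S • ⊤ := by gcongr; exact jacobson_le_jacobson_smul_top
    _ = ⊥ := by rw [← Submodule.mul_smul, hmul, Submodule.bot_smul]

end SquareZeroRadical

section Chain

variable {S : Type*} [Ring S] {M : Type*} [AddCommGroup M] [Module S M]

theorem le_jacobson_of_ne_top_of_le_or_ge (hM : ∀ N P : Submodule S M, N ≤ P ∨ P ≤ N)
    {P : Submodule S M} (hP : P ≠ ⊤) : P ≤ Module.jacobson S M := by
  refine le_sInf fun Q hQ ↦ (hM P Q).elim id fun hQP ↦ ?_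
  exact ((hQ.le_iff.mp hQP).resolve_left hP).le

theorem isSimpleModule_of_le_or_ge [Nontrivial M] [IsSemisimpleModule S M]
    (hM : ∀ N P : Submodule S M, N ≤ P ∨ P ≤ N) : IsSimpleModule S M := by
  refine (isSimpleModule_iff S M).mpr ⟨fun N ↦ ?_⟩
  obtain ⟨P, hNP⟩ := exists_isCompl N
  refine (hM N P).imp hNP.disjoint.eq_bot_of_le fun hPN ↦ ?_
  rw [← hNP.sup_eq_top, sup_eq_left.mpr hPN]

theorem eq_bot_or_isAtom_of_lt {c L : Submodule S M} [IsSemisimpleModule S (Module.jacobson S c)]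
    (hc : ∀ N P : Submodule S c, N ≤ P ∨ P ≤ N) (hL : L < c) : L = ⊥ ∨ IsAtom L := by
  refine or_iff_not_imp_left.mpr fun hbot ↦ ?_
  let ι := Submodule.inclusion hL.le
  have hι : Function.Injective ι := Submodule.inclusion_injective hL.le
  have hrange : LinearMap.range ι ≤ Module.jacobson S c := by
    refine le_jacobson_of_ne_top_of_le_or_ge hc fun htop ↦ hL.not_ge ?_
    simpa [ι, Submodule.range_inclusion] using htop
  have : IsSemisimpleModule S L :=
    .of_injective (ι.codRestrict _ fun x ↦ hrange ⟨x, rfl⟩) ((ι.injective_codRestrict_iff _).mpr hι)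
  have : Nontrivial L := Submodule.nontrivial_iff_ne_bot.mpr hbot
  refine isSimpleModule_iff_isAtom.mp (isSimpleModule_of_le_or_ge fun N P ↦ ?_)
  simpa only [Submodule.map_le_map_iff_of_injective hι] using hc (N.map ι) (P.map ι)

end Chain

section Extension

theorem exists_extension_of_iSup_eq_top {S P M ι : Type*} [Ring S] [AddCommGroup P] [Module S P]
    [IsNoetherian S P] [AddCommGroup M] [Module S M] {c : ι → Submodule S P} (hc : ⨆ i, c i = ⊤)
    (hext : ∀ i N, ¬ c i ≤ N → ∀ f : ↥(c i ⊓ N) →ₗ[S] M,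
      ∃ g : P →ₗ[S] M, ∀ x : ↥(c i ⊓ N), g x = f x)
    (f : P →ₗ.[S] M) : ∃ g : P →ₗ[S] M, ∀ x : f.domain, g x = f x := by
  obtain ⟨N, hN⟩ : ∃ N, f.domain = N := ⟨_, rfl⟩
  induction N using WellFoundedGT.induction generalizing f with
  | ind N ih =>
  subst hN
  by_cases htop : f.domain = ⊤
  · exact ⟨f.toFun ∘ₗ LinearMap.id.codRestrict _ fun x ↦ htop ▸ Submodule.mem_top, fun x ↦ rfl⟩
  obtain ⟨i, hi⟩ : ∃ i, ¬ c i ≤ f.domain := by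
    by_contra! h
    exact htop (eq_top_iff.mpr (hc ▸ iSup_le h))
  obtain ⟨g, hg⟩ := hext i f.domain hi (f.toFun ∘ₗ Submodule.inclusion inf_le_right)
  let g' : P →ₗ.[S] M := ⟨c i, g.domRestrict (c i)⟩
  have hfg (x : f.domain) (y : g'.domain) (hxy : (x : P) = y) : f x = g' y := by
    obtain ⟨x, hx⟩ := x
    obtain ⟨y, hy⟩ := y
    obtain rfl : x = y := hxy
    exact (hg ⟨x, hy, hx⟩).symm
  have hlt : f.domain < (f.sup g' hfg).domain := left_lt_sup.mpr hi
  obtain ⟨G, hG⟩ := ih _ hlt (f.sup g' hfg) rfl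
  have hle := LinearPMap.left_le_sup f g' hfg
  exact ⟨G, fun x ↦ (hG ⟨x, hle.1 x.2⟩).trans (hle.2 rfl).symm⟩

variable {R : Type u} [Ring R] {M : Type v} [AddCommGroup M] [Module Rᵐᵒᵖ M]

theorem injective_of_exists_extension
    (h : ∀ f : R →ₗ.[Rᵐᵒᵖ] M, ∃ g : R →ₗ[Rᵐᵒᵖ] M, ∀ x : f.domain, g x = f x) :
    Module.Injective Rᵐᵒᵖ M := by
  refine Module.Baer.injective fun I f ↦ ?_
  let φ := rightRegularEquiv R
  obtain ⟨g, hg⟩ := h ⟨Submodule.comap φ.toLinearMap I, f ∘ₗ φ.toLinearMap.restrict fun _ hx ↦ hx⟩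
  exact ⟨g ∘ₗ φ.symm.toLinearMap, fun x hx ↦ hg ⟨φ.symm x, hx⟩⟩

theorem IsMininjective.injective_of_rightSerial [IsArtinianRing Rᵐᵒᵖ] (hser : RightSerial R)
    (hsq : JacobsonSquareZero R) (hM : IsMininjective R M) : Module.Injective Rᵐᵒᵖ M := by
  have hJ : ∀ x ∈ Ring.jacobson Rᵐᵒᵖ, ∀ y ∈ Ring.jacobson Rᵐᵒᵖ, x * y = 0 := by
    simp_rw [op_surjective.forall, op_mem_ring_jacobson_iff, ← mem_jacobson_bot_iff]
    exact fun x hx y hy ↦ congrArg op (hsq y hy x hx)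
  have : IsNoetherian Rᵐᵒᵖ R := (rightRegularEquiv R).isNoetherian_iff.mpr inferInstance
  have : IsSemisimpleRing (Rᵐᵒᵖ ⧸ Ring.jacobson Rᵐᵒᵖ) := IsSemiprimaryRing.isSemisimpleRing
  obtain ⟨n, c, hc, hchain⟩ := hser
  refine injective_of_exists_extension
    (exists_extension_of_iSup_eq_top hc.submodule_iSup_eq_top fun i N hN f ↦ ?_)
  have := isSemisimpleModule_jacobson_of_mul_eq_zero (M := c i) hJ
  rcases eq_bot_or_isAtom_of_lt (hchain i) (inf_lt_left.mpr hN) with hbot | hatom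
  · have := Submodule.subsingleton_iff_eq_bot.mpr hbot
    exact ⟨0, fun x ↦ by simp [Subsingleton.elim x 0]⟩
  · exact hM _ hatom f

end Extension

/-- If every minimal right ideal of `R` is almost injective, then every
mininjective right `R`-module is injective iff `R` is a right Artinian serial ring with
`J(R)² = 0`. -/
theorem mininjective_injective_iff_artinian_serial (R : Type u) [Ring R]
    (hmin : ∀ I : Submodule Rᵐᵒᵖ R, IsAtom I → IsAlmostInjective.{u, u, u} R ↥I) :
    (∀ (M : Type u) [AddCommGroup M] [Module Rᵐᵒᵖ M],
        IsMininjective R M → Module.Injective Rᵐᵒᵖ M) ↔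
      (IsArtinian Rᵐᵒᵖ R ∧ RightSerial R ∧ LeftSerial R ∧ JacobsonSquareZero R) := by
  refine ⟨fun hinj ↦ ?_, fun ⟨hart, hser, _, hsq⟩ M _ _ hM ↦ ?_⟩
  · have : IsArtinianRing Rᵐᵒᵖ := isArtinianRing_op_of_mininjective_injective hinj
    have hart : IsArtinian Rᵐᵒᵖ R := (rightRegularEquiv R).isArtinian_iff.mpr this
    have : IsNoetherian Rᵐᵒᵖ R := (rightRegularEquiv R).isNoetherian_iff.mpr inferInstance
    have hR := rightAlmostVRing_of_mininjective_injective hinj hmin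
    obtain ⟨n, e, he, hlocal⟩ := exists_completeOrthogonalIdempotents_of_isArtinianRing_op (S := R)
    exact ⟨hart, rightSerial_of_completeOrthogonalIdempotents hR he hlocal,
      leftSerial_of_completeOrthogonalIdempotents hR he hlocal,
      jacobsonSquareZero_of_completeOrthogonalIdempotents hR he hlocal⟩
  · have : IsArtinianRing Rᵐᵒᵖ := (rightRegularEquiv R).isArtinian_iff.mp hart
    exact hM.injective_of_rightSerial hser hsq
end

section
/- Let R be a ring. The following statements are equivalent: (1) R is quasi-Frobenius; (2) every mininjective right R-module is projective; (3) every min-flat left R-module is injective. -/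
universe u v w v'

open MulOpposite

section MinFlat
variable (R : Type u) [Ring R] (M : Type v) [AddCommGroup M] [Module R M]

/-- The balancing relations inside `I ⊗_ℤ M` defining the tensor product `I ⊗_R M`
of the right ideal `I` with the left module `M` over the (possibly noncommutative)
ring `R`. -/
def minflatBalance (I : Submodule Rᵐᵒᵖ R) : Submodule ℤ (TensorProduct ℤ ↥I M) :=
  Submodule.span ℤ {t | ∃ (x : ↥I) (r : R) (m : M),
    t = (MulOpposite.op r • x) ⊗ₜ[ℤ] m - x ⊗ₜ[ℤ] (r • m)}

/-- The additive map `I ⊗_ℤ M → M` sending `x ⊗ m` to `x • m`. -/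
noncomputable def minflatAux (I : Submodule Rᵐᵒᵖ R) : TensorProduct ℤ ↥I M →+ M :=
  TensorProduct.liftAddHom
    { toFun := fun x => DistribMulAction.toAddMonoidHom M (x : R)
      map_zero' := by ext m; simp
      map_add' := fun x y => by ext m; exact add_smul (x : R) (y : R) m }
    (fun n x m => by
      show ((n • x : ↥I) : R) • m = (x : R) • (n • m)
      have hcoe : ((n • x : ↥I) : R) = n • (x : R) := rfl
      rw [hcoe, zsmul_eq_mul, mul_smul, Int.cast_smul_eq_zsmul, smul_comm])

lemma minflatBalance_le_ker (I : Submodule Rᵐᵒᵖ R) :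
    minflatBalance R M I ≤ LinearMap.ker (minflatAux R M I).toIntLinearMap := by
  rw [minflatBalance, Submodule.span_le]
  rintro t ⟨x, r, m, rfl⟩
  simp only [SetLike.mem_coe, LinearMap.mem_ker, AddMonoidHom.coe_toIntLinearMap, map_sub]
  have h1 : minflatAux R M I ((MulOpposite.op r • x) ⊗ₜ[ℤ] m)
      = ((MulOpposite.op r • x : ↥I) : R) • m := by
    simp [minflatAux, TensorProduct.liftAddHom_tmul]
  have h2 : minflatAux R M I (x ⊗ₜ[ℤ] (r • m)) = (x : R) • (r • m) := by
    simp [minflatAux, TensorProduct.liftAddHom_tmul]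
  rw [h1, h2, Submodule.coe_smul, MulOpposite.smul_eq_mul_unop, MulOpposite.unop_op, mul_smul,
    sub_self]

/-- A left `R`-module `M` is min-flat if for every minimal right ideal `I` of `R`
the canonical map `I ⊗_R M → M` is injective. -/
def IsMinFlat : Prop :=
  ∀ I : Submodule Rᵐᵒᵖ R, IsAtom I →
    Function.Injective
      (Submodule.liftQ (minflatBalance R M I) (minflatAux R M I).toIntLinearMap
        (minflatBalance_le_ker R M I))

end MinFlat

/-!
If the injective modules are projective, every module embeds in a free one; counting maps into a
finite power of `R` shows that `R` is noetherian, and matching the socles with the tops of the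
indecomposable projective-injective modules, of which there are finitely many, shows that `R` is
self-injective (Faith and Walker). A left self-injective ring with the ascending chain condition on
left annihilators is semiprimary, hence embeds every simple left module by the same matching read
backwards. Then every left ideal is the annihilator of a set, so `R` is left noetherian, and every
map from a finitely generated right ideal to `R` is a left multiplication, so `R` is also right
self-injective.

Over such a ring, a mininjective module is a direct sum of projective-injective hulls of simple
modules. The character module turns a min-flat left module into a mininjective right one, and a
left module with projective character module is injective because its solvability conditions for
finite systems of linear equations are detected by characters. Conversely the free module
`R^(ℕ)` is always min-flat, and its injectivity forces the chain condition on left annihilators.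
-/

section InjectiveModules

variable {R : Type u} [Ring R] {Q : Type u} [AddCommGroup Q] [Module R Q]

theorem exists_comp_eq_of_ker_le {A B : Type*} [AddCommGroup A] [Module R A] [AddCommGroup B]
    [Module R B] [Module.Injective R Q] (f : A →ₗ[R] B) (g : A →ₗ[R] Q)
    (h : LinearMap.ker f ≤ LinearMap.ker g) : ∃ k : B →ₗ[R] Q, k ∘ₗ f = g := by
  obtain ⟨k, hk⟩ := Module.Injective.extension_property R Q _ _ ((LinearMap.ker f).liftQ f le_rfl)
    (LinearMap.ker_eq_bot.mp (Submodule.ker_liftQ_eq_bot _ _ _ le_rfl))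
    ((LinearMap.ker f).liftQ g h)
  refine ⟨k, LinearMap.ext fun a => ?_⟩
  simpa using LinearMap.congr_fun hk (Submodule.Quotient.mk a)

theorem injective_of_leftInverse {E : Type u} [AddCommGroup E] [Module R E] [Module.Injective R Q]
    (i : E →ₗ[R] Q) (p : Q →ₗ[R] E) (hpi : p ∘ₗ i = LinearMap.id) : Module.Injective R E := by
  refine ⟨fun X Y _ _ _ _ f hf g => ?_⟩
  obtain ⟨k, hk⟩ := Module.Injective.extension_property R Q X Y f hf (i ∘ₗ g)
  refine ⟨p ∘ₗ k, fun x => ?_⟩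
  rw [LinearMap.comp_apply, ← LinearMap.comp_apply k f, hk, ← LinearMap.comp_apply,
    ← LinearMap.comp_assoc, hpi, LinearMap.id_comp]

variable (R Q) in
theorem exists_injective_linearMap_to_injective :
    ∃ (E : Type u) (_ : AddCommGroup E) (_ : Module R E),
      Module.Injective R E ∧ ∃ i : Q →ₗ[R] E, Function.Injective i := by
  let E : ModuleCat R := CategoryTheory.Injective.under (ModuleCat.of R Q)
  let i : ModuleCat.of R Q ⟶ E := CategoryTheory.Injective.ι _
  have : CategoryTheory.Injective E := CategoryTheory.Injective.injective_under _
  exact ⟨E, inferInstance, inferInstance, Module.injective_module_of_injective_object R E,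
    i.hom, (ModuleCat.mono_iff_injective i).mp (CategoryTheory.Injective.ι_mono _)⟩

end InjectiveModules

section Hull

variable {R : Type u} [Ring R] {Q : Type u} [AddCommGroup Q] [Module R Q]

theorem exists_maximal_notMem {t : Q} (ht : t ≠ 0) :
    ∃ K : Submodule R Q, Maximal (t ∉ ·) K := by
  obtain ⟨K, -, hK⟩ := zorn_le_nonempty₀ {K : Submodule R Q | t ∉ K}
    (fun c hc hchain N hN => ⟨sSup c, fun ht => by
      obtain ⟨L, hL, htL⟩ := (Submodule.mem_sSup_of_directed ⟨N, hN⟩ hchain.directedOn).mp ht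
      exact hc hL htL, fun _ => le_sSup⟩) ⊥ (by simpa using ht)
  exact ⟨K, hK⟩

/-- `E` is an essential extension of its simple submodule `T`: every nonzero submodule of `E`,
or equivalently every nonzero cyclic one, contains `T`. -/
structure IsEssentialOverSimple (T E : Submodule R Q) : Prop where
  isAtom : IsAtom T
  le : T ≤ E
  le_span : ∀ x ∈ E, x ≠ 0 → T ≤ R ∙ x

theorem exists_maximal_isEssentialOverSimple {T : Submodule R Q} (hT : IsAtom T) :
    ∃ E, Maximal (IsEssentialOverSimple T) E := by
  have hTT : IsEssentialOverSimple T T := ⟨hT, le_rfl, fun x hx hx0 =>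
    ((hT.le_iff.mp ((Submodule.span_singleton_le_iff_mem x T).mpr hx)).resolve_left
      (by simpa using hx0)).ge⟩
  obtain ⟨E, -, hE⟩ := zorn_le_nonempty₀ {E | IsEssentialOverSimple T E}
    (fun c hc hchain N hN => ⟨sSup c, ⟨hT, (hc hN).le.trans (le_sSup hN), fun x hx hx0 => by
      obtain ⟨L, hL, hxL⟩ := (Submodule.mem_sSup_of_directed ⟨N, hN⟩ hchain.directedOn).mp hx
      exact (hc hL).le_span x hxL hx0⟩, fun _ => le_sSup⟩) T hTT
  exact ⟨E, hE⟩

/-- Extend the inclusion of `E` to `h : Q → Q` killing a submodule `K` that is maximal among those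
avoiding a generator of `T`. Then `h` has range essential over `T`, so by maximality the range
is `E`. -/
theorem exists_retraction_of_maximal_isEssentialOverSimple [Module.Injective R Q]
    {T E : Submodule R Q} (hE : Maximal (IsEssentialOverSimple T) E) :
    ∃ p : Q →ₗ[R] E, p ∘ₗ E.subtype = LinearMap.id := by
  obtain ⟨hT, hTE, hspan⟩ := hE.prop
  obtain ⟨t, htT, ht0⟩ := Submodule.exists_mem_ne_zero_of_ne_bot hT.1
  obtain ⟨K, hK⟩ := exists_maximal_notMem (R := R) ht0
  obtain ⟨g, hg⟩ := Module.Injective.extension_property R Q E (Q ⧸ K) (K.mkQ ∘ₗ E.subtype)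
    ((injective_iff_map_eq_zero _).mpr fun x hx => by
      by_contra hx0
      refine hK.prop ((Submodule.span_singleton_le_iff_mem (x : Q) K).mpr (by simpa using hx) ?_)
      exact hspan x x.2 (by simpa using hx0) htT) E.subtype
  have hid : ∀ x ∈ E, (g ∘ₗ K.mkQ) x = x := fun x hx => LinearMap.congr_fun hg ⟨x, hx⟩
  have hker : ∀ x ∈ K, (g ∘ₗ K.mkQ) x = 0 := fun x hx => by
    simp [(Submodule.Quotient.mk_eq_zero K).mpr hx]
  set h : Q →ₗ[R] Q := g ∘ₗ K.mkQ
  have hle : E ≤ LinearMap.range h := fun x hx => ⟨x, hid x hx⟩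
  have hrange : LinearMap.range h ≤ E := by
    refine hE.le_of_ge ⟨hT, hTE.trans hle, ?_⟩ hle
    rintro _ ⟨x, rfl⟩ hx0
    have hxK : x ∉ K := fun hx => hx0 (hker x hx)
    have htx : t ∈ K ⊔ R ∙ x := by
      by_contra htx
      exact hxK (hK.le_of_ge htx le_sup_left
        (Submodule.mem_sup_right (Submodule.mem_span_singleton_self x)))
    obtain ⟨k, hk, _, hy, rfl⟩ := Submodule.mem_sup.mp htx
    obtain ⟨r, rfl⟩ := Submodule.mem_span_singleton.mp hy
    have ht : r • h x = k + r • x := by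
      rw [← hid _ (hTE htT), map_add, hker k hk, zero_add, map_smul]
    rw [← (hT.le_iff.mp ((Submodule.span_singleton_le_iff_mem _ T).mpr htT)).resolve_left
      (by simpa using ht0), Submodule.span_singleton_le_iff_mem]
    exact Submodule.mem_span_singleton.mpr ⟨r, ht⟩
  exact ⟨h.codRestrict E fun x => hrange ⟨x, rfl⟩, LinearMap.ext fun x => Subtype.ext (hid x x.2)⟩

end Hull

section ProjInj

variable {R : Type u} [Ring R]

theorem exists_linearMap_apply_ne_zero {P : Type*} [AddCommGroup P] [Module R P]
    [Module.Projective R P] {x : P} (hx : x ≠ 0) : ∃ f : P →ₗ[R] R, f x ≠ 0 := by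
  obtain ⟨s, hs⟩ := (Module.projective_def' (R := R) (P := P)).mp inferInstance
  have hsx : s x ≠ 0 := fun h => hx (by simpa [h] using (LinearMap.congr_fun hs x).symm)
  obtain ⟨i, hi⟩ := Finsupp.ne_iff.mp hsx
  exact ⟨Finsupp.lapply i ∘ₗ s, hi⟩

theorem exists_injective_of_isSimpleModule {U P : Type*} [AddCommGroup U] [Module R U]
    [IsSimpleModule R U] [AddCommGroup P] [Module R P] [Module.Projective R P] {i : U →ₗ[R] P}
    (hi : Function.Injective i) : ∃ j : P →ₗ[R] R, Function.Injective (j ∘ₗ i) := by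
  have := IsSimpleModule.nontrivial R U
  obtain ⟨u, hu⟩ := exists_ne (0 : U)
  obtain ⟨j, hj⟩ := exists_linearMap_apply_ne_zero (R := R) ((map_ne_zero_iff i hi).mpr hu)
  exact ⟨j, LinearMap.injective_of_ne_zero fun h => hj (LinearMap.congr_fun h u)⟩

/-- A module is uniform if any two nonzero submodules meet nontrivially. -/
def IsUniformModule (R : Type*) [Ring R] (E : Type*) [AddCommGroup E] [Module R E] : Prop :=
  ∀ N N' : Submodule R E, Disjoint N N' → N = ⊥ ∨ N' = ⊥

section Uniform

variable {E U M : Type*} [AddCommGroup E] [Module R E] [AddCommGroup U] [Module R U] [Nontrivial U]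
  [AddCommGroup M] [Module R M]

theorem IsUniformModule.injective_of_comp_injective (hE : IsUniformModule R E) {i : U →ₗ[R] E}
    {f : E →ₗ[R] M} (h : Function.Injective (f ∘ₗ i)) : Function.Injective f := by
  have hdisj : Disjoint (LinearMap.range i) (LinearMap.ker f) := by
    rw [Submodule.disjoint_def]
    rintro _ ⟨u, rfl⟩ hu
    rw [h (a₁ := u) (a₂ := 0) (by simpa using hu), map_zero]
  refine LinearMap.ker_eq_bot.mp ((hE _ _ hdisj).resolve_left fun hi => ?_)
  obtain ⟨u, hu⟩ := exists_ne (0 : U)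
  exact hu (h (by simp [LinearMap.range_eq_bot.mp hi]))

theorem IsUniformModule.surjective_of_comp_eq_id (hE : IsUniformModule R E) {i : U →ₗ[R] E}
    {p : E →ₗ[R] U} (h : p ∘ₗ i = LinearMap.id) : Function.Surjective i := by
  have hp : Function.Injective p :=
    hE.injective_of_comp_injective (i := i) (h ▸ Function.injective_id)
  exact fun x => ⟨p x, hp (LinearMap.congr_fun h (p x))⟩

end Uniform

theorem IsUniformModule.nonempty_linearEquiv {E U U' : Type*} [AddCommGroup E] [Module R E]
    [AddCommGroup U] [Module R U] [IsSimpleModule R U] [AddCommGroup U'] [Module R U']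
    [IsSimpleModule R U'] (hE : IsUniformModule R E) {i : U →ₗ[R] E} (hi : Function.Injective i)
    {i' : U' →ₗ[R] E} (hi' : Function.Injective i') : Nonempty (U ≃ₗ[R] U') := by
  let e := LinearEquiv.ofInjective i hi
  let e' := LinearEquiv.ofInjective i' hi'
  have h : IsAtom (LinearMap.range i) := isSimpleModule_iff_isAtom.mp (.congr e.symm)
  have h' : IsAtom (LinearMap.range i') := isSimpleModule_iff_isAtom.mp (.congr e'.symm)
  have heq : LinearMap.range i = LinearMap.range i' := by
    by_contra hne
    exact (hE _ _ (h.disjoint_of_ne h' hne)).elim h.1 h'.1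
  exact ⟨e.trans ((LinearEquiv.ofEq _ _ heq).trans e'.symm)⟩

/-- An indecomposable projective-injective module. For a nonzero injective module, being
indecomposable is the same as being uniform, which is the form used here. -/
structure IsIndecomposableProjInj (R : Type u) [Ring R] (E : Type u) [AddCommGroup E]
    [Module R E] : Prop where
  nontrivial : Nontrivial E
  injective : Module.Injective R E
  projective : Module.Projective R E
  isUniform : IsUniformModule R E

namespace IsIndecomposableProjInj

variable {E E' : Type u} [AddCommGroup E] [Module R E] [AddCommGroup E'] [Module R E']

theorem surjective_of_injective (hE : IsIndecomposableProjInj R E)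
    (hE' : IsIndecomposableProjInj R E') {f : E →ₗ[R] E'} (hf : Function.Injective f) :
    Function.Surjective f := by
  have := hE.nontrivial
  have := hE.injective
  obtain ⟨p, hp⟩ := Module.Injective.extension_property R E E E' f hf LinearMap.id
  exact hE'.isUniform.surjective_of_comp_eq_id hp

/-- The two components of a section of `N × N' → E` have disjoint kernels, so one of them is
injective, hence bijective. -/
theorem eq_top_or_eq_top_of_sup_eq_top (hE : IsIndecomposableProjInj R E) {N N' : Submodule R E}
    (h : N ⊔ N' = ⊤) : N = ⊤ ∨ N' = ⊤ := by
  have := hE.projective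
  have hsurj : Function.Surjective (N.subtype.coprod N'.subtype) := by
    rw [← LinearMap.range_eq_top, LinearMap.range_coprod, Submodule.range_subtype,
      Submodule.range_subtype, h]
  obtain ⟨s, hs⟩ := Module.projective_lifting_property _ LinearMap.id hsurj
  have hadd : ∀ x, ((s x).1 : E) + (s x).2 = x := fun x => by simpa using LinearMap.congr_fun hs x
  let a : E →ₗ[R] E := N.subtype ∘ₗ LinearMap.fst R N N' ∘ₗ s
  let b : E →ₗ[R] E := N'.subtype ∘ₗ LinearMap.snd R N N' ∘ₗ s
  have hdisj : Disjoint (LinearMap.ker a) (LinearMap.ker b) := by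
    rw [Submodule.disjoint_def]
    intro x (hx : ((s x).1 : E) = 0) (hx' : ((s x).2 : E) = 0)
    rw [← hadd x, hx, hx', add_zero]
  refine (hE.isUniform _ _ hdisj).imp (fun hker => ?_) fun hker => ?_
  · refine Submodule.eq_top_iff'.mpr fun x => ?_
    obtain ⟨y, rfl⟩ := hE.surjective_of_injective hE (LinearMap.ker_eq_bot.mp hker) x
    exact (s y).1.2
  · refine Submodule.eq_top_iff'.mpr fun x => ?_
    obtain ⟨y, rfl⟩ := hE.surjective_of_injective hE (LinearMap.ker_eq_bot.mp hker) x
    exact (s y).2.2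

theorem nonempty_linearEquiv_of_injective {U : Type*} [AddCommGroup U] [Module R U] [Nontrivial U]
    (hE : IsIndecomposableProjInj R E) (hE' : IsIndecomposableProjInj R E') {i : U →ₗ[R] E}
    (hi : Function.Injective i) {i' : U →ₗ[R] E'} (hi' : Function.Injective i') :
    Nonempty (E ≃ₗ[R] E') := by
  have := hE'.injective
  obtain ⟨f, hf⟩ := Module.Injective.extension_property R E' U E i hi i'
  have hinj := hE.isUniform.injective_of_comp_injective (i := i) (f := f) (hf ▸ hi')
  exact ⟨.ofBijective f ⟨hinj, hE.surjective_of_injective hE' hinj⟩⟩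

variable {U U' : Type*} [AddCommGroup U] [Module R U] [IsSimpleModule R U]
  [AddCommGroup U'] [Module R U'] [IsSimpleModule R U']

theorem nonempty_linearEquiv_of_surjective (hE : IsIndecomposableProjInj R E)
    (hE' : IsIndecomposableProjInj R E') {p : E →ₗ[R] U} (hp : Function.Surjective p)
    {p' : E' →ₗ[R] U} (hp' : Function.Surjective p') : Nonempty (E ≃ₗ[R] E') := by
  have := hE.projective
  have := hE'.projective
  have := hE'.nontrivial
  obtain ⟨f, hf⟩ := Module.projective_lifting_property p' p hp'
  have hsup : LinearMap.range f ⊔ LinearMap.ker p' = ⊤ := Submodule.eq_top_iff'.mpr fun y => by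
    obtain ⟨x, hx⟩ := hp (p' y)
    refine Submodule.mem_sup.mpr ⟨f x, ⟨x, rfl⟩, y - f x, ?_, by abel⟩
    rw [LinearMap.mem_ker, map_sub, ← hx, ← hf, LinearMap.comp_apply, sub_self]
  have hsurj : LinearMap.range f = ⊤ := (hE'.eq_top_or_eq_top_of_sup_eq_top hsup).resolve_right
    (LinearMap.isCoatom_ker_of_surjective hp').1
  obtain ⟨s, hs⟩ := f.exists_rightInverse_of_surjective hsurj
  have hbij : Function.Bijective s :=
    ⟨Function.LeftInverse.injective (LinearMap.congr_fun hs),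
      hE.isUniform.surjective_of_comp_eq_id hs⟩
  exact ⟨(LinearEquiv.ofBijective s hbij).symm⟩

theorem nonempty_linearEquiv_top (hE : IsIndecomposableProjInj R E) {p : E →ₗ[R] U}
    (hp : Function.Surjective p) {p' : E →ₗ[R] U'} (hp' : Function.Surjective p') :
    Nonempty (U ≃ₗ[R] U') := by
  have hker := LinearMap.isCoatom_ker_of_surjective hp
  have hker' := LinearMap.isCoatom_ker_of_surjective hp'
  have heq : LinearMap.ker p = LinearMap.ker p' := by
    by_contra hne
    exact (hE.eq_top_or_eq_top_of_sup_eq_top (hker.sup_eq_top_of_ne hker' hne)).elim hker.1 hker'.1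
  exact ⟨(p.quotKerEquivOfSurjective hp).symm.trans
    ((Submodule.quotEquivOfEq _ _ heq).trans (p'.quotKerEquivOfSurjective hp'))⟩

theorem exists_retraction_of_injective (hE : IsIndecomposableProjInj R E) {i : U →ₗ[R] E}
    (hi : Function.Injective i) :
    ∃ (j : E →ₗ[R] R) (p : R →ₗ[R] E), p ∘ₗ j = LinearMap.id := by
  have := hE.injective
  have := hE.projective
  have := IsSimpleModule.nontrivial R U
  obtain ⟨j, hj⟩ := exists_injective_of_isSimpleModule hi
  obtain ⟨p, hp⟩ := Module.Injective.extension_property R E E R j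
    (hE.isUniform.injective_of_comp_injective hj) LinearMap.id
  exact ⟨j, p, hp⟩

end IsIndecomposableProjInj

theorem IsEssentialOverSimple.isUniformModule {Q : Type u} [AddCommGroup Q] [Module R Q]
    {T E : Submodule R Q} (h : IsEssentialOverSimple T E) : IsUniformModule R E := by
  intro N N' hdisj
  by_contra! hne
  obtain ⟨x, hxN, hx0⟩ := Submodule.exists_mem_ne_zero_of_ne_bot hne.1
  obtain ⟨y, hyN, hy0⟩ := Submodule.exists_mem_ne_zero_of_ne_bot hne.2
  obtain ⟨t, htT, ht0⟩ := Submodule.exists_mem_ne_zero_of_ne_bot h.isAtom.1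
  obtain ⟨r, hr⟩ := Submodule.mem_span_singleton.mp (h.le_span x x.2 (by simpa using hx0) htT)
  obtain ⟨s, hs⟩ := Submodule.mem_span_singleton.mp (h.le_span y y.2 (by simpa using hy0) htT)
  have hrs : r • x = s • y := Subtype.ext (hr.trans hs.symm)
  have hzero := Submodule.disjoint_def.mp hdisj (r • x) (N.smul_mem r hxN)
    (hrs ▸ N'.smul_mem s hyN)
  exact ht0 (hr ▸ congrArg Subtype.val hzero)

theorem exists_isIndecomposableProjInj_of_isAtom {Q : Type u} [AddCommGroup Q] [Module R Q]
    [Module.Injective R Q] [Module.Projective R Q] {T : Submodule R Q} (hT : IsAtom T) :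
    ∃ E : Submodule R Q, T ≤ E ∧ IsIndecomposableProjInj R E ∧
      ∃ p : Q →ₗ[R] E, p ∘ₗ E.subtype = LinearMap.id := by
  obtain ⟨E, hE⟩ := exists_maximal_isEssentialOverSimple hT
  obtain ⟨p, hp⟩ := exists_retraction_of_maximal_isEssentialOverSimple hE
  refine ⟨E, hE.prop.le, ⟨?_, injective_of_leftInverse E.subtype p hp,
    .of_split E.subtype p hp, hE.prop.isUniformModule⟩, p, hp⟩
  exact (Submodule.nontrivial_iff_ne_bot).mpr (ne_bot_of_le_ne_bot hT.1 hE.prop.le)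

end ProjInj

section SimpleClasses

theorem rightTotal_of_leftUnique_of_leftTotal {α : Type*} [Finite α] {r : α → α → Prop}
    (hunique : Relator.LeftUnique r) (htotal : Relator.LeftTotal r) : Relator.RightTotal r := by
  choose f hf using htotal
  have hinj : Function.Injective f := fun a b hab => hunique (hf a) (hab ▸ hf b)
  intro y
  obtain ⟨x, rfl⟩ := Finite.injective_iff_surjective.mp hinj y
  exact ⟨x, hf x⟩

theorem leftTotal_of_rightUnique_of_rightTotal {α : Type*} [Finite α] {r : α → α → Prop}
    (hunique : Relator.RightUnique r) (htotal : Relator.RightTotal r) : Relator.LeftTotal r :=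
  rightTotal_of_leftUnique_of_leftTotal (r := flip r) (fun _ _ _ h h' => hunique h h') htotal

variable (R : Type u) [Ring R]

/-- Maximal left ideals are identified when the corresponding simple modules are isomorphic. -/
def simpleSetoid : Setoid {m : Ideal R // m.IsMaximal} where
  r m m' := Nonempty ((R ⧸ m.1) ≃ₗ[R] (R ⧸ m'.1))
  iseqv := ⟨fun _ => ⟨LinearEquiv.refl R _⟩, fun ⟨e⟩ => ⟨e.symm⟩, fun ⟨e⟩ ⟨f⟩ => ⟨e.trans f⟩⟩

/-- The isomorphism classes of simple left modules. -/
def SimpleClass : Type u := Quotient (simpleSetoid R)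

variable {R}

namespace SimpleClass

/-- A simple module in the given isomorphism class. -/
abbrev Rep (x : SimpleClass R) : Type u := R ⧸ (Quotient.out x).1

instance (x : SimpleClass R) : IsSimpleModule R x.Rep :=
  isSimpleModule_iff_isCoatom.mpr (Quotient.out x).2.out

theorem eq_of_linearEquiv {x y : SimpleClass R} (h : Nonempty (x.Rep ≃ₗ[R] y.Rep)) : x = y :=
  Quotient.out_equiv_out (s := simpleSetoid R).mp h

theorem exists_rep_linearEquiv (U : Type*) [AddCommGroup U] [Module R U] [IsSimpleModule R U] :
    ∃ x : SimpleClass R, Nonempty (x.Rep ≃ₗ[R] U) := by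
  obtain ⟨m, hm, ⟨e⟩⟩ := (isSimpleModule_iff_quot_maximal (R := R) (M := U)).mp inferInstance
  obtain ⟨f⟩ := Quotient.mk_out (s := simpleSetoid R) ⟨m, hm⟩
  exact ⟨Quotient.mk _ ⟨m, hm⟩, ⟨f.trans e.symm⟩⟩

theorem finite_of_forall_exists_injective (N : Type*) [AddCommGroup N] [Module R N]
    [IsNoetherian R N] (h : ∀ x : SimpleClass R, ∃ i : x.Rep →ₗ[R] N, Function.Injective i) :
    Finite (SimpleClass R) := by
  choose i hi using h
  let e (x : SimpleClass R) : x.Rep ≃ₗ[R] LinearMap.range (i x) := .ofInjective (i x) (hi x)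
  have hsimple (x : SimpleClass R) : IsSimpleModule R (LinearMap.range (i x)) := .congr (e x).symm
  refine Finite.of_injective (fun x => (⟨isotypicComponent R N (LinearMap.range (i x)),
    _, hsimple x, rfl⟩ : isotypicComponents R N)) fun x y hxy => ?_
  have hle : LinearMap.range (i x) ≤ isotypicComponent R N (LinearMap.range (i y)) :=
    (Submodule.le_isotypicComponent _).trans (congrArg Subtype.val hxy).le
  obtain ⟨f⟩ := isIsotypicOfType_submodule_iff.mp (.isotypicComponent R N _) _ hle
  exact eq_of_linearEquiv ⟨(e x).trans (f.trans (e y).symm)⟩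

/-- Some indecomposable projective-injective module has socle `x` and top `y`. -/
def IsSocleTop (x y : SimpleClass R) : Prop :=
  ∃ (E : Type u) (_ : AddCommGroup E) (_ : Module R E), IsIndecomposableProjInj R E ∧
    (∃ i : x.Rep →ₗ[R] E, Function.Injective i) ∧ ∃ p : E →ₗ[R] y.Rep, Function.Surjective p

theorem leftUnique_isSocleTop : Relator.LeftUnique (IsSocleTop (R := R)) := by
  rintro x y z ⟨E, _, _, hE, ⟨i, hi⟩, p, hp⟩ ⟨E', _, _, hE', ⟨i', hi'⟩, p', hp'⟩
  obtain ⟨e⟩ := hE.nonempty_linearEquiv_of_surjective hE' hp hp'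
  exact eq_of_linearEquiv
    (hE'.isUniform.nonempty_linearEquiv (i := e.toLinearMap ∘ₗ i) (e.injective.comp hi) hi')

theorem rightUnique_isSocleTop : Relator.RightUnique (IsSocleTop (R := R)) := by
  rintro x y z ⟨E, _, _, hE, ⟨i, hi⟩, p, hp⟩ ⟨E', _, _, hE', ⟨i', hi'⟩, p', hp'⟩
  have := IsSimpleModule.nontrivial R x.Rep
  obtain ⟨e⟩ := hE.nonempty_linearEquiv_of_injective hE' hi hi'
  exact eq_of_linearEquiv
    (hE.nonempty_linearEquiv_top hp (p' := p' ∘ₗ e.toLinearMap) (hp'.comp e.surjective))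

end SimpleClass

end SimpleClasses

section FreeEmbeddings

/-- Every left module embeds in a free module. -/
def EmbedsInFree (R : Type u) [Ring R] : Prop :=
  ∀ (M : Type u) [AddCommGroup M] [Module R M],
    ∃ (ι : Type u) (i : M →ₗ[R] ι →₀ R), Function.Injective i

variable {R : Type u} [Ring R]

/-- Otherwise `s (w 0)` would have infinite support: all `j k` would belong to it. -/
theorem exists_mul_apply_eq_zero {M ι : Type*} [AddCommGroup M] [Module R M] (s : M →ₗ[R] ι →₀ R)
    {v w : ℕ → M} {t : ℕ → R} {j : ℕ → ι} (hw : ∀ k, w k = v k + w (k + 1))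
    (ht : ∀ k, t k • w (k + 1) = 0) (hs : ∀ k l, k < l → s (v k) (j l) = 0) :
    ∃ k, t k * s (v k) (j k) = 0 := by
  by_contra! hne
  have hj : Function.Injective j := .of_lt_imp_ne fun k l hkl h =>
    right_ne_zero_of_mul (hne k) (h ▸ hs k l hkl)
  have hshift : ∀ k, ∀ l ≤ k, s (w l) (j k) = s (w 0) (j k) := by
    intro k l
    induction l with
    | zero => exact fun _ => rfl
    | succ l ih =>
      intro hl
      rw [← ih (Nat.le_of_succ_le hl), hw l, map_add, Finsupp.add_apply, hs l k hl, zero_add]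
  have hsupp : ∀ k, j k ∈ (s (w 0)).support := by
    refine fun k => Finsupp.mem_support_iff.mpr fun hk => hne k ?_
    have hsmul : t k • w k = t k • v k := by rw [hw, smul_add, ht, add_zero]
    rw [← smul_eq_mul, ← Finsupp.smul_apply, ← map_smul, ← hsmul, map_smul, Finsupp.smul_apply,
      hshift k k le_rfl, hk, smul_zero]
  exact Set.infinite_range_of_injective hj
    ((s (w 0)).support.finite_toSet.subset (Set.range_subset_iff.mpr hsupp))

theorem exists_mul_single_eq_zero {P ι : Type*} [DecidableEq P] (I : P → Ideal R)
    (s : (∀ p, R ⧸ I p) →ₗ[R] ι →₀ R) (p : ℕ → P) (t : ℕ → R) (j : ℕ → ι)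
    (ht : ∀ k l, k < l → t k ∈ I (p l))
    (hs : ∀ k l, k < l → s (Pi.single (p k) (Submodule.Quotient.mk 1)) (j l) = 0) :
    ∃ k, t k * s (Pi.single (p k) (Submodule.Quotient.mk 1)) (j k) = 0 := by
  classical
  by_contra! hne
  have hp : Function.Injective p := .of_lt_imp_ne fun k l hkl h =>
    right_ne_zero_of_mul (hne l) (h ▸ hs k l hkl)
  let w : ℕ → ∀ p, R ⧸ I p := fun k q =>
    if q ∈ p '' Set.Ici k then Submodule.Quotient.mk 1 else 0
  suffices ∃ k, t k * s (Pi.single (p k) (Submodule.Quotient.mk 1)) (j k) = 0 from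
    this.elim hne
  refine exists_mul_apply_eq_zero s (w := w) (fun k => ?_) (fun k => ?_) hs
  · ext q
    rcases eq_or_ne q (p k) with rfl | hq
    · simp [w, hp.eq_iff]
    · have hiff : q ∈ p '' Set.Ici k ↔ q ∈ p '' Set.Ici (k + 1) := by
        refine exists_congr fun l => and_congr_left fun hl => ?_
        have hkl : k ≠ l := fun hkl => hq (by rw [← hl, hkl])
        simp only [Set.mem_Ici]
        omega
      simp only [w, hiff, Pi.add_apply, Pi.single_eq_of_ne hq, zero_add]
  · ext q
    by_cases hq : q ∈ p '' Set.Ici (k + 1)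
    · obtain ⟨l, hl, rfl⟩ := hq
      rw [Pi.smul_apply, show w (k + 1) (p l) = Submodule.Quotient.mk 1 from
        if_pos (Set.mem_image_of_mem p hl), ← Submodule.Quotient.mk_smul, smul_eq_mul, mul_one]
      exact (Submodule.Quotient.mk_eq_zero _).mpr (ht k l hl)
    · rw [Pi.smul_apply, show w (k + 1) q = 0 from if_neg hq, smul_zero, Pi.zero_apply]

theorem exists_finset_forall_mul_single_eq_zero (T : ℕ →o Ideal R) {Ω ι : Type*}
    [DecidableEq (Ω × ℕ)] (s : (∀ p : Ω × ℕ, R ⧸ T p.2) →ₗ[R] ι →₀ R) :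
    ∃ (n : ℕ) (J : Finset ι), ∀ (ω : Ω) (m : ℕ), ∀ t ∈ T m, ∀ j ∉ J,
      t * s (Pi.single (ω, n) (Submodule.Quotient.mk 1)) j = 0 := by
  classical
  by_contra! hne
  obtain ⟨f, hf, hlt⟩ := exists_seq_of_forall_finset_exists
    (fun x : (Ω × ℕ) × ℕ × R × ι => x.2.2.1 ∈ T x.2.1 ∧
      x.2.2.1 * s (Pi.single x.1 (Submodule.Quotient.mk 1)) x.2.2.2 ≠ 0)
    (fun x y => x.2.1 ≤ y.1.2 ∧ s (Pi.single x.1 (Submodule.Quotient.mk 1)) y.2.2.2 = 0)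
    fun F _ => by
      obtain ⟨ω, m, t, ht, j, hj, htj⟩ := hne (F.sup fun x => x.2.1)
        (F.biUnion fun x => (s (Pi.single x.1 (Submodule.Quotient.mk 1))).support)
      refine ⟨((ω, _), m, t, j), ⟨ht, htj⟩,
        fun x hx => ⟨Finset.le_sup (f := fun x => x.2.1) hx, ?_⟩⟩
      by_contra hxj
      exact hj (Finset.mem_biUnion.mpr ⟨x, hx, Finsupp.mem_support_iff.mpr hxj⟩)
  obtain ⟨k, hk⟩ := exists_mul_single_eq_zero (fun p : Ω × ℕ => T p.2) s
    (fun k => (f k).1) (fun k => (f k).2.2.1) (fun k => (f k).2.2.2)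
    (fun k l hkl => T.mono (hlt k l hkl).1 (hf k).1) fun k l hkl => (hlt k l hkl).2
  exact (hf k).2 hk

/-- If `T` does not stabilize, then for suitable `n` the vectors `s (Pi.single (ω, n) 1)` restricted
to a finite set of coordinates encode all `ω : Set (List R)` injectively. -/
theorem EmbedsInFree.isNoetherianRing (h : EmbedsInFree R) : IsNoetherianRing R := by
  classical
  refine monotone_stabilizes_iff_noetherian.mp fun T => ?_
  obtain ⟨ι, s, hs⟩ := h (∀ p : Set (List R) × ℕ, R ⧸ T p.2)
  obtain ⟨n, J, hJ⟩ := exists_finset_forall_mul_single_eq_zero T s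
  refine ⟨n, fun m hnm => (T.mono hnm).antisymm fun t ht => ?_⟩
  by_contra htn
  let v (ω : Set (List R)) : ∀ p : Set (List R) × ℕ, R ⧸ T p.2 :=
    Pi.single (ω, n) (Submodule.Quotient.mk 1)
  let code (ω : Set (List R)) : List R := J.toList.map (t • s (v ω))
  refine Function.cantor_injective code fun ω ω' hcode => ?_
  have hJ' : ∀ j ∈ J, (t • s (v ω)) j = (t • s (v ω')) j := fun j hj =>
    List.map_inj_left.mp hcode j (Finset.mem_toList.mpr hj)
  have heq : t • v ω = t • v ω' := hs <| by
    ext j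
    rw [map_smul, map_smul]
    by_cases hj : j ∈ J
    · exact hJ' j hj
    · exact (hJ ω m t ht j hj).trans (hJ ω' m t ht j hj).symm
  by_contra hne
  have hzero : t • (Submodule.Quotient.mk 1 : R ⧸ T n) = 0 := by
    simpa [v, Pi.single_eq_of_ne, hne] using congrFun heq (ω, n)
  rw [← Submodule.Quotient.mk_smul, smul_eq_mul, mul_one, Submodule.Quotient.mk_eq_zero] at hzero
  exact htn hzero

end FreeEmbeddings

section FaithWalker

variable {R : Type u} [Ring R]

theorem EmbedsInFree.of_injective_projective
    (h : ∀ (Q : Type u) [AddCommGroup Q] [Module R Q],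
      Module.Injective R Q → Module.Projective R Q) :
    EmbedsInFree R := by
  intro M _ _
  obtain ⟨Q, _, _, hQ, i, hi⟩ := exists_injective_linearMap_to_injective R M
  obtain ⟨s, hs⟩ := (Module.projective_def' (R := R) (P := Q)).mp (h Q hQ)
  have hinj : Function.Injective s :=
    Function.LeftInverse.injective (g := Finsupp.linearCombination R id) (LinearMap.congr_fun hs)
  exact ⟨Q, s ∘ₗ i, hinj.comp hi⟩

theorem EmbedsInFree.projective (h : EmbedsInFree R) (Q : Type u) [AddCommGroup Q] [Module R Q]
    [Module.Injective R Q] : Module.Projective R Q := by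
  obtain ⟨ι, i, hi⟩ := h Q
  obtain ⟨p, hp⟩ := Module.Injective.extension_property R Q _ _ i hi LinearMap.id
  exact .of_split i p hp

theorem injective_dfinsupp [IsNoetherianRing R] {ι : Type u} (E : ι → Type u)
    [∀ i, AddCommGroup (E i)] [∀ i, Module R (E i)] [∀ i, Module.Injective R (E i)] :
    Module.Injective R (Π₀ i, E i) := by
  classical
  refine Module.Baer.injective fun I f => ?_
  obtain ⟨s, hs⟩ := (inferInstance : Module.Finite R I).fg_top
  let F := s.biUnion fun x => (f x).support
  have hF : ∀ i ∉ F, DFinsupp.lapply (R := R) (M := E) i ∘ₗ f = 0 := fun i hi =>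
    LinearMap.ext_on hs fun x hx => by
      by_contra hne
      exact hi (Finset.mem_biUnion.mpr ⟨x, hx, DFinsupp.mem_support_iff.mpr hne⟩)
  choose g hg using fun i => Module.Baer.of_injective (R := R) (Q := E i) inferInstance I
    (DFinsupp.lapply i ∘ₗ f)
  refine ⟨LinearMap.toSpanSingleton R _ (DFinsupp.mk F fun i => g i 1), fun x hx => ?_⟩
  ext i
  rw [LinearMap.toSpanSingleton_apply, DFinsupp.smul_apply, DFinsupp.mk_apply]
  split_ifs with hi
  · rw [← map_smul, smul_eq_mul, mul_one]
    exact hg i x hx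
  · rw [smul_zero]
    exact (LinearMap.congr_fun (hF i hi) ⟨x, hx⟩).symm

theorem IsIndecomposableProjInj.exists_surjective {U E : Type u} [AddCommGroup U] [Module R U]
    [IsSimpleModule R U] [AddCommGroup E] [Module R E] (hE : IsIndecomposableProjInj R E)
    {i : U →ₗ[R] E} (hi : Function.Injective i) :
    ∃ (y : SimpleClass R) (p : E →ₗ[R] y.Rep), Function.Surjective p := by
  have := hE.nontrivial
  obtain ⟨j, p, hpj⟩ := hE.exists_retraction_of_injective hi
  have hfin : Module.Finite R E :=
    .of_surjective p (Function.RightInverse.surjective (LinearMap.congr_fun hpj))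
  obtain ⟨m, hm, -⟩ := (eq_top_or_exists_le_coatom (⊥ : Submodule R E)).resolve_left bot_ne_top
  have hsimple : IsSimpleModule R (E ⧸ m) := isSimpleModule_iff_isCoatom.mpr hm
  obtain ⟨y, ⟨e⟩⟩ := SimpleClass.exists_rep_linearEquiv (R := R) (E ⧸ m)
  exact ⟨y, e.symm.toLinearMap ∘ₗ m.mkQ, e.symm.surjective.comp m.mkQ_surjective⟩

theorem EmbedsInFree.leftTotal_isSocleTop (h : EmbedsInFree R) :
    Relator.LeftTotal (SimpleClass.IsSocleTop (R := R)) := by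
  intro x
  obtain ⟨Q, _, _, hQ, i, hi⟩ := exists_injective_linearMap_to_injective R x.Rep
  have := h.projective Q
  let e := LinearEquiv.ofInjective i hi
  obtain ⟨E, hTE, hE, -⟩ := exists_isIndecomposableProjInj_of_isAtom
    (isSimpleModule_iff_isAtom.mp (.congr e.symm))
  have hi' : Function.Injective (Submodule.inclusion hTE ∘ₗ e.toLinearMap) :=
    (Submodule.inclusion_injective hTE).comp e.injective
  obtain ⟨y, hy⟩ := hE.exists_surjective hi'
  exact ⟨y, E, _, _, hE, ⟨_, hi'⟩, hy⟩

theorem EmbedsInFree.finite_simpleClass (h : EmbedsInFree R) : Finite (SimpleClass R) := by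
  have := h.isNoetherianRing
  refine SimpleClass.finite_of_forall_exists_injective R fun x => ?_
  obtain ⟨ι, i, hi⟩ := h x.Rep
  obtain ⟨j, hj⟩ := exists_injective_of_isSimpleModule hi
  exact ⟨_, hj⟩

theorem EmbedsInFree.exists_injective_not_range_le (h : EmbedsInFree R) (m : Ideal R)
    (hm : m.IsMaximal) : ∃ (E : Type u) (_ : AddCommGroup E) (_ : Module R E),
      Module.Injective R E ∧ ∃ f : E →ₗ[R] R, ¬ LinearMap.range f ≤ m := by
  have := h.finite_simpleClass
  have : IsSimpleModule R (R ⧸ m) := isSimpleModule_iff_isCoatom.mpr hm.out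
  obtain ⟨y, ⟨e⟩⟩ := SimpleClass.exists_rep_linearEquiv (R := R) (R ⧸ m)
  obtain ⟨x, E, _, _, hE, -, p, hp⟩ :=
    rightTotal_of_leftUnique_of_leftTotal SimpleClass.leftUnique_isSocleTop
      h.leftTotal_isSocleTop y
  have := hE.projective
  obtain ⟨f, hf⟩ := Module.projective_lifting_property m.mkQ (e.toLinearMap ∘ₗ p) m.mkQ_surjective
  refine ⟨E, _, _, hE.injective, f, fun hle => ?_⟩
  obtain ⟨z, hz⟩ := (e.surjective.comp hp) (Submodule.Quotient.mk 1)
  have hzero : m.mkQ (f z) = 0 := (Submodule.Quotient.mk_eq_zero m).mpr (hle ⟨z, rfl⟩)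
  have hone : m.mkQ (f z) = Submodule.Quotient.mk 1 := (LinearMap.congr_fun hf z).trans hz
  exact hm.ne_top ((Ideal.eq_top_iff_one m).mpr
    ((Submodule.Quotient.mk_eq_zero m).mp (hone.symm.trans hzero)))

/-- The injective modules mapping to `R` without landing in a given maximal left ideal together
generate `R`, so `R` is a direct summand of their direct sum. -/
theorem EmbedsInFree.injective_self (h : EmbedsInFree R) : Module.Injective R R := by
  classical
  have := h.isNoetherianRing
  choose E _ _ hE f hf using fun m : {m : Ideal R // m.IsMaximal} =>
    h.exists_injective_not_range_le m.1 m.2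
  have hsurj : LinearMap.range (DFinsupp.lsum ℕ f) = ⊤ := by
    by_contra hne
    obtain ⟨m, hm, hle⟩ := Ideal.exists_le_maximal _ hne
    refine hf ⟨m, hm⟩ (le_trans ?_ hle)
    rintro _ ⟨x, rfl⟩
    exact ⟨DFinsupp.single _ x, DFinsupp.lsum_single ..⟩
  obtain ⟨s, hs⟩ := (DFinsupp.lsum ℕ f).exists_rightInverse_of_surjective hsurj
  have := injective_dfinsupp (R := R) E
  exact injective_of_leftInverse s _ hs

end FaithWalker

section MinimumCondition

variable {T : Type*} [Ring T]

/-- The minimum condition on finitely generated submodules. -/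
def HasMinFG (T : Type*) [Ring T] (M : Type*) [AddCommGroup M] [Module T M] : Prop :=
  ∀ P : Submodule T M → Prop, (∃ A, A.FG ∧ P A) → ∃ A, Minimal (fun A => A.FG ∧ P A) A

variable {M M' : Type*} [AddCommGroup M] [Module T M] [AddCommGroup M'] [Module T M']

theorem exists_fg_map_eq (f : M →ₗ[T] M') {A : Submodule T M} {B : Submodule T M'} (hB : B.FG)
    (hle : B ≤ A.map f) : ∃ A' ≤ A, A'.FG ∧ A'.map f = B := by
  classical
  obtain ⟨s, rfl⟩ := hB
  obtain ⟨t, ht, rfl⟩ := Finset.subset_set_image_iff.mp (Submodule.span_le.mp hle)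
  exact ⟨Submodule.span T t, Submodule.span_le.mpr ht, ⟨t, rfl⟩, by
    rw [Submodule.map_span, Finset.coe_image]⟩

theorem HasMinFG.of_surjective (h : HasMinFG T M) {f : M →ₗ[T] M'} (hf : Function.Surjective f) :
    HasMinFG T M' := by
  rintro P ⟨B, hB, hPB⟩
  obtain ⟨B', -, hB', rfl⟩ := exists_fg_map_eq f (A := ⊤) hB
    (by rw [Submodule.map_top, LinearMap.range_eq_top.mpr hf]; exact le_top)
  obtain ⟨A, ⟨hA, hPA⟩, hmin⟩ := h (fun A => P (A.map f)) ⟨B', hB', hPB⟩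
  refine ⟨A.map f, ⟨hA.map f, hPA⟩, fun C ⟨hC, hPC⟩ hle => ?_⟩
  obtain ⟨A', hA'A, hA', rfl⟩ := exists_fg_map_eq f hC hle
  exact Submodule.map_mono (hmin ⟨hA', hPC⟩ hA'A)

theorem HasMinFG.exists_isAtom_le (h : HasMinFG T M) {A : Submodule T M} (hA : A.FG)
    (hA0 : A ≠ ⊥) : ∃ L ≤ A, IsAtom L := by
  obtain ⟨L, ⟨-, hLA, hL0⟩, hmin⟩ := h (fun L => L ≤ A ∧ L ≠ ⊥) ⟨A, hA, le_rfl, hA0⟩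
  refine ⟨L, hLA, hL0, fun N hN => ?_⟩
  by_contra hN0
  obtain ⟨x, hx, hx0⟩ := Submodule.exists_mem_ne_zero_of_ne_bot hN0
  have hxN : T ∙ x ≤ N := (Submodule.span_singleton_le_iff_mem x N).mpr hx
  exact hN.not_ge ((hmin ⟨Submodule.fg_span_singleton x, hxN.trans (hN.le.trans hLA),
    by simpa using hx0⟩ (hxN.trans hN.le)).trans hxN)

theorem exists_isCompl_of_isAtom (hJ : Module.jacobson T M = ⊥) {L : Submodule T M}
    (hL : IsAtom L) : ∃ m : Submodule T M, IsCompl m L := by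
  obtain ⟨m, hm, hLm⟩ : ∃ m : Submodule T M, IsCoatom m ∧ ¬ L ≤ m := by
    by_contra! hle
    exact hL.1 (le_bot_iff.mp (hJ ▸ le_sInf hle))
  exact ⟨m, (hL.not_le_iff_disjoint.mp hLm).symm, hm.not_le_iff_codisjoint.mp hLm⟩

/-- A minimal finitely generated `A` supplementing the socle must vanish: otherwise it contains a
simple `L`, and the projection of `A` to a complement of `L` is smaller. -/
theorem HasMinFG.isSemisimpleModule [Module.Finite T M] (h : HasMinFG T M)
    (hJ : Module.jacobson T M = ⊥) : IsSemisimpleModule T M := by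
  set σ : Submodule T M := sSup {m | IsSimpleModule T m}
  obtain ⟨A, ⟨hA, hAσ⟩, hmin⟩ := h (fun A => A ⊔ σ = ⊤) ⟨⊤, Module.Finite.fg_top, top_sup_eq σ⟩
  suffices A = ⊥ from .of_sSup_simples_eq_top (by rw [← hAσ, this, bot_sup_eq])
  by_contra hA0
  obtain ⟨L, hLA, hL⟩ := h.exists_isAtom_le hA hA0
  obtain ⟨m, hm⟩ := exists_isCompl_of_isAtom hJ hL
  set A' := A.map (m.projection L hm)
  have hA'm : A' ≤ m := by
    rintro _ ⟨x, -, rfl⟩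
    exact Submodule.projection_apply_mem hm x
  have hsub (x : M) : x - m.projection L hm x ∈ L := Submodule.sub_projection_mem hm x
  have hA'A : A' ≤ A := by
    rintro _ ⟨x, hx, rfl⟩
    exact (Submodule.sub_mem_iff_right A hx).mp (hLA (hsub x))
  have hAL : A ≤ A' ⊔ L := fun x hx => Submodule.mem_sup.mpr
    ⟨_, ⟨x, hx, rfl⟩, _, hsub x, by abel⟩
  have hLσ : L ≤ σ := le_sSup (isSimpleModule_iff_isAtom.mpr hL)
  have hA'σ : A' ⊔ σ = ⊤ := top_le_iff.mp (hAσ ▸ sup_le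
    (hAL.trans (sup_le_sup_left hLσ A')) le_sup_right)
  exact hL.1 (hm.disjoint.eq_bot_of_ge (hLA.trans ((hmin ⟨hA.map _, hA'σ⟩ hA'A).trans hA'm)))

end MinimumCondition

section Semiprimary

variable {T : Type*} [Ring T]

theorem isSemisimpleModule_quotient_iff (I : Ideal T) [I.IsTwoSided] :
    IsSemisimpleModule T (T ⧸ I) ↔ IsSemisimpleRing (T ⧸ I) := by
  let f : T ⧸ I →ₛₗ[Ideal.Quotient.mk I] T ⧸ I := ⟨AddHom.id _, fun _ _ => rfl⟩
  have : RingHomSurjective (Ideal.Quotient.mk I) := ⟨Ideal.Quotient.mk_surjective⟩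
  exact f.isSemisimpleModule_iff_of_bijective Function.bijective_id

theorem exists_mul_eq_one_of_mem_jacobson {z : T} (hz : z ∈ Ring.jacobson T) :
    ∃ u, u * (1 - z) = 1 := by
  rw [← Ideal.jacobson_bot, Ideal.mem_jacobson_iff] at hz
  obtain ⟨u, hu⟩ := hz (-1)
  refine ⟨u, ?_⟩
  rw [Submodule.mem_bot, sub_eq_zero] at hu
  calc u * (1 - z) = u * -1 * z + u := by noncomm_ring
    _ = 1 := hu

/-- Otherwise take a minimal finitely generated left ideal `A` not annihilated by `J ^ n`. Some
`j * a` with `j ∈ J` and `a ∈ A` is still not annihilated by `J ^ n`, so `a ∈ T * j * a`. -/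
theorem HasMinFG.jacobson_pow_eq_zero (h : HasMinFG T T) {n : ℕ}
    (hn : ∀ b : T, (∀ y ∈ Ring.jacobson T ^ (n + 1), y * b = 0) →
      ∀ y ∈ Ring.jacobson T ^ n, y * b = 0) : Ring.jacobson T ^ n = 0 := by
  by_contra hne
  obtain ⟨z, hz, hz0⟩ := Submodule.exists_mem_ne_zero_of_ne_bot hne
  obtain ⟨A, ⟨-, a, ha, y, hy, hya⟩, hmin⟩ := h
    (fun A => ∃ a ∈ A, ∃ y ∈ Ring.jacobson T ^ n, y * a ≠ 0)
    ⟨⊤, Module.Finite.fg_top, 1, Submodule.mem_top, z, hz, by rwa [mul_one]⟩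
  obtain ⟨j, hj, y', hy', hyj⟩ : ∃ j ∈ Ring.jacobson T, ∃ y ∈ Ring.jacobson T ^ n,
      y * (j * a) ≠ 0 := by
    by_contra! hzero
    refine hya (hn a (fun w hw => ?_) y hy)
    rw [Submodule.pow_succ] at hw
    refine Submodule.smul_induction_on hw (fun r hr j hj => ?_) fun p q hp hq => ?_
    · rw [smul_eq_mul, mul_assoc, hzero j hj r hr]
    · rw [add_mul, hp, hq, add_zero]
  have hle : A ≤ T ∙ (j * a) := hmin
    ⟨Submodule.fg_span_singleton _, j * a, Submodule.mem_span_singleton_self _, y', hy', hyj⟩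
    ((Submodule.span_singleton_le_iff_mem _ A).mpr (A.smul_mem j ha))
  obtain ⟨t, ht⟩ := Submodule.mem_span_singleton.mp (hle ha)
  obtain ⟨u, hu⟩ := exists_mul_eq_one_of_mem_jacobson (Ideal.mul_mem_left _ t hj)
  refine hya ?_
  calc y * a = y * (u * (1 - t * j) * a) := by rw [hu, one_mul]
    _ = y * (u * (a - t • (j * a))) := by rw [smul_eq_mul]; noncomm_ring
    _ = 0 := by rw [ht, sub_self, mul_zero, mul_zero]

theorem HasMinFG.isSemiprimaryRing (h : HasMinFG T T) {n : ℕ}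
    (hn : ∀ b : T, (∀ y ∈ Ring.jacobson T ^ (n + 1), y * b = 0) →
      ∀ y ∈ Ring.jacobson T ^ n, y * b = 0) : IsSemiprimaryRing T := by
  refine ⟨(isSemisimpleModule_quotient_iff _).mp ?_, n, h.jacobson_pow_eq_zero hn⟩
  exact (h.of_surjective (Submodule.mkQ_surjective _)).isSemisimpleModule
    (Module.jacobson_quotient_jacobson T T)

theorem ker_le_jacobson_of_isNilpotent {A B : Type*} [Ring A] [Ring B] (f : A →+* B)
    (hk : IsNilpotent (RingHom.ker f)) : RingHom.ker f ≤ Ring.jacobson A := by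
  obtain ⟨n, hn⟩ := hk
  intro x hx
  rw [← Ideal.jacobson_bot, Ideal.mem_jacobson_iff]
  intro y
  have hpow : (y * x) ^ n ∈ RingHom.ker f ^ n := Ideal.pow_mem_pow (Ideal.mul_mem_left _ y hx) n
  obtain ⟨v, hv⟩ := IsNilpotent.isUnit_one_add ⟨n, (Submodule.mem_bot A).mp (hn ▸ hpow)⟩
  refine ⟨↑v⁻¹, ?_⟩
  rw [Submodule.mem_bot, mul_assoc, add_comm, ← mul_one_add, ← hv, v.inv_mul, sub_self]

theorem isSemiprimaryRing_of_surjective {A B : Type*} [Ring A] [Ring B] [IsSemisimpleRing B]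
    (f : A →+* B) (hf : Function.Surjective f) (hk : IsNilpotent (RingHom.ker f)) :
    IsSemiprimaryRing A := by
  have : RingHomSurjective f := ⟨hf⟩
  have heq : Ring.jacobson A = RingHom.ker f := by
    refine le_antisymm ((Ring.le_comap_jacobson f).trans_eq ?_)
      (ker_le_jacobson_of_isNilpotent f hk)
    rw [IsSemisimpleRing.jacobson_eq_bot]
    rfl
  exact ⟨((RingHom.quotientKerEquivOfSurjective hf).symm.trans
    (Ideal.quotEquivOfEq heq.symm)).isSemisimpleRing, heq ▸ hk⟩

theorem isSemiprimaryRing_of_mulOpposite [IsSemiprimaryRing Tᵐᵒᵖ] : IsSemiprimaryRing T := by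
  have hss : IsSemisimpleRing (Tᵐᵒᵖ ⧸ Ring.jacobson Tᵐᵒᵖ) := IsSemiprimaryRing.isSemisimpleRing
  obtain ⟨n, hn⟩ := IsSemiprimaryRing.isNilpotent (R := Tᵐᵒᵖ)
  let f : T →+* (Tᵐᵒᵖ ⧸ Ring.jacobson Tᵐᵒᵖ)ᵐᵒᵖ :=
    (RingHom.op (Ideal.Quotient.mk (Ring.jacobson Tᵐᵒᵖ))).comp (RingEquiv.opOp T).toRingHom
  have hf : Function.Surjective f := fun y => by
    obtain ⟨z, hz⟩ := Ideal.Quotient.mk_surjective (unop y)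
    exact ⟨unop z, unop_injective hz⟩
  have hker {x : T} (hx : x ∈ RingHom.ker f) : op x ∈ Ring.jacobson Tᵐᵒᵖ :=
    Ideal.Quotient.eq_zero_iff_mem.mp (op_injective hx)
  have hpow (k : ℕ) : ∀ x ∈ RingHom.ker f ^ k, op x ∈ Ring.jacobson Tᵐᵒᵖ ^ k := by
    induction k with
    | zero => exact fun _ _ => by rw [Submodule.pow_zero, Ideal.one_eq_top]; exact Submodule.mem_top
    | succ k ih =>
      intro x hx
      rw [Submodule.pow_succ] at hx
      refine Submodule.smul_induction_on hx (fun r hr j hj => ?_) fun p q => Ideal.add_mem _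
      rw [smul_eq_mul, op_mul, Ideal.IsTwoSided.pow_succ]
      exact Ideal.mul_mem_mul (hker hj) (ih r hr)
  refine isSemiprimaryRing_of_surjective f hf ⟨n, (Submodule.eq_bot_iff _).mpr fun x hx => ?_⟩
  exact (op_eq_zero_iff x).mp ((Submodule.mem_bot _).mp (hn ▸ hpow n x hx))

theorem exists_isAtom_of_isSemiprimaryRing [IsSemiprimaryRing T] (M : Type*) [AddCommGroup M]
    [Module T M] [Nontrivial M] : ∃ U : Submodule T M, IsAtom U := by
  suffices Nontrivial M → ∃ U : Submodule T M, IsAtom U from this inferInstance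
  refine IsSemiprimaryRing.induction T T M (P := fun M _ _ _ => Nontrivial M →
    ∃ U : Submodule T M, IsAtom U) (fun M _ _ _ _ _ _ _ => ?_) fun M _ _ _ _ hN hQ _ => ?_
  · obtain ⟨U, hU⟩ := IsSemisimpleModule.exists_simple_submodule T M
    exact ⟨U, isSimpleModule_iff_isAtom.mp hU⟩
  · rcases eq_or_ne (Ring.jacobson T • (⊤ : Submodule T M)) ⊥ with hbot | hbot
    · let e := Submodule.quotEquivOfEqBot _ hbot
      obtain ⟨U, hU⟩ := hQ e.toEquiv.nontrivial
      exact ⟨U.map e.toLinearMap, (Submodule.orderIsoMapComap e).isAtom_iff U |>.mpr hU⟩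
    · obtain ⟨U, hU⟩ := hN (Submodule.nontrivial_iff_ne_bot.mpr hbot)
      have := isSimpleModule_iff_isAtom.mpr hU
      exact ⟨U.map (Submodule.subtype _), isSimpleModule_iff_isAtom.mp
        (.congr (Submodule.equivSubtypeMap _ U).symm)⟩

end Semiprimary

section SemiprimarySelfInjective

variable {R : Type u} [Ring R]

/-- A ring is left Kasch if every simple left module embeds in it. -/
def IsLeftKasch (R : Type u) [Ring R] : Prop :=
  ∀ x : SimpleClass R, ∃ i : x.Rep →ₗ[R] R, Function.Injective i

theorem finite_simpleClass_of_isSemiprimaryRing [IsSemiprimaryRing R] :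
    Finite (SimpleClass R) := by
  have hss : IsSemisimpleModule R (R ⧸ Ring.jacobson R) :=
    (isSemisimpleModule_quotient_iff _).mpr IsSemiprimaryRing.isSemisimpleRing
  have : IsNoetherian R (R ⧸ Ring.jacobson R) :=
    (IsSemisimpleModule.finite_tfae.out 0 1).mp
      (inferInstance : Module.Finite R (R ⧸ Ring.jacobson R))
  refine SimpleClass.finite_of_forall_exists_injective (R ⧸ Ring.jacobson R) fun x => ?_
  have := (Quotient.out x).2
  let q : (R ⧸ Ring.jacobson R) →ₗ[R] x.Rep :=
    Submodule.factor (Ring.jacobson_le_of_isMaximal (Quotient.out x).1)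
  obtain ⟨s, hs⟩ := IsSemisimpleModule.lifting_property q (Submodule.factor_surjective _) .id
  exact ⟨s, Function.LeftInverse.injective (g := q) (LinearMap.congr_fun hs)⟩

theorem exists_isIndecomposableProjInj_of_comp_self_eq [IsSemiprimaryRing R]
    [Module.Injective R R] {ρ : R →ₗ[R] R} (hρ : ρ ∘ₗ ρ = ρ) (hρ0 : ρ ≠ 0) :
    ∃ (E : Type u) (_ : AddCommGroup E) (_ : Module R E), IsIndecomposableProjInj R E ∧
      ∃ (i : E →ₗ[R] R) (p : R →ₗ[R] E), p ∘ₗ i = .id ∧ ρ ∘ₗ i = i ∧ p ∘ₗ ρ = p := by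
  let Q := LinearMap.range ρ
  have hfix (x : Q) : ρ x = x := by
    obtain ⟨_, y, rfl⟩ := x
    exact LinearMap.congr_fun hρ y
  have hsplit : ρ.rangeRestrict ∘ₗ Q.subtype = .id := LinearMap.ext fun x => Subtype.ext (hfix x)
  have : Module.Injective R Q := injective_of_leftInverse Q.subtype ρ.rangeRestrict hsplit
  have : Module.Projective R Q := .of_split Q.subtype ρ.rangeRestrict hsplit
  have : Nontrivial Q := Submodule.nontrivial_iff_ne_bot.mpr (mt LinearMap.range_eq_bot.mp hρ0)
  obtain ⟨T, hT⟩ := exists_isAtom_of_isSemiprimaryRing (T := R) Q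
  obtain ⟨E, -, hE, p, hp⟩ := exists_isIndecomposableProjInj_of_isAtom hT
  refine ⟨E, _, _, hE, Q.subtype ∘ₗ E.subtype, p ∘ₗ ρ.rangeRestrict, ?_, ?_, ?_⟩
  · rw [LinearMap.comp_assoc, ← LinearMap.comp_assoc _ _ ρ.rangeRestrict, hsplit,
      LinearMap.id_comp, hp]
  · exact LinearMap.ext fun x => hfix x
  · exact LinearMap.ext fun x => congrArg p (hfix (ρ.rangeRestrict x) |> Subtype.ext)

theorem not_range_mkQ_comp_le {E : Type*} [AddCommGroup E] [Module R E] [Nontrivial E]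
    {p : R →ₗ[R] E} (hp : Function.Surjective p) {ρ ρ' : R →ₗ[R] R} (hρ : p ∘ₗ ρ = p)
    (hρ' : p ∘ₗ ρ' = 0) : ¬ LinearMap.range ((Ring.jacobson R).mkQ ∘ₗ ρ) ≤
      LinearMap.range ((Ring.jacobson R).mkQ ∘ₗ ρ') := by
  intro hle
  have : Module.Finite R E := .of_surjective p hp
  refine (Module.jacobson_lt_top R E).not_ge fun z _ => ?_
  obtain ⟨x, rfl⟩ := hp z
  obtain ⟨y, hy⟩ := hle ⟨x, rfl⟩
  have hJ : ρ x - ρ' y ∈ Ring.jacobson R := (Submodule.Quotient.eq _).mp hy.symm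
  have hpx : p (ρ x - ρ' y) = p x := by
    rw [map_sub, ← p.comp_apply, hρ, ← p.comp_apply, hρ', LinearMap.zero_apply, sub_zero]
  exact hpx ▸ Module.le_comap_jacobson p hJ

/-- Among the idempotents `ρ` with `q ∘ ρ = q` choose one whose image modulo the Jacobson radical
is minimal. An indecomposable summand of the image of `ρ` that is killed by `q` could be
removed, contradicting minimality since it has a nonzero top. -/
theorem exists_isIndecomposableProjInj_linearMap_ne_zero [IsSemiprimaryRing R]
    [Module.Injective R R] {U : Type*} [AddCommGroup U] [Module R U] {q : R →ₗ[R] U} (hq : q ≠ 0) :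
    ∃ (E : Type u) (_ : AddCommGroup E) (_ : Module R E), IsIndecomposableProjInj R E ∧
      ∃ f : E →ₗ[R] U, f ≠ 0 := by
  have hss : IsSemisimpleModule R (R ⧸ Ring.jacobson R) :=
    (isSemisimpleModule_quotient_iff _).mpr IsSemiprimaryRing.isSemisimpleRing
  have : IsArtinian R (R ⧸ Ring.jacobson R) :=
    (IsSemisimpleModule.finite_tfae.out 0 2).mp
      (inferInstance : Module.Finite R (R ⧸ Ring.jacobson R))
  let π : R →ₗ[R] R ⧸ Ring.jacobson R := Submodule.mkQ _
  obtain ⟨_, ⟨ρ, ⟨hρ, hqρ⟩, rfl⟩, hmin⟩ := IsArtinian.set_has_minimal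
    ((fun ρ : R →ₗ[R] R => LinearMap.range (π ∘ₗ ρ)) '' {ρ | ρ ∘ₗ ρ = ρ ∧ q ∘ₗ ρ = q})
    ⟨_, .id, ⟨rfl, rfl⟩, rfl⟩
  have hρ0 : ρ ≠ 0 := by
    rintro rfl
    exact hq (hqρ.symm.trans (LinearMap.comp_zero q))
  obtain ⟨E, _, _, hE, i, p, hpi, hρi, hpρ⟩ :=
    exists_isIndecomposableProjInj_of_comp_self_eq hρ hρ0
  refine ⟨E, _, _, hE, q ∘ₗ i, fun hqi => ?_⟩
  let ρ' := ρ - i ∘ₗ p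
  have hρρ' : ρ ∘ₗ ρ' = ρ' := by
    rw [LinearMap.comp_sub, hρ, ← LinearMap.comp_assoc, hρi]
  have hpρ' : p ∘ₗ ρ' = 0 := by
    rw [LinearMap.comp_sub, hpρ, ← LinearMap.comp_assoc, hpi, LinearMap.id_comp, sub_self]
  have hρ'ρ' : ρ' ∘ₗ ρ' = ρ' := by
    rw [LinearMap.sub_comp, hρρ', LinearMap.comp_assoc, hpρ', LinearMap.comp_zero, sub_zero]
  have hqρ' : q ∘ₗ ρ' = q := by
    rw [LinearMap.comp_sub, hqρ, ← LinearMap.comp_assoc, hqi, LinearMap.zero_comp, sub_zero]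
  have hle : LinearMap.range (π ∘ₗ ρ') ≤ LinearMap.range (π ∘ₗ ρ) := by
    rw [← hρρ', ← LinearMap.comp_assoc]
    exact LinearMap.range_comp_le_range _ _
  have := hE.nontrivial
  have hp : Function.Surjective p := Function.RightInverse.surjective (LinearMap.congr_fun hpi)
  exact not_range_mkQ_comp_le hp hpρ hpρ'
    (eq_of_le_of_not_lt hle (hmin _ ⟨ρ', ⟨hρ'ρ', hqρ'⟩, rfl⟩)).ge

theorem rightTotal_isSocleTop_of_isSemiprimaryRing [IsSemiprimaryRing R] [Module.Injective R R] :
    Relator.RightTotal (SimpleClass.IsSocleTop (R := R)) := by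
  intro y
  have := IsSimpleModule.nontrivial R y.Rep
  have hq : (Submodule.mkQ _ : R →ₗ[R] y.Rep) ≠ 0 := fun h0 => by
    obtain ⟨z, hz⟩ := exists_ne (0 : y.Rep)
    obtain ⟨r, rfl⟩ := Submodule.mkQ_surjective _ z
    exact hz (LinearMap.congr_fun h0 r)
  obtain ⟨E, _, _, hE, f, hf⟩ := exists_isIndecomposableProjInj_linearMap_ne_zero hq
  have := hE.nontrivial
  obtain ⟨T, hT⟩ := exists_isAtom_of_isSemiprimaryRing (T := R) E
  have := isSimpleModule_iff_isAtom.mpr hT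
  obtain ⟨x, ⟨e⟩⟩ := SimpleClass.exists_rep_linearEquiv (R := R) T
  exact ⟨x, E, _, _, hE, ⟨T.subtype ∘ₗ e.toLinearMap, T.injective_subtype.comp e.injective⟩,
    f, LinearMap.surjective_of_ne_zero hf⟩

theorem isLeftKasch_of_isSemiprimaryRing [IsSemiprimaryRing R] [Module.Injective R R] :
    IsLeftKasch R := by
  have := finite_simpleClass_of_isSemiprimaryRing (R := R)
  intro x
  obtain ⟨-, E, _, _, hE, ⟨i, hi⟩, -⟩ := leftTotal_of_rightUnique_of_rightTotal
    SimpleClass.rightUnique_isSocleTop rightTotal_isSocleTop_of_isSemiprimaryRing x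
  obtain ⟨j, p, hpj⟩ := hE.exists_retraction_of_injective hi
  exact ⟨j ∘ₗ i, (Function.LeftInverse.injective (g := p) (LinearMap.congr_fun hpj)).comp hi⟩

end SemiprimarySelfInjective

section Annihilators

variable {R : Type u} [Ring R]

/-- The left annihilator of a set, as a left ideal. -/
def leftAnnihilator (X : Set R) : Ideal R where
  carrier := {a | ∀ x ∈ X, a * x = 0}
  zero_mem' x _ := zero_mul x
  add_mem' ha hb x hx := by rw [add_mul, ha x hx, hb x hx, add_zero]
  smul_mem' c a ha x hx := by rw [smul_eq_mul, mul_assoc, ha x hx, mul_zero]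

theorem leftAnnihilator_anti {X Y : Set R} (h : X ⊆ Y) : leftAnnihilator Y ≤ leftAnnihilator X :=
  fun _ ha x hx => ha x (h hx)

/-- The ascending chain condition on left annihilators. -/
def LeftAnnihilatorACC (R : Type*) [Ring R] : Prop :=
  WellFounded fun X Y : Set R => leftAnnihilator Y < leftAnnihilator X

theorem leftAnnihilatorACC_of_isNoetherianRing [IsNoetherianRing R] : LeftAnnihilatorACC R :=
  InvImage.wf leftAnnihilator (wellFounded_gt (α := Ideal R))

theorem LeftAnnihilatorACC.exists_maximal (h : LeftAnnihilatorACC R) {ι : Type*} [Nonempty ι]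
    (X : ι → Set R) : ∃ i, ∀ j, leftAnnihilator (X i) ≤ leftAnnihilator (X j) →
      leftAnnihilator (X j) ≤ leftAnnihilator (X i) := by
  obtain ⟨_, ⟨i, rfl⟩, hmax⟩ := h.has_min _ (Set.range_nonempty X)
  exact ⟨i, fun j hij => of_not_not fun hji => hmax _ ⟨j, rfl⟩ (lt_of_le_not_ge hij hji)⟩

theorem mem_of_forall_mem_leftAnnihilator [Module.Injective R R] {A : Submodule Rᵐᵒᵖ R}
    (hA : A.FG) {x : R} (hx : ∀ a ∈ leftAnnihilator (A : Set R), a * x = 0) : x ∈ A := by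
  obtain ⟨s, rfl⟩ := hA
  let f : R →ₗ[R] s → R := LinearMap.pi fun y => LinearMap.toSpanSingleton R R y.1
  obtain ⟨k, hk⟩ := exists_comp_eq_of_ker_le f (LinearMap.toSpanSingleton R R x) fun r hr => by
    refine hx r fun y hy => ?_
    induction hy using Submodule.span_induction with
    | mem y hy => exact congrFun hr ⟨y, hy⟩
    | zero => exact mul_zero r
    | add y z _ _ hy hz => rw [mul_add, hy, hz, add_zero]
    | smul c y _ hy => rw [smul_eq_mul_unop, ← mul_assoc, hy, zero_mul]
  have hkx : k (f 1) = x := by simpa using LinearMap.congr_fun hk 1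
  classical
  rw [← hkx, LinearMap.pi_apply_eq_sum_univ k]
  refine Submodule.sum_mem _ fun y _ => ?_
  have hy : f 1 y = y := one_mul y.1
  rw [hy]
  exact Submodule.smul_mem _ (op (k _)) (Submodule.subset_span y.2)

theorem le_of_leftAnnihilator_le [Module.Injective R R] {A B : Submodule Rᵐᵒᵖ R} (hB : B.FG)
    (h : leftAnnihilator (B : Set R) ≤ leftAnnihilator (A : Set R)) : A ≤ B :=
  fun x hx => mem_of_forall_mem_leftAnnihilator hB fun _ ha => h ha x hx

theorem LeftAnnihilatorACC.hasMinFG [Module.Injective R R] (h : LeftAnnihilatorACC R) :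
    HasMinFG Rᵐᵒᵖ R := by
  rintro P ⟨A₀, hA₀⟩
  have : Nonempty {A : Submodule Rᵐᵒᵖ R // A.FG ∧ P A} := ⟨A₀, hA₀⟩
  obtain ⟨A, hmax⟩ := h.exists_maximal fun A : {A : Submodule Rᵐᵒᵖ R // A.FG ∧ P A} => (A.1 : Set R)
  exact ⟨A, A.2, fun B hB hle => le_of_leftAnnihilator_le hB.1
    (hmax ⟨B, hB⟩ (leftAnnihilator_anti hle))⟩

theorem LeftAnnihilatorACC.isSemiprimaryRing_mulOpposite [Module.Injective R R]
    (h : LeftAnnihilatorACC R) : IsSemiprimaryRing Rᵐᵒᵖ := by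
  let X (n : ℕ) : Set R := op ⁻¹' (Ring.jacobson Rᵐᵒᵖ ^ n : Ideal Rᵐᵒᵖ)
  obtain ⟨n, hmax⟩ := h.exists_maximal X
  have hX : X (n + 1) ⊆ X n := fun x hx =>
    Ideal.pow_le_pow_right n.le_succ hx
  have hmin : HasMinFG Rᵐᵒᵖ Rᵐᵒᵖ := h.hasMinFG.of_surjective (opLinearEquiv Rᵐᵒᵖ).surjective
  exact hmin.isSemiprimaryRing (n := n) fun b hb y hy =>
    unop_injective (hmax (n + 1) (leftAnnihilator_anti hX)
      (fun x hx => op_injective (hb (op x) hx)) (unop y) hy)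

theorem LeftAnnihilatorACC.isSemiprimaryRing [Module.Injective R R] (h : LeftAnnihilatorACC R) :
    IsSemiprimaryRing R :=
  have := h.isSemiprimaryRing_mulOpposite
  isSemiprimaryRing_of_mulOpposite

end Annihilators

section QuasiFrobenius

variable {R : Type u} [Ring R]

theorem IsLeftKasch.exists_linearMap_apply_ne_zero (hK : IsLeftKasch R) [Module.Injective R R]
    {W : Type u} [AddCommGroup W] [Module R W] {w : W} (hw : w ≠ 0) :
    ∃ φ : W →ₗ[R] R, φ w ≠ 0 := by
  let V := R ∙ w
  have hwV : w ∈ V := Submodule.mem_span_singleton_self w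
  have : Nontrivial V := ⟨⟨w, hwV⟩, 0, fun h => hw (congrArg Subtype.val h)⟩
  obtain ⟨m, hm, -⟩ := (eq_top_or_exists_le_coatom (⊥ : Submodule R V)).resolve_left bot_ne_top
  have : IsSimpleModule R (V ⧸ m) := isSimpleModule_iff_isCoatom.mpr hm
  obtain ⟨x, ⟨e⟩⟩ := SimpleClass.exists_rep_linearEquiv (R := R) (V ⧸ m)
  obtain ⟨j, hj⟩ := hK x
  obtain ⟨φ, hφ⟩ := Module.Injective.extension_property R R V W V.subtype V.injective_subtype
    (j ∘ₗ e.symm.toLinearMap ∘ₗ m.mkQ)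
  refine ⟨φ, fun h0 => hm.1 ?_⟩
  have hwm : (⟨w, hwV⟩ : V) ∈ m := by
    refine (Submodule.Quotient.mk_eq_zero m).mp (e.symm.injective (hj ?_))
    rw [map_zero, map_zero]
    exact (LinearMap.congr_fun hφ ⟨w, hwV⟩).symm.trans h0
  rw [eq_top_iff]
  rintro ⟨y, hy⟩ -
  obtain ⟨r, rfl⟩ := Submodule.mem_span_singleton.mp hy
  exact m.smul_mem r hwm

theorem IsLeftKasch.exists_linearMap_of_notMem (hK : IsLeftKasch R) [Module.Injective R R]
    {W : Type u} [AddCommGroup W] [Module R W] {L : Submodule R W} {w : W} (hw : w ∉ L) :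
    ∃ φ : W →ₗ[R] R, (∀ l ∈ L, φ l = 0) ∧ φ w ≠ 0 := by
  obtain ⟨φ, hφ⟩ := hK.exists_linearMap_apply_ne_zero
    (mt (Submodule.Quotient.mk_eq_zero L).mp hw)
  refine ⟨φ ∘ₗ L.mkQ, fun l hl => ?_, hφ⟩
  rw [LinearMap.comp_apply, Submodule.mkQ_apply, (Submodule.Quotient.mk_eq_zero L).mpr hl, map_zero]

theorem IsLeftKasch.isNoetherianRing (hK : IsLeftKasch R) [Module.Injective R R]
    (h : LeftAnnihilatorACC R) : IsNoetherianRing R := by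
  let r (L : Ideal R) : Set R := {c | ∀ l ∈ L, l * c = 0}
  have hlr (L : Ideal R) : leftAnnihilator (r L) = L := by
    refine le_antisymm (fun x hx => of_not_not fun hxL => ?_) fun l hl c hc => hc l hl
    obtain ⟨φ, hφ, hφx⟩ := hK.exists_linearMap_of_notMem hxL
    have hmul (a : R) : φ a = a * φ 1 := by rw [← smul_eq_mul, ← map_smul, smul_eq_mul, mul_one]
    exact hφx ((hmul x).trans (hx _ fun l hl => (hmul l).symm.trans (hφ l hl)))
  rw [isNoetherianRing_iff, isNoetherian_iff]
  exact Subrelation.wf (fun {I J} (hIJ : I > J) => by rwa [InvImage, hlr, hlr]) (InvImage.wf r h)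

theorem isNoetherian_mulOpposite [Module.Injective R R] [IsArtinianRing R] :
    IsNoetherian Rᵐᵒᵖ R := by
  rw [isNoetherian_iff_fg_wellFounded]
  let f (A : {A : Submodule Rᵐᵒᵖ R // A.FG}) : Ideal R := leftAnnihilator (A.1 : Set R)
  have hf : StrictAnti f := fun A B hAB =>
    lt_of_le_not_ge (leftAnnihilator_anti hAB.le) fun hle =>
      hAB.not_ge (le_of_leftAnnihilator_le A.2 hle)
  exact hf.wellFoundedGT

theorem IsLeftKasch.exists_eq_mul (hK : IsLeftKasch R) [Module.Injective R R]
    {A : Submodule Rᵐᵒᵖ R} (hA : A.FG) (g : A →ₗ[Rᵐᵒᵖ] R) : ∃ c : R, ∀ y : A, g y = c * y := by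
  classical
  obtain ⟨s, rfl⟩ := hA
  let y (i : s) : Submodule.span Rᵐᵒᵖ (s : Set R) := ⟨i, Submodule.subset_span i.2⟩
  have hmem : (fun i => g (y i)) ∈ Submodule.span R {fun i : s => (i : R)} := by
    by_contra hn
    obtain ⟨φ, hφ, hφg⟩ := hK.exists_linearMap_of_notMem hn
    let d (i : s) : R := φ fun j => if i = j then 1 else 0
    have hφd (x : s → R) : φ x = ∑ i, x i * d i := LinearMap.pi_apply_eq_sum_univ φ x
    have hy : ∑ i, op (d i) • y i = 0 := Subtype.ext <| by
      rw [Submodule.coe_sum]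
      exact (hφd _).symm.trans (hφ _ (Submodule.mem_span_singleton_self _))
    refine hφg ((hφd _).trans ?_)
    have hgy := congrArg g hy
    rw [map_sum, map_zero] at hgy
    refine (Finset.sum_congr rfl fun i _ => ?_).trans hgy
    exact (map_smul g (op (d i)) (y i)).symm
  obtain ⟨c, hc⟩ := Submodule.mem_span_singleton.mp hmem
  refine ⟨c, fun ⟨x, hx⟩ => ?_⟩
  induction hx using Submodule.span_induction with
  | mem x hx => exact (congrFun hc ⟨x, hx⟩).symm
  | zero => exact (map_zero g).trans (mul_zero c).symm
  | add x z hx hz hgx hgz =>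
    refine (map_add g ⟨x, hx⟩ ⟨z, hz⟩).trans ?_
    rw [hgx, hgz]
    exact (mul_add c x z).symm
  | smul r x hx hgx =>
    refine (map_smul g r ⟨x, hx⟩).trans ?_
    rw [hgx]
    exact mul_assoc c x (unop r)

theorem IsLeftKasch.injective_mulOpposite (hK : IsLeftKasch R) [Module.Injective R R]
    [IsNoetherian Rᵐᵒᵖ R] : Module.Injective Rᵐᵒᵖ R := by
  refine Module.Baer.injective fun I g => ?_
  let e : R ≃ₗ[Rᵐᵒᵖ] Rᵐᵒᵖ := opLinearEquiv Rᵐᵒᵖ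
  let f : Submodule.comap e.toLinearMap I →ₗ[Rᵐᵒᵖ] I := e.toLinearMap.restrict fun x hx => hx
  obtain ⟨c, hc⟩ := hK.exists_eq_mul (IsNoetherian.noetherian _) (g ∘ₗ f)
  exact ⟨LinearMap.mulLeft Rᵐᵒᵖ c ∘ₗ e.symm.toLinearMap, fun x hx => (hc ⟨unop x, hx⟩).symm⟩

theorem LeftAnnihilatorACC.isArtinianRing [Module.Injective R R] (h : LeftAnnihilatorACC R) :
    IsArtinianRing R := by
  have := h.isSemiprimaryRing
  exact IsSemiprimaryRing.isNoetherian_iff_isArtinian.mp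
    (isLeftKasch_of_isSemiprimaryRing.isNoetherianRing h)

theorem LeftAnnihilatorACC.isArtinian_and_injective_mulOpposite [Module.Injective R R]
    (h : LeftAnnihilatorACC R) : IsArtinian Rᵐᵒᵖ R ∧ Module.Injective Rᵐᵒᵖ R := by
  have := h.isArtinianRing
  have := h.isSemiprimaryRing_mulOpposite
  have := isNoetherian_mulOpposite (R := R)
  exact ⟨IsSemiprimaryRing.isNoetherian_iff_isArtinian.mp this,
    isLeftKasch_of_isSemiprimaryRing.injective_mulOpposite⟩

end QuasiFrobenius

section Mininjective

theorem sSupIndep_insert {α : Type*} [CompleteLattice α] [IsModularLattice α] {s : Set α}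
    (hs : sSupIndep s) {a : α} (ha : Disjoint a (sSup s)) : sSupIndep (insert a s) := by
  rintro b (rfl | hb)
  · exact ha.mono_right (sSup_le_sSup (by grind))
  · have hle : insert a s \ {b} ⊆ insert a (s \ {b}) := by grind
    refine Disjoint.mono_right ((sSup_le_sSup hle).trans_eq sSup_insert) ?_
    rw [sup_comm]
    refine (hs hb).disjoint_sup_right_of_disjoint_sup_left (ha.symm.mono_left ?_)
    exact sup_le (le_sSup hb) (sSup_le_sSup Set.sdiff_subset)

theorem exists_maximal_sSupIndep {α : Type*} [CompleteLattice α] [IsCompactlyGenerated α]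
    (P : α → Prop) : ∃ s, Maximal (fun s : Set α => sSupIndep s ∧ ∀ a ∈ s, P a) s :=
  zorn_subset {s | sSupIndep s ∧ ∀ a ∈ s, P a} fun c hc hchain =>
    ⟨⋃₀ c, ⟨iSupIndep_sUnion_of_directed hchain.directedOn fun _ hs => (hc hs).1,
      fun a ⟨_, hs, ha⟩ => (hc hs).2 a ha⟩, fun _ => Set.subset_sUnion_of_mem⟩

variable {R : Type u} [Ring R] {M : Type u} [AddCommGroup M] [Module R M]

/-- A maximal independent family of injective and projective submodules spans an injective, hence
complemented, submodule, whose complement has to vanish. -/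
theorem projective_of_forall_exists_injective_projective_le [IsNoetherianRing R]
    (h : ∀ N N' : Submodule R M, IsCompl N N' → N ≠ ⊥ →
      ∃ E ≤ N, E ≠ ⊥ ∧ Module.Injective R E ∧ Module.Projective R E) :
    Module.Projective R M := by
  classical
  obtain ⟨s, hs⟩ := exists_maximal_sSupIndep fun E : Submodule R M =>
    Module.Injective R E ∧ Module.Projective R E
  have hinj (E : s) : Module.Injective R E := (hs.prop.2 E E.2).1
  have hproj (E : s) : Module.Projective R E := (hs.prop.2 E E.2).2
  let f : (Π₀ E : s, E.1) →ₗ[R] M := DFinsupp.lsum ℕ fun E : s => E.1.subtype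
  have hf : Function.Injective f := ((sSupIndep_iff s).mp hs.prop.1).dfinsupp_lsum_injective
  have hrange : LinearMap.range f = sSup s := by
    rw [sSup_eq_iSup', Submodule.iSup_eq_range_dfinsupp_lsum]
  have := injective_dfinsupp (R := R) fun E : s => E.1
  obtain ⟨p, hp⟩ := Module.Injective.extension_property R _ _ _ f hf LinearMap.id
  have hcompl : IsCompl (LinearMap.ker p) (LinearMap.range f) := by
    refine ⟨Submodule.disjoint_def.mpr ?_, codisjoint_iff.mpr (Submodule.eq_top_iff'.mpr ?_)⟩
    · rintro _ hx ⟨y, rfl⟩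
      exact (congrArg f ((LinearMap.congr_fun hp y).symm.trans hx)).trans (map_zero f)
    · refine fun x => Submodule.mem_sup.mpr ⟨x - f (p x), ?_, f (p x), ⟨p x, rfl⟩, by abel⟩
      rw [LinearMap.mem_ker, map_sub, ← LinearMap.comp_apply p f, hp, LinearMap.id_apply, sub_self]
  have hker : LinearMap.ker p = ⊥ := by
    by_contra hne
    obtain ⟨E, hE, hE0, hEinj, hEproj⟩ := h _ _ hcompl hne
    have hdisj : Disjoint E (sSup s) := hrange ▸ hcompl.disjoint.mono_left hE
    have hmem : E ∈ s := hs.le_of_ge ⟨sSupIndep_insert hs.prop.1 hdisj, by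
      rintro F (rfl | hF)
      exacts [⟨hEinj, hEproj⟩, hs.prop.2 F hF]⟩ (Set.subset_insert E s) (Set.mem_insert E s)
    exact hE0 (hdisj.eq_bot_of_le (le_sSup hmem))
  refine .of_split p f (LinearMap.ext fun x => LinearMap.ker_eq_bot.mp hker ?_)
  exact LinearMap.congr_fun hp (p x)

/-- The mirror image of `IsMininjective`, for left modules. Right `R`-modules being left
`Rᵐᵒᵖ`-modules, it covers both sides. -/
def IsLeftMininjective (R : Type*) [Ring R] (M : Type*) [AddCommGroup M] [Module R M] : Prop :=
  ∀ I : Ideal R, IsAtom I → ∀ f : I →ₗ[R] M, ∃ g : R →ₗ[R] M, ∀ x : I, g x = f x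

theorem IsLeftMininjective.exists_injective_projective_le (hM : IsLeftMininjective R M)
    [IsSemiprimaryRing R] [Module.Injective R R] {N N' : Submodule R M} (hN : IsCompl N N')
    (hN0 : N ≠ ⊥) : ∃ E ≤ N, E ≠ ⊥ ∧ Module.Injective R E ∧ Module.Projective R E := by
  have := (Submodule.nontrivial_iff_ne_bot).mpr hN0
  obtain ⟨U, hU⟩ := exists_isAtom_of_isSemiprimaryRing (T := R) N
  have := isSimpleModule_iff_isAtom.mpr hU
  obtain ⟨x, ⟨e⟩⟩ := SimpleClass.exists_rep_linearEquiv (R := R) U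
  obtain ⟨i, hi⟩ := isLeftKasch_of_isSemiprimaryRing (R := R) x
  let e' : U ≃ₗ[R] LinearMap.range i := e.symm.trans (LinearEquiv.ofInjective i hi)
  have hT : IsAtom (LinearMap.range i) := isSimpleModule_iff_isAtom.mp (.congr e'.symm)
  obtain ⟨E, hTE, hE, -⟩ := exists_isIndecomposableProjInj_of_isAtom hT
  obtain ⟨g, hg⟩ := hM _ hT (N.subtype ∘ₗ U.subtype ∘ₗ e'.symm.toLinearMap)
  let q : M →ₗ[R] N := N.projectionOnto N' hN
  have hq : (q ∘ₗ g ∘ₗ E.subtype) ∘ₗ Submodule.inclusion hTE = U.subtype ∘ₗ e'.symm.toLinearMap :=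
    LinearMap.ext fun x => (congrArg q (hg x)).trans (N.projectionOnto_apply_left hN _)
  have : IsSimpleModule R (LinearMap.range i) := isSimpleModule_iff_isAtom.mpr hT
  have := IsSimpleModule.nontrivial R (LinearMap.range i)
  have := hE.nontrivial
  have := hE.injective
  have := hE.projective
  have hinj : Function.Injective (N.subtype ∘ₗ q ∘ₗ g ∘ₗ E.subtype) := by
    refine N.injective_subtype.comp (hE.isUniform.injective_of_comp_injective
      (i := Submodule.inclusion hTE) ?_)
    rw [hq]
    exact U.injective_subtype.comp e'.symm.injective
  let φ := LinearEquiv.ofInjective _ hinj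
  refine ⟨_, LinearMap.range_comp_le_range _ _ |>.trans_eq N.range_subtype, ?_,
    injective_of_leftInverse φ.symm.toLinearMap φ.toLinearMap φ.comp_symm, .of_equiv φ⟩
  exact Submodule.nontrivial_iff_ne_bot.mp φ.toEquiv.symm.nontrivial

theorem IsLeftMininjective.projective (hM : IsLeftMininjective R M) [IsArtinianRing R]
    [Module.Injective R R] : Module.Projective R M :=
  projective_of_forall_exists_injective_projective_le fun _ _ =>
    hM.exists_injective_projective_le

theorem IsMininjective.isLeftMininjective {R : Type*} [Ring R] {M : Type*} [AddCommGroup M]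
    [Module Rᵐᵒᵖ M] (hM : IsMininjective R M) : IsLeftMininjective Rᵐᵒᵖ M := by
  intro I hI f
  let e : R ≃ₗ[Rᵐᵒᵖ] Rᵐᵒᵖ := opLinearEquiv Rᵐᵒᵖ
  have hJ : IsAtom (Submodule.comap e.toLinearMap I) :=
    ((Submodule.orderIsoMapComap e).symm.isAtom_iff I).mpr hI
  obtain ⟨g, hg⟩ := hM _ hJ (f ∘ₗ e.toLinearMap.restrict fun x hx => (hx : e x ∈ I))
  exact ⟨g ∘ₗ e.symm.toLinearMap, fun x => hg ⟨e.symm x, x.2⟩⟩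

end Mininjective

section CharacterDual

theorem exists_sum_smul_eq_of_sum_smul_eq_zero {S P ι : Type*} [Ring S] [AddCommGroup P]
    [Module S P] [Module.Projective S P] [Fintype ι] {b : ι → S} {x : ι → P}
    (h : ∑ i, b i • x i = 0) :
    ∃ (F : Finset P) (a : ι → P → S), (∀ i, ∑ y ∈ F, a i y • y = x i) ∧
      ∀ y, ∑ i, b i * a i y = 0 := by
  classical
  obtain ⟨s, hs⟩ := (Module.projective_def (R := S) (P := P)).mp inferInstance
  refine ⟨Finset.univ.biUnion fun i => (s (x i)).support, fun i => s (x i), fun i => ?_,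
    fun y => ?_⟩
  · refine .trans ?_ (hs (x i))
    refine (Finsupp.sum_of_support_subset (s (x i)) ?_ (fun y c => c • y)
      fun y _ => zero_smul S y).symm
    exact Finset.subset_biUnion_of_mem (fun i => (s (x i)).support) (Finset.mem_univ i)
  · have hsum := DFunLike.congr_fun (congrArg s h) y
    simpa only [map_sum, map_smul, map_zero, Finsupp.finsetSum_apply, Finsupp.smul_apply,
      smul_eq_mul, Finsupp.zero_apply] using hsum

variable {R : Type*} [Ring R] {M : Type*} [AddCommGroup M] [Module R M]

/-- The character module of a left module, as a right module: `(χ r) m = χ (r m)`. -/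
noncomputable instance characterModuleMulOpposite : Module Rᵐᵒᵖ (CharacterModule M) :=
  inferInstanceAs (Module Rᵈᵐᵃ (M →+ AddCircle (1 : ℚ)))

theorem sum_characterModule_apply {ι : Type*} (s : Finset ι) (c : ι → CharacterModule M) (m : M) :
    (∑ i ∈ s, c i) m = ∑ i ∈ s, c i m :=
  map_sum (AddMonoidHom.eval m : (M →+ AddCircle (1 : ℚ)) →+ _) c s

/-- Characters of the cokernel of `m ↦ (bᵢ m)ᵢ` are the tuples of characters of `M` satisfying the
relation `∑ bᵢ χᵢ = 0`. -/
theorem exists_smul_eq_of_forall_characterModule {ι : Type*} [Fintype ι] (b : ι → R) (v : ι → M)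
    (h : ∀ χ : ι → CharacterModule M, ∑ i, op (b i) • χ i = 0 → ∑ i, χ i (v i) = 0) :
    ∃ m : M, ∀ i, b i • m = v i := by
  classical
  let θ : M →+ (ι → M) := AddMonoidHom.pi fun i => DistribSMul.toAddMonoidHom M (b i)
  suffices hv : (v : (ι → M) ⧸ θ.range) = 0 by
    obtain ⟨m, hm⟩ := (QuotientAddGroup.eq_zero_iff v).mp hv
    exact ⟨m, congrFun hm⟩
  refine CharacterModule.eq_zero_of_character_apply fun c => ?_
  let C : (ι → M) →+ AddCircle (1 : ℚ) := AddMonoidHom.comp c (QuotientAddGroup.mk' θ.range)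
  let χ (i : ι) : CharacterModule M := C.comp (AddMonoidHom.single (fun _ => M) i)
  have hC (w : ι → M) : C w = ∑ i, χ i (w i) := by
    conv_lhs => rw [← Finset.univ_sum_single w, map_sum]
    rfl
  refine (hC v).trans (h χ (CharacterModule.ext M fun m => ?_))
  have hθ : C (θ m) = 0 :=
    (congrArg c ((QuotientAddGroup.eq_zero_iff _).mpr ⟨m, rfl⟩)).trans (map_zero c)
  rw [sum_characterModule_apply]
  exact (hC (θ m)).symm.trans hθ

theorem exists_forall_smul_eq_of_projective_characterModule
    [Module.Projective Rᵐᵒᵖ (CharacterModule M)] {ι : Type*} [Finite ι] {L : Ideal R} (b : ι → L)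
    (f : L →ₗ[R] M) : ∃ m : M, ∀ i, (b i : R) • m = f (b i) := by
  have := Fintype.ofFinite ι
  refine exists_smul_eq_of_forall_characterModule _ _ fun χ hχ => ?_
  obtain ⟨F, a, ha, hab⟩ := exists_sum_smul_eq_of_sum_smul_eq_zero hχ
  have hb (ψ : CharacterModule M) : ∑ i, unop (a i ψ) • b i = 0 := Subtype.ext <| by
    rw [Submodule.coe_sum]
    refine op_injective ((map_sum opAddEquiv _ _).trans (hab ψ))
  calc
    ∑ i, χ i (f (b i)) = ∑ i, ∑ ψ ∈ F, ψ (unop (a i ψ) • f (b i)) :=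
      Finset.sum_congr rfl fun i _ => by
        rw [← ha i, sum_characterModule_apply]
        rfl
    _ = ∑ ψ ∈ F, ψ (f (∑ i, unop (a i ψ) • b i)) := by
      rw [Finset.sum_comm]
      simp only [map_sum, map_smul]
    _ = 0 := Finset.sum_eq_zero fun ψ _ => by rw [hb, map_zero, map_zero]

/-- A map from a minimal right ideal `I` into the character module of `M` is a character of
`I ⊗ M`, which extends along the injection `I ⊗ M → M` to a character of `M`. -/
theorem IsMinFlat.isMininjective_characterModule (hM : IsMinFlat R M) :
    IsMininjective R (CharacterModule M) := by
  intro I hI f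
  let h : TensorProduct ℤ I M →+ AddCircle (1 : ℚ) :=
    TensorProduct.liftAddHom f.toAddMonoidHom fun n x m => by
      change f (n • x) m = f x (n • m)
      rw [map_zsmul, map_zsmul]
      rfl
  have hker : minflatBalance R M I ≤ LinearMap.ker h.toIntLinearMap := by
    refine Submodule.span_le.mpr ?_
    rintro _ ⟨x, r, m, rfl⟩
    rw [SetLike.mem_coe, LinearMap.mem_ker, map_sub, sub_eq_zero]
    exact congrArg (fun c : CharacterModule M => c m) (map_smul f (op r) x)
  obtain ⟨k, hk⟩ := CharacterModule.dual_surjective_of_injective _ (hM I hI)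
    ((minflatBalance R M I).liftQ h.toIntLinearMap hker).toAddMonoidHom
  let g : R →ₗ[Rᵐᵒᵖ] CharacterModule M :=
    LinearMap.toSpanSingleton Rᵐᵒᵖ (CharacterModule M) k ∘ₗ (opLinearEquiv Rᵐᵒᵖ).toLinearMap
  refine ⟨g, fun x => CharacterModule.ext M fun m => ?_⟩
  exact DFunLike.congr_fun hk (Submodule.Quotient.mk (x ⊗ₜ[ℤ] m))

end CharacterDual

theorem injective_of_projective_characterModule {R : Type u} [Ring R] [IsNoetherianRing R]
    {M : Type u} [AddCommGroup M] [Module R M]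
    [Module.Projective Rᵐᵒᵖ (CharacterModule M)] : Module.Injective R M := by
  refine Module.Baer.injective fun L f => ?_
  obtain ⟨n, b, hb⟩ := Module.Finite.exists_fin (R := R) (M := L)
  obtain ⟨m, hm⟩ := exists_forall_smul_eq_of_projective_characterModule b f
  have hf : LinearMap.toSpanSingleton R M m ∘ₗ L.subtype = f := LinearMap.ext_on_range hb hm
  exact ⟨LinearMap.toSpanSingleton R M m, fun x hx => LinearMap.congr_fun hf ⟨x, hx⟩⟩

section FreeModules

variable {R : Type u} [Ring R]

/-- Every element of `I ⊗ R^(ι)` has the form `∑ xₙ ⊗ eₙ` with `xₙ ∈ I`. -/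
theorem isMinFlat_finsupp (ι : Type*) : IsMinFlat R (ι →₀ R) := by
  intro I _
  let N := minflatBalance R (ι →₀ R) I
  let φ : (TensorProduct ℤ I (ι →₀ R) ⧸ N) →ₗ[ℤ] ι →₀ R :=
    N.liftQ _ (minflatBalance_le_ker R (ι →₀ R) I)
  let β : (ι →₀ I) →ₗ[ℤ] TensorProduct ℤ I (ι →₀ R) ⧸ N := Finsupp.lsum ℤ fun n =>
    N.mkQ ∘ₗ (TensorProduct.mk ℤ I (ι →₀ R)).flip (Finsupp.single n 1)
  have hβ (n : ι) (x : I) : β (Finsupp.single n x) = N.mkQ (x ⊗ₜ[ℤ] Finsupp.single n 1) :=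
    Finsupp.lsum_single ℤ _ n x
  have hsurj : Function.Surjective β := by
    refine fun q => LinearMap.mem_range.mp ?_
    obtain ⟨t, rfl⟩ := Submodule.mkQ_surjective _ q
    induction t using TensorProduct.induction_on with
    | zero => exact zero_mem _
    | add t t' ht ht' => exact add_mem ht ht'
    | tmul x m =>
      induction m using Finsupp.induction_linear with
      | zero => rw [TensorProduct.tmul_zero]; exact zero_mem _
      | add m m' hm hm' => rw [TensorProduct.tmul_add]; exact add_mem hm hm'
      | single n r =>
        refine ⟨Finsupp.single n (op r • x), ?_⟩
        rw [hβ, ← sub_eq_zero, ← map_sub]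
        refine (Submodule.Quotient.mk_eq_zero _).mpr
          (Submodule.subset_span ⟨x, r, Finsupp.single n 1, ?_⟩)
        rw [Finsupp.smul_single, smul_eq_mul, mul_one]
  have hφβ : φ ∘ₗ β = Finsupp.mapRange.linearMap (I.subtype.restrictScalars ℤ) := by
    refine Finsupp.lhom_ext fun n x => (congrArg φ (hβ n x)).trans ?_
    change (x : R) • Finsupp.single n (1 : R) = _
    rw [Finsupp.smul_single, smul_eq_mul, mul_one, Finsupp.mapRange.linearMap_apply,
      Finsupp.mapRange_single]
    rfl
  have hinj : Function.Injective (φ ∘ₗ β) := by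
    rw [hφβ]
    exact Finsupp.mapRange_injective _ rfl I.injective_subtype
  exact Function.Injective.of_comp_right hinj hsurj

theorem leftAnnihilatorACC_of_injective_finsupp [Module.Injective R (ℕ →₀ R)] :
    LeftAnnihilatorACC R := by
  refine wellFounded_iff_isEmpty_descending_chain.mpr ⟨fun ⟨X, hX⟩ => ?_⟩
  let L (n : ℕ) : Ideal R := leftAnnihilator (X n)
  have hL : StrictMono L := strictMono_nat_of_lt_succ hX
  have hx (n : ℕ) : ∃ y ∈ L (n + 1), ∃ x ∈ X n, y * x ≠ 0 := by
    obtain ⟨y, hy, hyn⟩ := SetLike.exists_of_lt (hX n)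
    by_contra! h
    exact hyn (h y hy)
  choose y hy x hxX hyx using hx
  have hmem (a : R) : a ∈ ⨆ n, L n ↔ ∃ n, a ∈ L n :=
    Submodule.mem_iSup_of_directed L hL.monotone.directed_le
  have hfin (a : ↥(⨆ n, L n)) : (Function.support fun n => (a : R) * x n).Finite := by
    obtain ⟨m, hm⟩ := (hmem a).mp a.2
    refine (Set.finite_lt_nat m).subset fun n hn => ?_
    by_contra hmn
    exact hn (hL.monotone (not_lt.mp hmn) hm (x n) (hxX n))
  let f : ↥(⨆ n, L n) →ₗ[R] ℕ →₀ R :=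
    { toFun := fun a => Finsupp.ofSupportFinite (fun n => (a : R) * x n) (hfin a)
      map_add' := fun a b => Finsupp.ext fun _ => add_mul (a : R) b _
      map_smul' := fun r a => Finsupp.ext fun _ => mul_assoc r a _ }
  obtain ⟨g, hg⟩ := Module.Baer.of_injective inferInstance _ f
  obtain ⟨n, hn⟩ := Infinite.exists_notMem_finset (g 1).support
  have hyU : y n ∈ ⨆ n, L n := (hmem _).mpr ⟨n + 1, hy n⟩
  refine hyx n ?_
  calc
    y n * x n = g (y n) n := (DFunLike.congr_fun (hg (y n) hyU) n).symm
    _ = (y n • g 1) n := by rw [← map_smul, smul_eq_mul, mul_one]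
    _ = 0 := by rw [Finsupp.smul_apply, Finsupp.notMem_support_iff.mp hn, smul_zero]

end FreeModules

section Conclusion

variable {R : Type u} [Ring R]

theorem isArtinian_and_injective_mulOpposite_iff :
    IsArtinian Rᵐᵒᵖ R ∧ Module.Injective Rᵐᵒᵖ R ↔
      IsArtinianRing Rᵐᵒᵖ ∧ Module.Injective Rᵐᵒᵖ Rᵐᵒᵖ := by
  let e : R ≃ₗ[Rᵐᵒᵖ] Rᵐᵒᵖ := opLinearEquiv Rᵐᵒᵖ
  refine and_congr e.isArtinian_iff ⟨fun _ => ?_, fun _ => ?_⟩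
  · exact injective_of_leftInverse e.symm.toLinearMap e.toLinearMap e.comp_symm
  · exact injective_of_leftInverse e.toLinearMap e.symm.toLinearMap e.symm_comp

theorem isNoetherianRing_of_mulOpposite [IsArtinianRing Rᵐᵒᵖ] [Module.Injective Rᵐᵒᵖ Rᵐᵒᵖ] :
    IsNoetherianRing R := by
  have : IsNoetherianRing Rᵐᵒᵖᵐᵒᵖ :=
    (opLinearEquiv Rᵐᵒᵖᵐᵒᵖ).isNoetherian_iff.mp (isNoetherian_mulOpposite (R := Rᵐᵒᵖ))
  exact isNoetherianRing_of_ringEquiv _ (RingEquiv.opOp R).symm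

end Conclusion

/-- `R` is quasi-Frobenius iff every mininjective right `R`-module is
projective iff every min-flat left `R`-module is injective. -/
theorem quasiFrobenius_tfae (R : Type u) [Ring R] :
    List.TFAE
      [ IsArtinian Rᵐᵒᵖ R ∧ Module.Injective Rᵐᵒᵖ R,
        ∀ (M : Type u) [AddCommGroup M] [Module Rᵐᵒᵖ M],
          IsMininjective R M → Module.Projective Rᵐᵒᵖ M,
        ∀ (M : Type u) [AddCommGroup M] [Module R M],
          IsMinFlat R M → Module.Injective R M ] := by
  rw [isArtinian_and_injective_mulOpposite_iff]
  tfae_have 1 → 2 := fun ⟨_, _⟩ M _ _ hM => hM.isLeftMininjective.projective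
  tfae_have 2 → 1 := by
    intro h
    have hfree : EmbedsInFree Rᵐᵒᵖ := .of_injective_projective fun Q _ _ hQ =>
      h Q fun I _ f => hQ.out I.subtype I.injective_subtype f
    have := hfree.isNoetherianRing
    have := hfree.injective_self
    exact ⟨leftAnnihilatorACC_of_isNoetherianRing.isArtinianRing, this⟩
  tfae_have 1 → 3 := by
    rintro ⟨_, _⟩ M _ _ hM
    have := isNoetherianRing_of_mulOpposite (R := R)
    have := hM.isMininjective_characterModule.isLeftMininjective.projective
    exact injective_of_projective_characterModule
  tfae_have 3 → 1 := by
    intro h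
    have := h (ℕ →₀ R) (isMinFlat_finsupp ℕ)
    have : Module.Injective R R :=
      injective_of_leftInverse (Finsupp.lsingle 0) (Finsupp.lapply 0) (by ext; simp)
    exact isArtinian_and_injective_mulOpposite_iff.mp
      leftAnnihilatorACC_of_injective_finsupp.isArtinian_and_injective_mulOpposite
  tfae_finish
end

section
/- Let R be a ring. Then R is quasi-Frobenius if and only if R is right mininjective (R is mininjective as a right R-module), right Artinian, right strongly min-coherent and right Kasch. -/
universe u v w v'

open MulOpposite

/-!
If `R` is right Artinian and right self-injective, taking the socle of the projective cover of a
simple module is injective on isomorphism classes. There are finitely many classes, so every simple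
module is such a socle and embeds in `R`: the ring is right Kasch. A map from a simple submodule
`T ≤ X` to a mininjective module `M` therefore factors through a minimal right ideal, extends to `R`
by mininjectivity of `M`, and hence to `X` by injectivity of `R`. This splits every extension of a
simple module by a mininjective one, so simple modules are min-projective.

Conversely, the Kasch condition and strong min-coherence make every simple module `S`
min-projective, so that `Ext¹(S, R) = 0` since `R` is mininjective. Over a right Artinian ring this
extends maps `I → R` one composition factor of `R / I` at a time, and Baer's criterion applies.
-/

section Extensions

variable {A : Type*} [Ring A]

/-- Every short exact sequence `0 → Q → X → S → 0` splits: this is `Ext¹(S, Q) = 0`, phrased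
with the middle term `X` in the universe of `Q`. -/
def ExtensionsSplit (A : Type*) [Ring A] (S : Type v) (Q : Type w) [AddCommGroup S] [Module A S]
    [AddCommGroup Q] [Module A Q] : Prop :=
  ∀ (X : Type w) [AddCommGroup X] [Module A X] (i : Q →ₗ[A] X) (p : X →ₗ[A] S),
    Function.Injective i → Function.Exact i p → Function.Surjective p →
      ∃ s : S →ₗ[A] X, p ∘ₗ s = LinearMap.id

-- The extension of `f` is read off a retraction of `Q` into the pushout of `f` and `j`, which is
-- an extension of `S` by `Q`.
theorem ExtensionsSplit.exists_comp_eq {S : Type v} {Q M : Type w} {N : Type*}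
    [AddCommGroup S] [Module A S] [AddCommGroup Q] [Module A Q] [AddCommGroup M] [Module A M]
    [AddCommGroup N] [Module A N] (h : ExtensionsSplit A S Q) {j : N →ₗ[A] M} {π : M →ₗ[A] S}
    (hj : Function.Injective j) (hjπ : Function.Exact j π) (hπ : Function.Surjective π)
    (f : N →ₗ[A] Q) : ∃ g : M →ₗ[A] Q, g ∘ₗ j = f := by
  let W : Submodule A (Q × M) := LinearMap.range (f.prod (-j))
  let i : Q →ₗ[A] (Q × M) ⧸ W := W.mkQ ∘ₗ LinearMap.inl A Q M
  let p : (Q × M) ⧸ W →ₗ[A] S := W.liftQ (π ∘ₗ LinearMap.snd A Q M) (by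
    rintro _ ⟨n, rfl⟩
    simp [hjπ.apply_apply_eq_zero])
  have glue (n : N) : W.mkQ (0, j n) = i (f n) :=
    (Submodule.Quotient.eq W).2 ⟨-n, by simp⟩
  have hi : Function.Injective i := by
    rw [injective_iff_map_eq_zero]
    intro q hq
    obtain ⟨n, hn⟩ : (q, (0 : M)) ∈ W := by simpa [i] using hq
    obtain ⟨hfn, hjn⟩ : f n = q ∧ j n = 0 := by simpa using hn
    rw [← hfn, hj (hjn.trans (map_zero j).symm), map_zero]
  have hp : Function.Surjective p := fun s ↦ by
    obtain ⟨m, rfl⟩ := hπ s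
    exact ⟨W.mkQ (0, m), by simp [p]⟩
  have hip : Function.Exact i p := by
    refine fun x ↦ ⟨fun hx ↦ ?_, ?_⟩
    · obtain ⟨⟨q, m⟩, rfl⟩ := W.mkQ_surjective x
      obtain ⟨n, rfl⟩ := (hjπ m).1 (by simpa [p] using hx)
      refine ⟨q + f n, ?_⟩
      rw [map_add, ← glue, LinearMap.comp_apply, ← map_add]
      simp
    · rintro ⟨q, rfl⟩
      simp [i, p]
  obtain ⟨l, hl⟩ := ((hip.split_tfae hi hp).out 0 1).1 (h _ i p hi hip hp)
  refine ⟨l ∘ₗ W.mkQ ∘ₗ LinearMap.inr A Q M, LinearMap.ext fun n ↦ ?_⟩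
  calc l (W.mkQ (0, j n)) = l (i (f n)) := by rw [glue]
    _ = f n := LinearMap.congr_fun hl (f n)

-- Extend a map from an ideal to a maximal larger ideal; if that is proper, it is covered by an
-- ideal with simple relative quotient, and the map extends further.
theorem baer_of_extensionsSplit {A : Type u} [Ring A] [IsArtinianRing A] {Q : Type u}
    [AddCommGroup Q] [Module A Q]
    (h : ∀ (S : Type u) [AddCommGroup S] [Module A S], IsSimpleModule A S →
      ExtensionsSplit A S Q) : Module.Baer A Q := by
  intro I g
  obtain ⟨K, ⟨hIK, f, hf⟩, hmax⟩ := exists_maximal_of_wellFoundedGT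
    (fun K : Ideal A ↦ ∃ (hIK : I ≤ K) (f : K →ₗ[A] Q), f ∘ₗ Submodule.inclusion hIK = g)
    ⟨I, le_rfl, g, rfl⟩
  have hK : K = ⊤ := by
    by_contra hne
    obtain ⟨J, hKJ⟩ := exists_covBy_of_wellFoundedLT (mt isMax_iff_eq_top.1 hne)
    have hsimple : IsSimpleModule A (J ⧸ LinearMap.range (Submodule.inclusion hKJ.le)) := by
      rw [Submodule.range_inclusion]
      exact (covBy_iff_quot_is_simple hKJ.le).1 hKJ
    obtain ⟨f', hf'⟩ := (h _ hsimple).exists_comp_eq (Submodule.inclusion_injective hKJ.le)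
      (LinearMap.exact_map_mkQ_range _) (Submodule.mkQ_surjective _) f
    refine hKJ.lt.not_ge (hmax ⟨hIK.trans hKJ.le, f', ?_⟩ hKJ.le)
    rw [← hf, ← hf']
    rfl
  subst hK
  exact ⟨f ∘ₗ Submodule.topEquiv.symm.toLinearMap, fun x hx ↦ LinearMap.congr_fun hf ⟨x, hx⟩⟩

theorem exists_isSimpleModule_le_of_ne_bot [IsArtinianRing A] {M : Type*} [AddCommGroup M]
    [Module A M] {N : Submodule A M} (hN : N ≠ ⊥) : ∃ T ≤ N, IsSimpleModule A T := by
  obtain ⟨x, hxN, hx⟩ := Submodule.exists_mem_ne_zero_of_ne_bot hN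
  have : Nontrivial (Submodule.span A {x}) := by
    simpa [Submodule.nontrivial_iff_ne_bot] using hx
  obtain ⟨T, hT⟩ := IsAtomic.exists_atom (Submodule A (Submodule.span A {x}))
  have := isSimpleModule_iff_isAtom.2 hT
  exact ⟨T.map (Submodule.span A {x}).subtype,
    (Submodule.map_subtype_le _ T).trans (by simpa using hxN),
    .congr (Submodule.equivSubtypeMap _ T).symm⟩

-- Take `x ∉ ker p` with maximal annihilator, and `T` simple in `A x`. If `T` lay in `ker p`, its
-- inclusion would extend to some `h`, and `x - h x` would have a strictly larger annihilator.
theorem exists_section_of_extends_from_simple [IsArtinianRing A] {X S : Type*} [AddCommGroup X]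
    [Module A X] [AddCommGroup S] [Module A S] [IsSimpleModule A S] {p : X →ₗ[A] S} (hp : p ≠ 0)
    (hext : ∀ T : Submodule A X, IsSimpleModule A T → ∀ f : T →ₗ[A] LinearMap.ker p,
      ∃ g : X →ₗ[A] LinearMap.ker p, g ∘ₗ T.subtype = f) :
    ∃ s : S →ₗ[A] X, p ∘ₗ s = LinearMap.id := by
  obtain ⟨x, hx, hmax⟩ := exists_maximalFor_of_wellFoundedGT (fun x ↦ p x ≠ 0)
    (Ideal.torsionOf A X) (by simpa [LinearMap.ext_iff] using hp)
  have hspan : Submodule.span A {x} ≠ ⊥ := by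
    rw [Ne, Submodule.span_singleton_eq_bot]
    rintro rfl
    exact hx (map_zero p)
  obtain ⟨T, hTx, hT⟩ := exists_isSimpleModule_le_of_ne_bot hspan
  have hTp : p ∘ₗ T.subtype ≠ 0 := by
    intro hTp
    obtain ⟨h, hh⟩ := hext T hT (T.subtype.codRestrict _ (LinearMap.congr_fun hTp))
    have hpx : p (x - h x) ≠ 0 := by simpa using hx
    have hle : Ideal.torsionOf A X x ≤ Ideal.torsionOf A X (x - h x) := fun a ha ↦ by
      rw [Ideal.mem_torsionOf_iff] at ha ⊢
      rw [smul_sub, ← Submodule.coe_smul, ← map_smul, ha, map_zero, Submodule.coe_zero, sub_zero]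
    have := IsSimpleModule.nontrivial A T
    obtain ⟨t, ht⟩ := exists_ne (0 : T)
    obtain ⟨a, hat⟩ := Submodule.mem_span_singleton.1 (hTx t.2)
    have hht : (h t : X) = t := congrArg Subtype.val (LinearMap.congr_fun hh t)
    have ha : a ∈ Ideal.torsionOf A X (x - h x) := by
      rw [Ideal.mem_torsionOf_iff, smul_sub, ← Submodule.coe_smul, ← map_smul, hat, hht, sub_self]
    have hax : a • x = 0 := hmax hpx hle ha
    exact ht (Subtype.ext (hat.symm.trans hax))
  let e := LinearEquiv.ofBijective _ (LinearMap.bijective_of_ne_zero hTp)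
  exact ⟨T.subtype ∘ₗ e.symm.toLinearMap, LinearMap.ext e.apply_symm_apply⟩

end Extensions

section SimpleQuotients

variable {A M : Type*} [Ring A] [AddCommGroup M] [Module A M]

theorem exists_comp_eq_of_ker_le_ker {N P : Type*} [AddCommGroup N] [Module A N]
    [IsSemisimpleModule A N] [AddCommGroup P] [Module A P] {f : M →ₗ[A] N} {g : M →ₗ[A] P}
    (h : LinearMap.ker f ≤ LinearMap.ker g) : ∃ k : N →ₗ[A] P, k ∘ₗ f = g := by
  let g' : LinearMap.range f →ₗ[A] P :=
    (LinearMap.ker f).liftQ g h ∘ₗ f.quotKerEquivRange.symm.toLinearMap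
  obtain ⟨k, hk⟩ := IsSemisimpleModule.extension_property (LinearMap.range f).subtype
    (Submodule.subtype_injective _) g'
  refine ⟨k, LinearMap.ext fun x ↦ ?_⟩
  calc k (f x) = g' ⟨f x, x, rfl⟩ := LinearMap.congr_fun hk ⟨f x, x, rfl⟩
    _ = (LinearMap.ker f).liftQ g h ((LinearMap.ker f).mkQ x) :=
      congrArg _ (f.quotKerEquivRange_symm_apply_image x _)
    _ = g x := Submodule.liftQ_apply _ _ _

theorem exists_linearEquiv_of_iInf_ker_le_ker {ι : Type*} [Finite ι] {S : ι → Type*}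
    [∀ i, AddCommGroup (S i)] [∀ i, Module A (S i)] [∀ i, IsSimpleModule A (S i)]
    {T : Type*} [AddCommGroup T] [Module A T] [IsSimpleModule A T]
    {f : ∀ i, M →ₗ[A] S i} {g : M →ₗ[A] T} (hg : g ≠ 0)
    (h : ⨅ i, LinearMap.ker (f i) ≤ LinearMap.ker g) : ∃ i, Nonempty (S i ≃ₗ[A] T) := by
  classical
  obtain ⟨k, hk⟩ := exists_comp_eq_of_ker_le_ker (f := LinearMap.pi f) (g := g)
    (by rwa [LinearMap.ker_pi])
  obtain ⟨i, hi⟩ : ∃ i, k ∘ₗ LinearMap.single A S i ≠ 0 := by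
    by_contra! hzero
    have : k = 0 := LinearMap.pi_ext' fun i ↦ by simp [hzero i]
    exact hg (by rw [← hk, this, LinearMap.zero_comp])
  exact ⟨i, ⟨.ofBijective _ (LinearMap.bijective_of_ne_zero hi)⟩⟩

theorem exists_lt_linearEquiv_quotient [IsArtinian A M] (N : ℕ → Submodule A M)
    (hN : ∀ n, IsCoatom (N n)) : ∃ i j, i < j ∧ Nonempty ((M ⧸ N i) ≃ₗ[A] M ⧸ N j) := by
  have hsimple (n : ℕ) : IsSimpleModule A (M ⧸ N n) := isSimpleModule_iff_isCoatom.2 (hN n)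
  let K : ℕ →o (Submodule A M)ᵒᵈ :=
    ⟨fun n ↦ OrderDual.toDual (⨅ i : Fin n, N i), fun m n hmn ↦
      le_iInf fun i : Fin m ↦ iInf_le (fun i : Fin n ↦ N i) (i.castLE hmn)⟩
  obtain ⟨n, hn⟩ := IsArtinian.monotone_stabilizes K
  have hle : ⨅ i : Fin n, N i ≤ N n :=
    (congrArg OrderDual.ofDual (hn (n + 1) n.le_succ)).le.trans
      (iInf_le (fun i : Fin (n + 1) ↦ N i) (Fin.last n))
  obtain ⟨i, hi⟩ := exists_linearEquiv_of_iInf_ker_le_ker (f := fun i : Fin n ↦ (N i).mkQ)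
    (g := (N n).mkQ) (by simpa [LinearMap.ext_iff, Submodule.eq_top_iff'] using (hN n).1)
    (by simpa only [Submodule.ker_mkQ] using hle)
  exact ⟨i, n, i.2, hi⟩

end SimpleQuotients

section EssentialEpi

variable {A P S : Type*} [Ring A] [AddCommGroup P] [Module A P] [AddCommGroup S] [Module A S]

/-- An essential epimorphism: a surjection that is not surjective on any proper submodule
(equivalently, a surjection with superfluous kernel). A projective cover is an essential
epimorphism with projective source. -/
structure IsEssentialEpi (q : P →ₗ[A] S) : Prop where
  surjective : Function.Surjective q
  eq_top_of_map_eq_top : ∀ N : Submodule A P, N.map q = ⊤ → N = ⊤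

namespace IsEssentialEpi

variable {q : P →ₗ[A] S}

theorem surjective_of_comp_surjective {X : Type*} [AddCommGroup X] [Module A X]
    (hq : IsEssentialEpi q) {f : X →ₗ[A] P} (hqf : Function.Surjective (q ∘ₗ f)) :
    Function.Surjective f :=
  LinearMap.range_eq_top.1 <| hq.eq_top_of_map_eq_top _ <| by
    rw [← LinearMap.range_comp, LinearMap.range_eq_top.2 hqf]

theorem le_ker_of_ne_top [IsSimpleModule A S] (hq : IsEssentialEpi q) {N : Submodule A P}
    (hN : N ≠ ⊤) : N ≤ LinearMap.ker q := by
  rw [LinearMap.le_ker_iff_map]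
  exact (eq_bot_or_eq_top _).resolve_right (mt (hq.eq_top_of_map_eq_top N) hN)

-- Otherwise `q ∘ (1 - w) = q`, so `1 - w` is onto, hence injective; but it kills `x`.
theorem comp_ne_zero_of_apply_eq [IsNoetherian A P] (hq : IsEssentialEpi q)
    {w : P →ₗ[A] P} {x : P} (hx : x ≠ 0) (hwx : w x = x) : q ∘ₗ w ≠ 0 := by
  intro hqw
  have hsurj : Function.Surjective (LinearMap.id - w : P →ₗ[A] P) :=
    hq.surjective_of_comp_surjective <| by
      rw [LinearMap.comp_sub, hqw, sub_zero]
      exact hq.surjective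
  have hinj := IsNoetherian.injective_of_surjective_endomorphism _ hsurj
  exact hx (hinj (by simp [hwx]))

end IsEssentialEpi

end EssentialEpi

section Kasch

variable {A : Type u} [Ring A]

theorem baer_of_retract {M P : Type*} [AddCommGroup M] [Module A M] [AddCommGroup P] [Module A P]
    (hM : Module.Baer A M) {i : P →ₗ[A] M} {r : M →ₗ[A] P} (hri : r ∘ₗ i = LinearMap.id) :
    Module.Baer A P := by
  intro I g
  obtain ⟨g', hg'⟩ := hM I (i ∘ₗ g)
  refine ⟨r ∘ₗ g', fun x hx ↦ ?_⟩
  rw [LinearMap.comp_apply, hg' x hx]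
  exact LinearMap.congr_fun hri _

-- A left ideal minimal among those mapping onto `S` does it: lifting `A → S` through it gives an
-- endomorphism of finite length that is onto, hence a retraction of `A`.
theorem exists_retract_isEssentialEpi [IsArtinianRing A] (S : Type*) [AddCommGroup S] [Module A S]
    [IsSimpleModule A S] : ∃ (P : Ideal A) (q : P →ₗ[A] S) (r : A →ₗ[A] P),
      IsEssentialEpi q ∧ r ∘ₗ P.subtype = LinearMap.id := by
  have := IsSimpleModule.nontrivial A S
  obtain ⟨s, hs⟩ := exists_ne (0 : S)
  let π : A →ₗ[A] S := LinearMap.toSpanSingleton A S s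
  have hπ : Function.Surjective π := IsSimpleModule.toSpanSingleton_surjective A hs
  obtain ⟨P, hP, hmin⟩ := exists_minimal_of_wellFoundedLT
    (fun P : Submodule A A ↦ P.map π = ⊤) ⟨⊤, by rwa [Submodule.map_top, LinearMap.range_eq_top]⟩
  let q : P →ₗ[A] S := π ∘ₗ P.subtype
  have hq : IsEssentialEpi q := by
    refine ⟨LinearMap.range_eq_top.1 ?_, fun N hN ↦ ?_⟩
    · rwa [LinearMap.range_comp, Submodule.range_subtype]
    · rw [Submodule.map_comp] at hN
      have hPN : P ≤ N.map P.subtype := hmin hN (Submodule.map_subtype_le P N)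
      exact (Submodule.eq_top_iff').2 fun x ↦ by simpa using hPN x.2
  obtain ⟨φ, hφ⟩ := Module.projective_lifting_property q π hq.surjective
  have hsurj : Function.Surjective (φ ∘ₗ P.subtype) :=
    hq.surjective_of_comp_surjective <| by
      rw [← LinearMap.comp_assoc, hφ]
      exact hq.surjective
  let e : P ≃ₗ[A] P := .ofBijective _ (IsNoetherian.bijective_of_surjective_endomorphism _ hsurj)
  exact ⟨P, q, e.symm.toLinearMap ∘ₗ φ, hq, LinearMap.ext e.symm_apply_apply⟩

/-- `T` embeds in the projective cover of `S`, realised as an injective left ideal (a direct summand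
of `A`, hence projective). Over a quasi-Frobenius ring this relates the top `S` of an indecomposable
projective module to its socle `T`, which is the Nakayama permutation of the simple modules. -/
def NakayamaRel (A : Type*) [Ring A] (S T : Type*) [AddCommGroup S] [Module A S] [AddCommGroup T]
    [Module A T] : Prop :=
  ∃ (P : Ideal A) (q : P →ₗ[A] S) (i : T →ₗ[A] P),
    Module.Baer A P ∧ IsEssentialEpi q ∧ Function.Injective i

theorem exists_nakayamaRel [IsArtinianRing A] (hA : Module.Baer A A) (S : Type*) [AddCommGroup S]
    [Module A S] [IsSimpleModule A S] :
    ∃ m : Ideal A, m.IsMaximal ∧ NakayamaRel A S (A ⧸ m) := by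
  obtain ⟨P, q, r, hq, hr⟩ := exists_retract_isEssentialEpi (A := A) S
  have := IsSimpleModule.nontrivial A S
  have := hq.surjective.nontrivial
  obtain ⟨T, -, hT⟩ := exists_isSimpleModule_le_of_ne_bot (top_ne_bot (α := Submodule A P))
  obtain ⟨m, hm, ⟨e⟩⟩ := isSimpleModule_iff_quot_maximal.1 hT
  exact ⟨m, hm, P, q, T.subtype ∘ₗ e.symm.toLinearMap, baer_of_retract hA hr, hq,
    T.subtype_injective.comp e.symm.injective⟩

-- By injectivity `T ↪ P` and `T ↪ P'` extend to maps between `P` and `P'`. The composite on `P`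
-- fixes `T`, so it is nonzero modulo the radical; hence `S` is a quotient of `P'`, whose only
-- simple quotient is `S'`.
theorem NakayamaRel.nonempty_linearEquiv [IsArtinianRing A] {S S' T T' : Type*} [AddCommGroup S]
    [Module A S] [IsSimpleModule A S] [AddCommGroup S'] [Module A S'] [IsSimpleModule A S']
    [AddCommGroup T] [Module A T] [Nontrivial T] [AddCommGroup T'] [Module A T']
    (h : NakayamaRel A S T) (h' : NakayamaRel A S' T') (e : T ≃ₗ[A] T') :
    Nonempty (S ≃ₗ[A] S') := by
  obtain ⟨P, q, i, hP, hq, hi⟩ := h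
  obtain ⟨P', q', i', hP', hq', hi'⟩ := h'
  obtain ⟨u, hu⟩ := hP'.extension_property i hi (i' ∘ₗ e.toLinearMap)
  obtain ⟨v, hv⟩ := hP.extension_property i' hi' (i ∘ₗ e.symm.toLinearMap)
  have := IsSimpleModule.nontrivial A S'
  obtain ⟨t, ht⟩ := exists_ne (0 : T)
  have hfix : (v ∘ₗ u) (i t) = i t := by
    calc v (u (i t)) = v (i' (e t)) := congrArg v (LinearMap.congr_fun hu t)
      _ = i (e.symm (e t)) := LinearMap.congr_fun hv (e t)
      _ = i t := by rw [e.symm_apply_apply]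
  have hqv : q ∘ₗ v ≠ 0 := by
    intro h0
    refine hq.comp_ne_zero_of_apply_eq ((map_ne_zero_iff i hi).2 ht) hfix ?_
    rw [← LinearMap.comp_assoc, h0, LinearMap.zero_comp]
  have hker : LinearMap.ker (q ∘ₗ v) ≤ LinearMap.ker q' :=
    hq'.le_ker_of_ne_top (mt LinearMap.ker_eq_top.1 hqv)
  obtain ⟨-, e'⟩ := exists_linearEquiv_of_iInf_ker_le_ker (ι := Unit) (f := fun _ ↦ q ∘ₗ v)
    (g := q') (fun h0 ↦ by
      obtain ⟨s, hs⟩ := exists_ne (0 : S')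
      obtain ⟨x, rfl⟩ := hq'.surjective s
      exact hs (LinearMap.congr_fun h0 x)) (by simpa using hker)
  exact e'

-- Choose `σ` on maximal left ideals so that `A ⧸ σ m` embeds in the projective cover of `A ⧸ m`.
-- Up to isomorphism `σ` is injective on a finite set, so every simple module recurs in its own
-- `σ`-orbit.
theorem exists_injective_linearMap_of_baer [IsArtinianRing A] (hA : Module.Baer A A) (S : Type*)
    [AddCommGroup S] [Module A S] [IsSimpleModule A S] :
    ∃ f : S →ₗ[A] A, Function.Injective f := by
  have hsimple (m : {m : Ideal A // m.IsMaximal}) : IsSimpleModule A (A ⧸ m.1) :=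
    isSimpleModule_iff_isCoatom.2 m.2.out
  have hσ (m : {m : Ideal A // m.IsMaximal}) :
      ∃ m' : {m : Ideal A // m.IsMaximal}, NakayamaRel A (A ⧸ m.1) (A ⧸ m'.1) := by
    obtain ⟨m', hm', hrel⟩ := exists_nakayamaRel hA (A ⧸ m.1)
    exact ⟨⟨m', hm'⟩, hrel⟩
  choose σ hσ using hσ
  obtain ⟨m, hm, ⟨e⟩⟩ := isSimpleModule_iff_quot_maximal.1 ‹IsSimpleModule A S›
  let orbit (n : ℕ) : {m : Ideal A // m.IsMaximal} := σ^[n] ⟨m, hm⟩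
  have orbit_succ (n : ℕ) : orbit (n + 1) = σ (orbit n) := Function.iterate_succ_apply' σ n _
  have cancel (i k : ℕ) (h : Nonempty ((A ⧸ (orbit i).1) ≃ₗ[A] A ⧸ (orbit (i + k)).1)) :
      Nonempty ((A ⧸ (orbit 0).1) ≃ₗ[A] A ⧸ (orbit k).1) := by
    induction i with
    | zero => rwa [zero_add] at h
    | succ i ih =>
      rw [add_right_comm, orbit_succ, orbit_succ] at h
      obtain ⟨e⟩ := h
      have := IsSimpleModule.nontrivial A (A ⧸ (σ (orbit i)).1)
      exact ih ((hσ _).nonempty_linearEquiv (hσ _) e)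
  obtain ⟨i, j, hij, hiso⟩ := exists_lt_linearEquiv_quotient (fun n ↦ (orbit n).1)
    (fun n ↦ (orbit n).2.out)
  obtain ⟨k, rfl⟩ := Nat.exists_eq_add_of_lt hij
  obtain ⟨e'⟩ := cancel i (k + 1) hiso
  rw [orbit_succ] at e'
  obtain ⟨P, -, ι, -, -, hι⟩ := hσ (orbit k)
  exact ⟨P.subtype ∘ₗ ι ∘ₗ e'.toLinearMap ∘ₗ e.toLinearMap,
    P.subtype_injective.comp (hι.comp (e'.injective.comp e.injective))⟩

end Kasch

section RightModules

variable {R : Type u} [Ring R]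

/-- `op`, as an isomorphism of right `R`-modules from `R` to the regular module of `Rᵐᵒᵖ`. -/
def opRightLinearEquiv (R : Type*) [Ring R] : R ≃ₗ[Rᵐᵒᵖ] Rᵐᵒᵖ :=
  { opAddEquiv with map_smul' := fun _ _ ↦ rfl }

theorem isArtinianRing_mulOpposite_iff : IsArtinianRing Rᵐᵒᵖ ↔ IsArtinian Rᵐᵒᵖ R :=
  (opRightLinearEquiv R).isArtinian_iff.symm

theorem rightKasch_of_baer [IsArtinianRing Rᵐᵒᵖ] (hR : Module.Baer Rᵐᵒᵖ R) :
    RightKasch.{u, v} R := by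
  intro S _ _ _
  obtain ⟨f, hf⟩ := exists_injective_linearMap_of_baer (hR.of_equiv (opRightLinearEquiv R)) S
  exact ⟨_, ⟨.ofInjective ((opRightLinearEquiv R).symm.toLinearMap ∘ₗ f)
    ((opRightLinearEquiv R).symm.injective.comp hf)⟩⟩

theorem isMininjective_of_baer {M : Type*} [AddCommGroup M] [Module Rᵐᵒᵖ M]
    (hM : Module.Baer Rᵐᵒᵖ M) : IsMininjective R M := by
  intro I _ f
  obtain ⟨g, hg⟩ := hM.extension_property I.subtype I.subtype_injective f
  exact ⟨g, LinearMap.congr_fun hg⟩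

namespace IsMininjective

theorem of_linearEquiv {M N : Type*} [AddCommGroup M] [Module Rᵐᵒᵖ M] [AddCommGroup N]
    [Module Rᵐᵒᵖ N] (hM : IsMininjective R M) (e : M ≃ₗ[Rᵐᵒᵖ] N) : IsMininjective R N := by
  intro I hI f
  obtain ⟨g, hg⟩ := hM I hI (e.symm.toLinearMap ∘ₗ f)
  exact ⟨e.toLinearMap ∘ₗ g, fun x ↦ by simp [hg]⟩

-- With `T` isomorphic to a minimal right ideal, the map factors as `T → R → M`, and `T → R`
-- extends to `X` because `R` is injective.
theorem exists_comp_subtype_eq {M : Type*} {X : Type v} [AddCommGroup M] [Module Rᵐᵒᵖ M]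
    [AddCommGroup X] [Module Rᵐᵒᵖ X] (hM : IsMininjective R M) (hR : Module.Baer Rᵐᵒᵖ R)
    (hK : RightKasch.{u, v} R) (T : Submodule Rᵐᵒᵖ X) (hT : IsSimpleModule Rᵐᵒᵖ T)
    (f : T →ₗ[Rᵐᵒᵖ] M) : ∃ g : X →ₗ[Rᵐᵒᵖ] M, g ∘ₗ T.subtype = f := by
  obtain ⟨I, ⟨e⟩⟩ := hK T hT
  have hI : IsAtom I := isSimpleModule_iff_isAtom.1 (.congr e.symm)
  obtain ⟨g, hg⟩ := hM I hI (f ∘ₗ e.symm.toLinearMap)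
  obtain ⟨k, hk⟩ := hR.extension_property T.subtype T.subtype_injective
    (I.subtype ∘ₗ e.toLinearMap)
  refine ⟨g ∘ₗ k, LinearMap.ext fun t ↦ ?_⟩
  calc g (k t) = g (e t) := congrArg g (LinearMap.congr_fun hk t)
    _ = f (e.symm (e t)) := hg (e t)
    _ = f t := by rw [e.symm_apply_apply]

end IsMininjective

theorem isMinProjective_of_isSimpleModule [IsArtinianRing Rᵐᵒᵖ] (hR : Module.Baer Rᵐᵒᵖ R)
    (S : Type v) [AddCommGroup S] [Module Rᵐᵒᵖ S] [IsSimpleModule Rᵐᵒᵖ S] :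
    IsMinProjective R S := by
  intro X _ _ p hp hker
  have := IsSimpleModule.nontrivial Rᵐᵒᵖ S
  have hp0 : p ≠ 0 := by
    rintro rfl
    obtain ⟨s, hs⟩ := exists_ne (0 : S)
    obtain ⟨x, hx⟩ := hp s
    exact hs hx.symm
  exact exists_section_of_extends_from_simple hp0
    (hker.exists_comp_subtype_eq hR (rightKasch_of_baer hR))

theorem IsMinProjective.of_linearEquiv {S S' : Type v} [AddCommGroup S] [Module Rᵐᵒᵖ S]
    [AddCommGroup S'] [Module Rᵐᵒᵖ S'] (hS : IsMinProjective R S) (e : S ≃ₗ[Rᵐᵒᵖ] S') :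
    IsMinProjective R S' := by
  intro X _ _ p hp hker
  obtain ⟨s, hs⟩ := hS X (e.symm.toLinearMap ∘ₗ p) (e.symm.surjective.comp hp)
    (by rwa [LinearEquiv.ker_comp])
  refine ⟨s ∘ₗ e.symm.toLinearMap, LinearMap.ext fun y ↦ e.symm.injective ?_⟩
  exact LinearMap.congr_fun hs (e.symm y)

theorem IsMinProjective.extensionsSplit {S Q : Type u} [AddCommGroup S] [Module Rᵐᵒᵖ S]
    [AddCommGroup Q] [Module Rᵐᵒᵖ Q] (hS : IsMinProjective R S) (hQ : IsMininjective R Q) :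
    ExtensionsSplit Rᵐᵒᵖ S Q := fun X _ _ i p hi hip hp ↦
  hS X p hp <| hQ.of_linearEquiv <|
    (LinearEquiv.ofInjective i hi).trans (.ofEq _ _ hip.linearMap_ker_eq.symm)

theorem RightStronglyMinCoherent.isMinProjective (hcoh : RightStronglyMinCoherent R)
    (hK : RightKasch.{u, u} R) (S : Type u) [AddCommGroup S] [Module Rᵐᵒᵖ S]
    (hS : IsSimpleModule Rᵐᵒᵖ S) : IsMinProjective R S := by
  obtain ⟨I, ⟨e⟩⟩ := hK S hS
  exact (hcoh I (isSimpleModule_iff_isAtom.1 (.congr e.symm))).of_linearEquiv e.symm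

end RightModules

/-- `R` is quasi-Frobenius iff `R` is right mininjective, right Artinian,
right strongly min-coherent and right Kasch. -/
theorem quasiFrobenius_iff_mininjective_artinian_minCoherent_kasch (R : Type u) [Ring R] :
    (IsArtinian Rᵐᵒᵖ R ∧ Module.Injective Rᵐᵒᵖ R) ↔
      (IsMininjective R R ∧ IsArtinian Rᵐᵒᵖ R ∧ RightStronglyMinCoherent R ∧
        RightKasch.{u, u} R) := by
  rw [← isArtinianRing_mulOpposite_iff]
  constructor
  · rintro ⟨_, hinj⟩
    have hR : Module.Baer Rᵐᵒᵖ R := .of_injective hinj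
    refine ⟨isMininjective_of_baer hR, ‹_›, fun I hI ↦ ?_, rightKasch_of_baer hR⟩
    have := isSimpleModule_iff_isAtom.2 hI
    exact isMinProjective_of_isSimpleModule hR I
  · rintro ⟨hmin, _, hcoh, hK⟩
    have hR : Module.Baer Rᵐᵒᵖ R := baer_of_extensionsSplit fun S _ _ hS ↦
      (hcoh.isMinProjective hK S hS).extensionsSplit hmin
    exact ⟨‹_›, hR.injective⟩
end
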